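/- There exists a universal constant C such that the following holds. Let (g_υ)_{υ∈ℝ^I} be a nice distribution of polynomials of degree at most d on ℝ^n that is (k,S,1)-attenuated on average for some 1 ≤ k ≤ d. Fix parameters R' ≥ 1, 0 < β' < 1, 0 < ε' ≤ 1, and assume S ≥ C·k·log(3/β')/β' and 0 ≤ λ ≤ ε'·β'^5/(C·R'²·k³·d). Then for x ∼ N(0,1)^n, except with probability at most β', the family ((g_υ)_{λ|x})_υ is (⌊k/2⌋, R', ε')-attenuated on average; i.e., E_υ[HyperVar_{R'}[((g_υ)_{λ|x})^{>⌊k/2⌋}]] ≤ ε'·E_υ[‖(g_υ)_{λ|x}‖₂²]. -/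

import Mathlib

open MeasureTheory ProbabilityTheory MvPolynomial

/-- The standard Gaussian measure `N(0,1)^n` on `ℝ^n`. -/
noncomputable def gaussianN (n : ℕ) : Measure (Fin n → ℝ) :=
  Measure.pi fun _ => gaussianReal 0 1

/-- The normalized probabilists' Hermite polynomial `h_k = H_k / √(k!)`. -/
noncomputable def hermiteFn (k : ℕ) (t : ℝ) : ℝ :=
  ((Polynomial.hermite k).map (Int.castRingHom ℝ)).eval t / Real.sqrt (Nat.factorial k)

/-- The multivariate Hermite polynomial `h_α(x) = ∏ i, h_{α i}(x i)`. -/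
noncomputable def hermiteMv {n : ℕ} (α : Fin n → ℕ) (x : Fin n → ℝ) : ℝ :=
  ∏ i, hermiteFn (α i) (x i)

/-- Hermite coefficient `f̂(α) = E_{x ∼ N(0,1)^n}[f(x)·h_α(x)]` of a function. -/
noncomputable def hermiteCoeffF {n : ℕ} (f : (Fin n → ℝ) → ℝ) (α : Fin n → ℕ) : ℝ :=
  ∫ x, f x * hermiteMv α x ∂(gaussianN n)

/-- Hermite coefficient `ĝ(α)` of a polynomial. -/
noncomputable def hermiteCoeff {n : ℕ} (g : MvPolynomial (Fin n) ℝ) (α : Fin n → ℕ) : ℝ :=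
  hermiteCoeffF (fun x => eval x g) α

/-- The squared Gaussian 2-norm `‖g‖₂² = E_{x ∼ N(0,1)^n}[g(x)²]`. -/
noncomputable def norm2sq {n : ℕ} (g : MvPolynomial (Fin n) ℝ) : ℝ :=
  ∫ x, (eval x g) ^ 2 ∂(gaussianN n)

/-- The `λ`-zoom of `g` at `x`: `g_{λ|x}(y) = g(√(1-λ)·x + √λ·y)`, as a polynomial in `y`. -/
noncomputable def zoom {n : ℕ} (g : MvPolynomial (Fin n) ℝ) (lam : ℝ) (x : Fin n → ℝ) :
    MvPolynomial (Fin n) ℝ :=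
  aeval (fun i => C (Real.sqrt (1 - lam) * x i) + C (Real.sqrt lam) * X i) g

/-- `HyperVar_R[g^{≥m}] = Σ_{|α| ≥ m} R^{2|α|}·ĝ(α)²`. -/
noncomputable def hyperVarGE {n : ℕ} (R : ℝ) (m : ℕ) (g : MvPolynomial (Fin n) ℝ) : ℝ :=
  ∑' α : Fin n → ℕ, if m ≤ ∑ i, α i then R ^ (2 * ∑ i, α i) * hermiteCoeff g α ^ 2 else 0

/-- `HyperVar_R[g] = Σ_{α ≠ 0} R^{2|α|}·ĝ(α)²`. -/
noncomputable def hyperVar {n : ℕ} (R : ℝ) (g : MvPolynomial (Fin n) ℝ) : ℝ :=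
  hyperVarGE R 1 g

/-- A nice distribution of polynomials of degree at most `d` on `ℝ^n`, indexed by
`υ ∈ ℝ^I`: each `g υ` has degree at most `d` and each coefficient of `g υ` is a
polynomial of degree at most `d` in `υ`. -/
def NiceFamily (n I d : ℕ) (g : (Fin I → ℝ) → MvPolynomial (Fin n) ℝ) : Prop :=
  (∀ υ, (g υ).totalDegree ≤ d) ∧
  ∀ m : Fin n →₀ ℕ, ∃ P : MvPolynomial (Fin I) ℝ,
    P.totalDegree ≤ d ∧ ∀ υ, coeff m (g υ) = eval υ P

set_option linter.unusedSectionVars false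

/-- The standard Gaussian measure on `ι → ℝ`. -/
noncomputable abbrev gaussPi (ι : Type*) [Fintype ι] : Measure (ι → ℝ) :=
  Measure.pi fun _ => gaussianReal 0 1

lemma integrable_pow_gaussianReal (k : ℕ) :
    Integrable (fun x : ℝ => x ^ k) (gaussianReal 0 1) := by
  have h := (memLp_id_gaussianReal (μ := 0) (v := 1) (k : NNReal))
  rcases Nat.eq_zero_or_pos k with rfl | hk
  · simp
  · have := h.integrable_norm_pow (by omega)
    refine (this.mono (by fun_prop) (Filter.Eventually.of_forall fun x => ?_))
    simp

lemma integral_pow_succ_gaussianReal (k : ℕ) :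
    ∫ x : ℝ, x ^ (k + 1) * x ∂(gaussianReal 0 1) =
      (k + 1) * ∫ x : ℝ, x ^ k ∂(gaussianReal 0 1) := by
  have hI : ∀ m : ℕ, Integrable (fun x : ℝ => x ^ m * gaussianPDFReal 0 1 x) := by
    intro m
    have := integrable_pow_gaussianReal m
    rw [gaussianReal_of_var_ne_zero _ one_ne_zero,
      integrable_withDensity_iff (measurable_gaussianPDF 0 1) (by simp [gaussianPDF])] at this
    simpa [toReal_gaussianPDF] using this
  rw [integral_gaussianReal_eq_integral_smul one_ne_zero,
    integral_gaussianReal_eq_integral_smul one_ne_zero]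
  have hd : ∀ x : ℝ, HasDerivAt (fun x => -gaussianPDFReal 0 1 x)
      (x * gaussianPDFReal 0 1 x) x := by
    intro x
    simp only [gaussianPDFReal_def]
    have : HasDerivAt (fun x : ℝ => -(x - 0) ^ 2 / (2 * ((1 : NNReal) : ℝ))) (-x) x := by
      have := ((hasDerivAt_id x).pow 2).neg.div_const 2
      simp only [sub_zero, NNReal.coe_one, mul_one]
      convert! this using 1
      simp; ring
    convert! (this.exp.const_mul (√(2 * Real.pi * ((1 : NNReal) : ℝ)))⁻¹).neg using 1
    ring
  have hu : ∀ x : ℝ, HasDerivAt (fun x : ℝ => x ^ (k + 1)) ((k + 1) * x ^ k) x := by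
    intro x
    simpa using hasDerivAt_pow (k + 1) x
  have := integral_mul_deriv_eq_deriv_mul_of_integrable (u := fun x : ℝ => x ^ (k + 1))
    (v := fun x => -gaussianPDFReal 0 1 x) (fun x _ => hu x) (fun x _ => hd x) ?_ ?_ ?_
  · simp only [smul_eq_mul] at this ⊢
    rw [← integral_const_mul]
    calc _ = ∫ x : ℝ, x ^ (k + 1) * (x * gaussianPDFReal 0 1 x) := by
          congr 1; ext x; ring
      _ = _ := this
      _ = _ := by rw [← integral_neg]; congr 1; ext x; ring
  · refine (hI (k + 2)).congr (Filter.Eventually.of_forall fun x => ?_)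
    simp only [Pi.mul_apply]; ring
  · refine ((hI k).const_mul (k + 1 : ℝ)).neg.congr (Filter.Eventually.of_forall fun x => ?_)
    simp only [Pi.mul_apply, Pi.neg_apply]; ring
  · refine (hI (k + 1)).neg.congr (Filter.Eventually.of_forall fun x => ?_)
    simp only [Pi.mul_apply, Pi.neg_apply]; ring

section GaussianExpectation

variable {ι : Type*} [Fintype ι]

lemma eval_eq_sum_prod (p : MvPolynomial ι ℝ) (x : ι → ℝ) :
    eval x p = ∑ a ∈ p.support, p.coeff a * ∏ i, x i ^ a i := by
  rw [eval_eq' ]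

lemma integrable_eval (p : MvPolynomial ι ℝ) :
    Integrable (fun x => eval x p) (gaussPi ι) := by
  simp_rw [eval_eq_sum_prod]
  refine integrable_finsetSum _ fun a _ => Integrable.const_mul ?_ _
  exact Integrable.fintype_prod (fun i => integrable_pow_gaussianReal (a i))

lemma integrable_of_eval {f : (ι → ℝ) → ℝ} (p : MvPolynomial ι ℝ) (h : ∀ x, f x = eval x p) :
    Integrable f (gaussPi ι) := by
  rw [funext h]; exact integrable_eval p

/-- Gaussian expectation of a polynomial. -/
noncomputable def gE (p : MvPolynomial ι ℝ) : ℝ := ∫ x, eval x p ∂(gaussPi ι)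

lemma gE_add (p q : MvPolynomial ι ℝ) : gE (p + q) = gE p + gE q := by
  simp [gE, integral_add (integrable_eval p) (integrable_eval q)]

lemma gE_smul (c : ℝ) (p : MvPolynomial ι ℝ) : gE (c • p) = c * gE p := by
  simp [gE, smul_eval, integral_const_mul]

/-- Gaussian expectation as a linear functional. -/
noncomputable def gEl : MvPolynomial ι ℝ →ₗ[ℝ] ℝ where
  toFun := gE
  map_add' := gE_add
  map_smul' := gE_smul

lemma gEl_apply (p : MvPolynomial ι ℝ) : gEl p = gE p := rfl

lemma gE_monomial (a : ι →₀ ℕ) :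
    gE (monomial a (1 : ℝ)) = ∏ i, ∫ x : ℝ, x ^ a i ∂(gaussianReal 0 1) := by
  rw [gE, ← integral_fintype_prod_eq_prod (fun i (x : ℝ) => x ^ a i)]
  simp [eval_monomial, Finsupp.prod_fintype]

/-- Gaussian integration by parts for polynomials. -/
lemma gE_X_mul [DecidableEq ι] (i : ι) (p : MvPolynomial ι ℝ) :
    gE (X i * p) = gE (pderiv i p) := by
  have key : (gEl (ι := ι)) ∘ₗ (LinearMap.mulLeft ℝ (X i)) =
      gEl ∘ₗ (pderiv (R := ℝ) i).toLinearMap := by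
    refine (basisMonomials ι ℝ).ext fun a => ?_
    simp only [coe_basisMonomials, LinearMap.comp_apply, gEl_apply, LinearMap.mulLeft_apply,
      Derivation.coeFn_coe, pderiv_monomial, one_mul]
    rw [X, monomial_mul, one_mul, gE_monomial, show ((monomial (a - Finsupp.single i 1)) (a i : ℝ))
      = (a i : ℝ) • monomial (a - Finsupp.single i 1) (1 : ℝ) by simp [smul_monomial], gE_smul,
      gE_monomial, ← Finset.mul_prod_erase _ _ (Finset.mem_univ i),
      ← Finset.mul_prod_erase _ (fun j => ∫ x : ℝ, x ^ ((a - Finsupp.single i 1 : ι →₀ ℕ) j)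
        ∂(gaussianReal 0 1)) (Finset.mem_univ i), ← mul_assoc]
    congr 1
    · rcases h : a i with _ | k
      · simp [h]
      · have := integral_pow_succ_gaussianReal k
        simp only [← pow_succ] at this
        simp [h, add_comm 1, this]
    · refine Finset.prod_congr rfl fun j hj => ?_
      have : i ≠ j := (Finset.ne_of_mem_erase hj).symm
      simp [this]
  exact LinearMap.congr_fun key p

end GaussianExpectation

/-- The normalized univariate Hermite polynomial over `ℝ`. -/
noncomputable def hermP (k : ℕ) : Polynomial ℝ :=
  (√(k.factorial : ℝ))⁻¹ • (Polynomial.hermite k).map (Int.castRingHom ℝ)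

lemma eval_hermP (k : ℕ) (t : ℝ) : (hermP k).eval t = hermiteFn k t := by
  simp [hermP, hermiteFn, Polynomial.eval_smul, div_eq_inv_mul]

lemma derivative_hermite_succ (k : ℕ) :
    Polynomial.derivative (Polynomial.hermite (k + 1)) = (k + 1) * Polynomial.hermite k := by
  induction k with
  | zero => simp
  | succ k ih =>
    rw [Polynomial.hermite_succ (k + 1), Polynomial.derivative_sub, Polynomial.derivative_mul, ih,
      Polynomial.derivative_mul]
    have : Polynomial.derivative ((k : Polynomial ℤ) + 1) = 0 := by simp
    rw [this, Polynomial.hermite_succ k]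
    simp
    ring

lemma sqrt_factorial_succ (k : ℕ) :
    √((k + 1).factorial : ℝ) = √(k + 1 : ℝ) * √(k.factorial : ℝ) := by
  rw [Nat.factorial_succ, ← Real.sqrt_mul (by positivity)]
  push_cast; rfl

lemma derivative_hermP_succ (k : ℕ) :
    Polynomial.derivative (hermP (k + 1)) = √(k + 1 : ℝ) • hermP k := by
  have h : (√(k + 1 : ℝ)) ^ 2 = k + 1 := Real.sq_sqrt (by positivity)
  have h2 : √(k + 1 : ℝ) ≠ 0 := by positivity
  have h3 : √(k.factorial : ℝ) ≠ 0 := by positivity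
  rw [hermP, hermP, Polynomial.derivative_smul, Polynomial.derivative_map, derivative_hermite_succ,
    sqrt_factorial_succ, smul_smul]
  have : Polynomial.map (Int.castRingHom ℝ) ((k + 1) * Polynomial.hermite k) =
      (k + 1 : ℝ) • Polynomial.map (Int.castRingHom ℝ) (Polynomial.hermite k) := by
    simp [Polynomial.smul_eq_C_mul]
  rw [this, smul_smul]
  congr 1
  field_simp
  linarith

lemma derivative_hermP_zero : Polynomial.derivative (hermP 0) = 0 := by
  simp [hermP]

lemma X_mul_hermP (k : ℕ) :
    Polynomial.X * hermP k = √(k + 1 : ℝ) • hermP (k + 1) + Polynomial.derivative (hermP k) := by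
  have h2 : √(k + 1 : ℝ) ≠ 0 := by positivity
  have h3 : √(k.factorial : ℝ) ≠ 0 := by positivity
  rw [hermP, hermP, Polynomial.derivative_smul, Polynomial.derivative_map, sqrt_factorial_succ,
    smul_smul, Polynomial.hermite_succ, Polynomial.map_sub, smul_sub, mul_inv,
    mul_inv_cancel_left₀ h2]
  simp

section HermiteExpansion

variable {ι : Type*} [Fintype ι]

/-- The multivariate normalized Hermite polynomial. -/
noncomputable def hermPoly (α : ι → ℕ) : MvPolynomial ι ℝ :=
  ∏ i, Polynomial.aeval (X i) (hermP (α i))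

lemma eval_aeval_X (i : ι) (p : Polynomial ℝ) (x : ι → ℝ) :
    eval x (Polynomial.aeval (X i) p) = p.eval (x i) := by
  induction p using Polynomial.induction_on' with
  | add p q hp hq => simp [hp, hq]
  | monomial k a => simp [Polynomial.aeval_monomial]

lemma eval_hermPoly (α : ι → ℕ) (x : ι → ℝ) :
    eval x (hermPoly α) = ∏ i, hermiteFn (α i) (x i) := by
  simp [hermPoly, eval_aeval_X, eval_hermP, map_prod]

lemma hermPoly_zero : hermPoly (0 : ι → ℕ) = 1 := by
  simp [hermPoly, hermP]

variable [DecidableEq ι]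

lemma pderiv_aeval_X (i j : ι) (p : Polynomial ℝ) :
    pderiv i (Polynomial.aeval (X j) p : MvPolynomial ι ℝ) =
      if i = j then Polynomial.aeval (X j) (Polynomial.derivative p) else 0 := by
  rw [Derivation.map_aeval]
  split_ifs with h
  · subst h; simp
  · simp [pderiv_X_of_ne (Ne.symm h)]

lemma hermPoly_eq_mul_erase (i : ι) (α : ι → ℕ) :
    hermPoly α = Polynomial.aeval (X i) (hermP (α i)) *
      ∏ j ∈ Finset.univ.erase i, Polynomial.aeval (X j) (hermP (α j)) :=
  (Finset.mul_prod_erase _ _ (Finset.mem_univ i)).symm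

lemma pderiv_prod_erase (i : ι) (p : ι → Polynomial ℝ) :
    pderiv i (∏ j ∈ Finset.univ.erase i, Polynomial.aeval (X j) (p j) : MvPolynomial ι ℝ) = 0 := by
  have : ∀ s : Finset ι, i ∉ s →
      pderiv i (∏ j ∈ s, Polynomial.aeval (X j) (p j) : MvPolynomial ι ℝ) = 0 := by
    intro s
    induction s using Finset.induction_on with
    | empty => simp
    | insert a s ha ih =>
      intro hi
      rw [Finset.mem_insert, not_or] at hi
      rw [Finset.prod_insert ha, Derivation.leibniz, ih hi.2, pderiv_aeval_X, if_neg hi.1]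
      simp
  exact this _ (by simp)

lemma pderiv_hermPoly_eq (i : ι) (α : ι → ℕ) :
    pderiv i (hermPoly α) = Polynomial.aeval (X i) (Polynomial.derivative (hermP (α i))) *
      ∏ j ∈ Finset.univ.erase i, Polynomial.aeval (X j) (hermP (α j)) := by
  rw [hermPoly_eq_mul_erase i, Derivation.leibniz, pderiv_prod_erase, pderiv_aeval_X, if_pos rfl]
  simp [mul_comm]

lemma prod_erase_congr (i : ι) {α β : ι → ℕ} (h : ∀ j, j ≠ i → α j = β j) :
    ∏ j ∈ Finset.univ.erase i, (Polynomial.aeval (X j) (hermP (α j)) : MvPolynomial ι ℝ) =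
      ∏ j ∈ Finset.univ.erase i, Polynomial.aeval (X j) (hermP (β j)) :=
  Finset.prod_congr rfl fun j hj => by rw [h j (Finset.ne_of_mem_erase hj)]

lemma pderiv_hermPoly_add (i : ι) (α : ι → ℕ) :
    pderiv i (hermPoly (α + Pi.single i 1)) = √(α i + 1 : ℝ) • hermPoly α := by
  rw [pderiv_hermPoly_eq, hermPoly_eq_mul_erase i α, Pi.add_apply, Pi.single_eq_same,
    derivative_hermP_succ, prod_erase_congr i (β := α) (fun j hj => by simp [hj])]
  simp

lemma pderiv_hermPoly_of_eq_zero (i : ι) (α : ι → ℕ) (h : α i = 0) :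
    pderiv i (hermPoly α) = 0 := by
  rw [pderiv_hermPoly_eq, h, derivative_hermP_zero]; simp

lemma X_mul_hermPoly (i : ι) (α : ι → ℕ) :
    X i * hermPoly α = √(α i + 1 : ℝ) • hermPoly (α + Pi.single i 1) + pderiv i (hermPoly α) := by
  rw [pderiv_hermPoly_eq, hermPoly_eq_mul_erase i α, hermPoly_eq_mul_erase i (α + Pi.single i 1),
    prod_erase_congr i (α := α + Pi.single i 1) (β := α) (fun j hj => by simp [hj]), ← mul_assoc,
    ← smul_mul_assoc, ← add_mul]
  congr 1
  have := congrArg (Polynomial.aeval (X i : MvPolynomial ι ℝ)) (X_mul_hermP (α i))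
  simpa using this

/-- Hermite coefficient of a polynomial. -/
noncomputable def hcf (f : MvPolynomial ι ℝ) (α : ι → ℕ) : ℝ := gE (f * hermPoly α)

lemma hcf_add (f g : MvPolynomial ι ℝ) (α : ι → ℕ) : hcf (f + g) α = hcf f α + hcf g α := by
  simp [hcf, add_mul, gE_add]

lemma hcf_smul (c : ℝ) (f : MvPolynomial ι ℝ) (α : ι → ℕ) : hcf (c • f) α = c * hcf f α := by
  simp [hcf, gE_smul]

/-- Hermite coefficient as a linear functional. -/
noncomputable def hcfl (α : ι → ℕ) : MvPolynomial ι ℝ →ₗ[ℝ] ℝ where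
  toFun f := hcf f α
  map_add' f g := hcf_add f g α
  map_smul' c f := hcf_smul c f α

lemma hcfl_apply (α : ι → ℕ) (f : MvPolynomial ι ℝ) : hcfl α f = hcf f α := rfl

lemma gE_sub (p q : MvPolynomial ι ℝ) : gE (p - q) = gE p - gE q := map_sub gEl p q

lemma hcf_pderiv (i : ι) (f : MvPolynomial ι ℝ) (α : ι → ℕ) :
    hcf (pderiv i f) α = √(α i + 1 : ℝ) * hcf f (α + Pi.single i 1) := by
  have h1 : pderiv i f * hermPoly α = pderiv i (f * hermPoly α) - f * pderiv i (hermPoly α) := by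
    rw [Derivation.leibniz]; simp; ring
  rw [hcf, h1, gE_sub, ← gE_X_mul, ← gE_sub, hcf, ← gE_smul]
  congr 1
  have h := X_mul_hermPoly i α
  rw [← mul_smul_comm]
  linear_combination f * h

lemma exists_add_single {α : ι → ℕ} (h : α ≠ 0) :
    ∃ (i : ι) (β : ι → ℕ), α = β + Pi.single i 1 := by
  obtain ⟨i, hi⟩ := Function.ne_iff.1 h
  refine ⟨i, α - Pi.single i 1, ?_⟩
  ext j
  by_cases hj : j = i
  · subst hj; simp at hi ⊢; omega
  · simp [hj]

lemma totalDegree_pderiv_le (i : ι) (f : MvPolynomial ι ℝ) :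
    (pderiv i f).totalDegree ≤ f.totalDegree - 1 := by
  have h : pderiv i f = ∑ a ∈ f.support, monomial (a - Finsupp.single i 1) (f.coeff a * a i) := by
    conv_lhs => rw [f.as_sum]
    rw [map_sum]
    simp only [pderiv_monomial]
  rw [h]
  refine totalDegree_finsetSum_le fun a ha => ?_
  by_cases hai : a i = 0
  · simp [hai]
  refine (totalDegree_monomial_le _ _).trans ?_
  have hle := le_totalDegree ha
  have h1 : Finsupp.single i 1 ≤ a := by
    rw [Finsupp.single_le_iff]; omega
  have h2 : (a - Finsupp.single i 1).degree + 1 = a.degree := by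
    have := congrArg Finsupp.degree (tsub_add_cancel_of_le h1)
    simpa [map_add] using this
  have e1 : (a.sum fun _ e => e) = a.degree := rfl
  have e2 : ((a - Finsupp.single i 1).sum fun _ => id) = (a - Finsupp.single i 1).degree := rfl
  omega

lemma hcf_eq_zero_of_totalDegree_lt : ∀ (D : ℕ) (f : MvPolynomial ι ℝ) (α : ι → ℕ),
    f.totalDegree ≤ D → D < ∑ i, α i → hcf f α = 0 := by
  intro D
  induction D with
  | zero =>
    intro f α hf hα
    obtain ⟨i, β, rfl⟩ := exists_add_single (α := α) (by rintro rfl; simp at hα)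
    have h0 : pderiv i f = 0 := by
      rw [(totalDegree_eq_zero_iff_eq_C (p := f)).1 (by omega)]; simp
    have := hcf_pderiv i f β
    rw [h0] at this
    have h1 : hcf (0 : MvPolynomial ι ℝ) β = 0 := map_zero (hcfl β)
    rw [h1] at this
    have h2 : √(β i + 1 : ℝ) ≠ 0 := by positivity
    simpa [h2] using this.symm
  | succ D ih =>
    intro f α hf hα
    obtain ⟨i, β, rfl⟩ := exists_add_single (α := α) (by rintro rfl; simp at hα)
    have h1 := ih (pderiv i f) β ((totalDegree_pderiv_le i f).trans (by omega)) (by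
      simp [Finset.sum_add_distrib] at hα; omega)
    rw [hcf_pderiv] at h1
    have h2 : √(β i + 1 : ℝ) ≠ 0 := by positivity
    simpa [h2] using h1

lemma gE_one : gE (1 : MvPolynomial ι ℝ) = 1 := by simp [gE]

lemma hcf_hermPoly (α β : ι → ℕ) : hcf (hermPoly β) α = if β = α then 1 else 0 := by
  induction hs : ∑ i, α i generalizing α β with
  | zero =>
    obtain rfl : α = 0 := by ext i; simpa using (Finset.sum_eq_zero_iff.1 hs) i
    split_ifs with h
    · subst h; simp [hcf, hermPoly_zero, gE_one]
    · have : hcf (1 : MvPolynomial ι ℝ) β = 0 := by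
        refine hcf_eq_zero_of_totalDegree_lt 0 _ _ (by simp) ?_
        rw [Nat.pos_iff_ne_zero]
        intro h0
        exact h (by ext i; simpa using (Finset.sum_eq_zero_iff.1 h0) i)
      rw [hcf, hermPoly_zero, mul_comm]
      exact this
  | succ k ih =>
    obtain ⟨i, γ, rfl⟩ := exists_add_single (α := α) (by rintro rfl; simp at hs)
    have hk : ∑ j, γ j = k := by simpa [Finset.sum_add_distrib] using hs
    have h1 := hcf_pderiv i (hermPoly β) γ
    have h2 : √(γ i + 1 : ℝ) ≠ 0 := by positivity
    by_cases hb : β i = 0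
    · rw [pderiv_hermPoly_of_eq_zero i β hb] at h1
      have h0 : hcf (0 : MvPolynomial ι ℝ) γ = 0 := map_zero (hcfl γ)
      rw [h0] at h1
      rw [if_neg]
      · simpa [h2] using h1.symm
      · rintro rfl; simp at hb
    · have hβ : β = (β - Pi.single i 1) + Pi.single i 1 := by
        ext j
        by_cases hj : j = i
        · subst hj; simp; omega
        · simp [hj]
      set δ := β - Pi.single i 1
      rw [hβ, pderiv_hermPoly_add, hcf_smul, ih γ δ hk] at h1
      rw [hβ]
      simp only [add_left_inj]
      split_ifs with h
      · subst h
        rw [if_pos rfl] at h1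
        exact (mul_left_cancel₀ h2 h1).symm
      · rw [if_neg h] at h1
        simpa [h2] using h1.symm

lemma mem_span_hermPoly (f : MvPolynomial ι ℝ) :
    f ∈ Submodule.span ℝ (Set.range (hermPoly (ι := ι))) := by
  induction f using MvPolynomial.induction_on with
  | C a =>
    rw [← mul_one (C a), ← smul_eq_C_mul, ← hermPoly_zero]
    exact Submodule.smul_mem _ _ (Submodule.subset_span ⟨0, rfl⟩)
  | add p q hp hq => exact Submodule.add_mem _ hp hq
  | mul_X p i hp =>
    have : Submodule.span ℝ (Set.range (hermPoly (ι := ι))) ≤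
        (Submodule.span ℝ (Set.range (hermPoly (ι := ι)))).comap
          (LinearMap.mulLeft ℝ (X i : MvPolynomial ι ℝ)) := by
      rw [Submodule.span_le]
      rintro _ ⟨α, rfl⟩
      simp only [SetLike.mem_coe, Submodule.mem_comap, LinearMap.mulLeft_apply]
      rw [X_mul_hermPoly]
      refine Submodule.add_mem _ (Submodule.smul_mem _ _ (Submodule.subset_span ⟨_, rfl⟩)) ?_
      by_cases h : α i = 0
      · rw [pderiv_hermPoly_of_eq_zero i α h]; exact Submodule.zero_mem _
      · have hβ : α = (α - Pi.single i 1) + Pi.single i 1 := by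
          ext j
          by_cases hj : j = i
          · subst hj; simp; omega
          · simp [hj]
        rw [hβ, pderiv_hermPoly_add]
        exact Submodule.smul_mem _ _ (Submodule.subset_span ⟨_, rfl⟩)
    have := this hp
    rw [mul_comm]
    simpa using this

/-- Multi-indices of total degree at most `D`. -/
def multiIdx (ι : Type*) [Fintype ι] [DecidableEq ι] (D : ℕ) : Finset (ι → ℕ) :=
  (Fintype.piFinset fun _ => Finset.range (D + 1)).filter fun α => ∑ i, α i ≤ D

lemma mem_multiIdx {D : ℕ} {α : ι → ℕ} : α ∈ multiIdx ι D ↔ ∑ i, α i ≤ D := by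
  simp only [multiIdx, Finset.mem_filter, Fintype.mem_piFinset, Finset.mem_range,
    and_iff_right_iff_imp]
  intro h i
  have := Finset.single_le_sum (f := α) (fun j _ => Nat.zero_le _) (Finset.mem_univ i)
  omega

lemma eq_sum_hermPoly {D : ℕ} {f : MvPolynomial ι ℝ} (hf : f.totalDegree ≤ D) :
    f = ∑ α ∈ multiIdx ι D, hcf f α • hermPoly α := by
  obtain ⟨c, hc⟩ := Finsupp.mem_span_range_iff_exists_finsupp.1 (mem_span_hermPoly f)
  have hcoef : ∀ α, hcf f α = c α := by
    intro α
    rw [← hc, ← hcfl_apply, map_finsuppSum]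
    simp only [map_smul, hcfl_apply, hcf_hermPoly, smul_eq_mul, mul_ite, mul_one, mul_zero]
    simp only [Finsupp.sum, Finset.sum_ite_eq', Finsupp.mem_support_iff]
    split_ifs with h
    · rfl
    · push Not at h; exact h.symm
  have hsub : c.support ⊆ multiIdx ι D := by
    intro α hα
    rw [mem_multiIdx]
    by_contra hcon
    exact (Finsupp.mem_support_iff.1 hα) (by
      rw [← hcoef]; exact hcf_eq_zero_of_totalDegree_lt D f α hf (by omega))
  simp_rw [hcoef]
  conv_lhs => rw [← hc]
  exact Finsupp.sum_of_support_subset _ hsub _ (by simp)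

lemma gE_sum {A : Type*} (s : Finset A) (f : A → MvPolynomial ι ℝ) :
    gE (∑ a ∈ s, f a) = ∑ a ∈ s, gE (f a) := map_sum gEl f s

lemma gE_mul_eq_sum {D : ℕ} {f : MvPolynomial ι ℝ} (hf : f.totalDegree ≤ D)
    (g : MvPolynomial ι ℝ) :
    gE (f * g) = ∑ α ∈ multiIdx ι D, hcf f α * hcf g α := by
  conv_lhs => rw [eq_sum_hermPoly hf, Finset.sum_mul, gE_sum]
  refine Finset.sum_congr rfl fun α _ => ?_
  rw [smul_mul_assoc, gE_smul, mul_comm (hermPoly α)]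
  rfl

/-- Parseval's identity. -/
lemma gE_sq_eq_sum {D : ℕ} {f : MvPolynomial ι ℝ} (hf : f.totalDegree ≤ D) :
    gE (f ^ 2) = ∑ α ∈ multiIdx ι D, hcf f α ^ 2 := by
  rw [sq, gE_mul_eq_sum hf]
  simp [sq]

lemma hermiteCoeff_eq_hcf {n : ℕ} (g : MvPolynomial (Fin n) ℝ) (α : Fin n → ℕ) :
    hermiteCoeff g α = hcf g α := by
  simp [hermiteCoeff, hermiteCoeffF, hcf, gE, eval_hermPoly, hermiteMv, gaussianN]

lemma norm2sq_eq_gE {n : ℕ} (g : MvPolynomial (Fin n) ℝ) : norm2sq g = gE (g ^ 2) := by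
  simp [norm2sq, gE, gaussianN]

lemma hyperVarGE_eq_sum {n : ℕ} (R : ℝ) (m : ℕ) {D : ℕ} {g : MvPolynomial (Fin n) ℝ}
    (hg : g.totalDegree ≤ D) : hyperVarGE R m g =
      ∑ α ∈ multiIdx (Fin n) D,
        if m ≤ ∑ i, α i then R ^ (2 * ∑ i, α i) * hcf g α ^ 2 else 0 := by
  rw [hyperVarGE, tsum_eq_sum (s := multiIdx (Fin n) D)]
  · simp_rw [hermiteCoeff_eq_hcf]
  · intro α hα
    rw [mem_multiIdx] at hα
    simp [hermiteCoeff_eq_hcf, hcf_eq_zero_of_totalDegree_lt D g α hg (by omega)]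

end HermiteExpansion

section GaussComplex

variable {ι : Type*} [Fintype ι]

lemma integrable_evalC (p : MvPolynomial ι ℂ) :
    Integrable (fun x : ι → ℝ => eval (fun i => (x i : ℂ)) p) (gaussPi ι) := by
  simp_rw [eval_eq']
  refine integrable_finsetSum _ fun a _ => Integrable.const_mul ?_ _
  have := (Integrable.fintype_prod (μ := fun _ : ι => gaussianReal 0 1)
    (fun i => integrable_pow_gaussianReal (a i))).ofReal (𝕜 := ℂ)
  simpa using this

/-- Gaussian expectation of a polynomial with complex coefficients. -/
noncomputable def gEc : MvPolynomial ι ℂ →ₗ[ℂ] ℂ where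
  toFun p := ∫ x : ι → ℝ, eval (fun i => (x i : ℂ)) p ∂(gaussPi ι)
  map_add' p q := by simp [integral_add (integrable_evalC p) (integrable_evalC q)]
  map_smul' c p := by simp [smul_eval, integral_const_mul]

lemma gEc_apply (p : MvPolynomial ι ℂ) :
    gEc p = ∫ x : ι → ℝ, eval (fun i => (x i : ℂ)) p ∂(gaussPi ι) := rfl

lemma gEc_add (p q : MvPolynomial ι ℂ) : gEc (p + q) = gEc p + gEc q := map_add gEc p q

lemma gEc_smul (c : ℂ) (p : MvPolynomial ι ℂ) : gEc (c • p) = c * gEc p := map_smul gEc c p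

lemma eval_ofReal_map (p : MvPolynomial ι ℝ) (x : ι → ℝ) :
    eval (fun i => (x i : ℂ)) (map (algebraMap ℝ ℂ) p) = ((eval x p : ℝ) : ℂ) := by
  rw [eval_map]
  exact (eval₂_comp_left (algebraMap ℝ ℂ) (RingHom.id ℝ) x p).symm

lemma gEc_map (p : MvPolynomial ι ℝ) : gEc (map (algebraMap ℝ ℂ) p) = (gE p : ℂ) := by
  rw [gEc_apply, gE, ← integral_complex_ofReal]
  simp_rw [eval_ofReal_map]

lemma gEc_X_mul [DecidableEq ι] (i : ι) (p : MvPolynomial ι ℂ) :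
    gEc (X i * p) = gEc (pderiv i p) := by
  have key : (gEc (ι := ι)) ∘ₗ (LinearMap.mulLeft ℂ (X i)) =
      gEc ∘ₗ (pderiv (R := ℂ) i).toLinearMap := by
    refine (basisMonomials ι ℂ).ext fun a => ?_
    simp only [coe_basisMonomials, LinearMap.comp_apply, LinearMap.mulLeft_apply,
      Derivation.coeFn_coe]
    have h : (monomial a (1 : ℂ)) = map (algebraMap ℝ ℂ) (monomial a (1 : ℝ)) := by simp
    rw [h, pderiv_map, gEc_map, ← gE_X_mul, ← gEc_map, (map (algebraMap ℝ ℂ)).map_mul, map_X]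
  exact LinearMap.congr_fun key p

end GaussComplex

section Fock

variable {ι : Type*} [Fintype ι] [DecidableEq ι]

/-- The coordinates `x i + s * y i * I` as polynomials in the `x i` and `y i`. -/
noncomputable def zPoly (s : ℂ) (i : ι) : MvPolynomial (ι ⊕ ι) ℂ :=
  X (Sum.inl i) + C s * X (Sum.inr i)

lemma pderiv_inl_aeval_zPoly (s : ℂ) (i : ι) (P : MvPolynomial ι ℝ) :
    pderiv (Sum.inl i) (aeval (zPoly s) P) = aeval (zPoly s) (pderiv i P) := by
  induction P using MvPolynomial.induction_on with
  | C a => simp [MvPolynomial.algebraMap_apply]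
  | add p q hp hq => simp [hp, hq]
  | mul_X p j hp =>
    have : pderiv (Sum.inl i) (zPoly s j) = (Pi.single i 1 : ι → MvPolynomial (ι ⊕ ι) ℂ) j := by
      by_cases h : j = i
      · subst h; simp [zPoly]
      · simp [zPoly, h]
    rw [map_mul, aeval_X, Derivation.leibniz, hp, this, Derivation.leibniz, pderiv_X, map_add]
    by_cases h : j = i
    · subst h; simp
    · simp [h]

lemma pderiv_inr_aeval_zPoly (s : ℂ) (i : ι) (P : MvPolynomial ι ℝ) :
    pderiv (Sum.inr i) (aeval (zPoly s) P) = C s * aeval (zPoly s) (pderiv i P) := by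
  induction P using MvPolynomial.induction_on with
  | C a => simp [MvPolynomial.algebraMap_apply]
  | add p q hp hq => simp [hp, hq, mul_add]
  | mul_X p j hp =>
    have : pderiv (Sum.inr i) (zPoly s j) =
        C s * (Pi.single i 1 : ι → MvPolynomial (ι ⊕ ι) ℂ) j := by
      by_cases h : j = i
      · subst h; simp [zPoly]
      · simp [zPoly, h]
    rw [map_mul, aeval_X, Derivation.leibniz, hp, this, Derivation.leibniz, pderiv_X, map_add]
    by_cases h : j = i
    · subst h; simp; ring
    · simp [h]; ring

/-- The Fock pairing of two real polynomials. -/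
noncomputable def fockJ (P Q : MvPolynomial ι ℝ) : ℂ :=
  gEc (aeval (zPoly Complex.I) P * aeval (zPoly (-Complex.I)) Q)

lemma fockJ_X_mul (i : ι) (P Q : MvPolynomial ι ℝ) :
    fockJ (X i * P) Q = 2 * fockJ P (pderiv i Q) := by
  have hI : (C Complex.I * C Complex.I : MvPolynomial (ι ⊕ ι) ℂ) = -1 := by
    rw [← C_mul, Complex.I_mul_I]; simp
  have h1 : aeval (zPoly Complex.I) (X i * P) * aeval (zPoly (-Complex.I)) Q =
      X (Sum.inl i) * (aeval (zPoly Complex.I) P * aeval (zPoly (-Complex.I)) Q) +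
      Complex.I • (X (Sum.inr i) * (aeval (zPoly Complex.I) P * aeval (zPoly (-Complex.I)) Q)) := by
    rw [map_mul, aeval_X, zPoly, smul_eq_C_mul]; ring
  rw [fockJ, h1, gEc_add, gEc_smul, gEc_X_mul, gEc_X_mul, ← gEc_smul, ← gEc_add, fockJ, ← gEc_smul]
  congr 1
  rw [Derivation.leibniz, Derivation.leibniz, pderiv_inl_aeval_zPoly, pderiv_inl_aeval_zPoly,
    pderiv_inr_aeval_zPoly, pderiv_inr_aeval_zPoly]
  simp only [smul_eq_C_mul, smul_eq_mul, C_neg, map_ofNat]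
  linear_combination (aeval (zPoly (-Complex.I)) Q * aeval (zPoly Complex.I) (pderiv i P) -
    aeval (zPoly Complex.I) P * aeval (zPoly (-Complex.I)) (pderiv i Q)) * hI

lemma fockJ_one_X_mul (i : ι) (Q : MvPolynomial ι ℝ) : fockJ 1 (X i * Q) = 0 := by
  have hI : (C Complex.I * C Complex.I : MvPolynomial (ι ⊕ ι) ℂ) = -1 := by
    rw [← C_mul, Complex.I_mul_I]; simp
  have h1 : aeval (zPoly Complex.I) (1 : MvPolynomial ι ℝ) * aeval (zPoly (-Complex.I)) (X i * Q) =
      X (Sum.inl i) * aeval (zPoly (-Complex.I)) Q +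
      (-Complex.I) • (X (Sum.inr i) * aeval (zPoly (-Complex.I)) Q) := by
    rw [map_mul, aeval_X, zPoly, smul_eq_C_mul]; simp; ring
  rw [fockJ, h1, gEc_add, gEc_smul, gEc_X_mul, gEc_X_mul, ← gEc_smul, ← gEc_add,
    pderiv_inl_aeval_zPoly, pderiv_inr_aeval_zPoly]
  rw [← map_zero (gEc (ι := ι ⊕ ι))]
  congr 1
  simp only [smul_eq_C_mul, C_neg]
  linear_combination (aeval (zPoly (-Complex.I)) (pderiv i Q)) * hI

lemma fockJ_one_one : fockJ (1 : MvPolynomial ι ℝ) 1 = 1 := by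
  simp [fockJ, gEc_apply]

/-- The squared Fock norm with parameter `c`. -/
noncomputable def fockN (c : ℝ) (P : MvPolynomial ι ℝ) : ℝ :=
  ∑ a ∈ P.support, c ^ (∑ i, a i) * (∏ i, ((a i).factorial : ℝ)) * P.coeff a ^ 2

lemma fockJ_add_left (P P' Q : MvPolynomial ι ℝ) : fockJ (P + P') Q = fockJ P Q + fockJ P' Q := by
  simp [fockJ, add_mul]

lemma fockJ_smul_left (c : ℝ) (P Q : MvPolynomial ι ℝ) : fockJ (c • P) Q = c * fockJ P Q := by
  have h : aeval (zPoly Complex.I) (c • P) * aeval (zPoly (-Complex.I)) Q =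
      (c : ℂ) • (aeval (zPoly Complex.I) P * aeval (zPoly (-Complex.I)) Q) := by
    rw [smul_eq_C_mul, map_mul, aeval_C, MvPolynomial.algebraMap_apply, smul_eq_C_mul, mul_assoc]
    rfl
  rw [fockJ, h, gEc_smul, fockJ]

lemma fockJ_add_right (P Q Q' : MvPolynomial ι ℝ) : fockJ P (Q + Q') = fockJ P Q + fockJ P Q' := by
  rw [fockJ, map_add, mul_add, gEc_add]; rfl

lemma fockJ_smul_right (c : ℝ) (P Q : MvPolynomial ι ℝ) : fockJ P (c • Q) = c * fockJ P Q := by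
  have h : aeval (zPoly Complex.I) P * aeval (zPoly (-Complex.I)) (c • Q) =
      (c : ℂ) • (aeval (zPoly Complex.I) P * aeval (zPoly (-Complex.I)) Q) := by
    rw [smul_eq_C_mul, map_mul, aeval_C, MvPolynomial.algebraMap_apply, smul_eq_C_mul,
      mul_left_comm]
    rfl
  rw [fockJ, h, gEc_smul, fockJ]

lemma fockJ_one (Q : MvPolynomial ι ℝ) : fockJ 1 Q = (Q.coeff 0 : ℝ) := by
  induction Q using MvPolynomial.induction_on with
  | C a =>
    rw [← mul_one (C a), ← smul_eq_C_mul, fockJ_smul_right, fockJ_one_one]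
    simp
  | add p q hp hq => rw [fockJ_add_right, hp, hq]; simp
  | mul_X p i hp => rw [mul_comm, fockJ_one_X_mul, coeff_X_mul']; simp

lemma fockJ_monomial (a : ι →₀ ℕ) : ∀ Q : MvPolynomial ι ℝ, fockJ (monomial a 1) Q =
    (2 ^ (∑ i, a i) * (∏ i, ((a i).factorial : ℝ)) * Q.coeff a : ℝ) := by
  induction hs : ∑ i, a i generalizing a with
  | zero =>
    intro Q
    obtain rfl : a = 0 := by ext i; simpa using (Finset.sum_eq_zero_iff.1 hs) i
    have := fockJ_one Q
    simpa using this
  | succ k ih =>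
    intro Q
    obtain ⟨i, hi⟩ : ∃ i, a i ≠ 0 := by
      by_contra hcon
      push Not at hcon
      simp [hcon] at hs
    have h1 : Finsupp.single i 1 ≤ a := by rw [Finsupp.single_le_iff]; omega
    obtain ⟨b, rfl⟩ : ∃ b, a = b + Finsupp.single i 1 := ⟨_, (tsub_add_cancel_of_le h1).symm⟩
    have hk : ∑ j, b j = k := by
      simp only [Finsupp.add_apply, Finset.sum_add_distrib] at hs
      have : ∑ j, (Finsupp.single i 1 : ι →₀ ℕ) j = 1 := by
        simp [Finsupp.single_apply]
      omega
    have h2 : (monomial (b + Finsupp.single i 1) (1 : ℝ)) = X i * monomial b 1 := by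
      rw [X, monomial_mul, add_comm, one_mul]
    have h3 : ∏ j, (((b + Finsupp.single i 1 : ι →₀ ℕ) j).factorial : ℝ) =
        (b i + 1) * ∏ j, ((b j).factorial : ℝ) := by
      rw [← Finset.mul_prod_erase _ _ (Finset.mem_univ i),
        ← Finset.mul_prod_erase _ (fun j => ((b j).factorial : ℝ)) (Finset.mem_univ i), ← mul_assoc]
      congr 1
      · simp [Nat.factorial_succ]
      · refine Finset.prod_congr rfl fun j hj => ?_
        simp [(Finset.ne_of_mem_erase hj).symm]
    rw [h2, fockJ_X_mul, ih b hk, coeff_pderiv, h3]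
    push_cast
    ring

lemma fockJ_self (P : MvPolynomial ι ℝ) : fockJ P P = (fockN 2 P : ℝ) := by
  have h : ∀ Q, fockJ P Q = ∑ a ∈ P.support, ((P.coeff a : ℝ) : ℂ) * fockJ (monomial a 1) Q := by
    intro Q
    have hlin : ∀ s : Finset (ι →₀ ℕ), fockJ (∑ a ∈ s, P.coeff a • monomial a (1 : ℝ)) Q =
        ∑ a ∈ s, ((P.coeff a : ℝ) : ℂ) * fockJ (monomial a 1) Q := by
      intro s
      induction s using Finset.induction_on with
      | empty => simp [fockJ]
      | insert a s ha ih =>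
        rw [Finset.sum_insert ha, fockJ_add_left, ih, fockJ_smul_left, Finset.sum_insert ha]
    conv_lhs => rw [P.as_sum]
    rw [← hlin]
    simp [smul_monomial]
  rw [h, fockN]
  push_cast
  refine Finset.sum_congr rfl fun a _ => ?_
  rw [fockJ_monomial]
  push_cast
  ring

lemma fockN_eq_sum {c : ℝ} {P : MvPolynomial ι ℝ} {s : Finset (ι →₀ ℕ)} (hs : P.support ⊆ s) :
    fockN c P =
      ∑ a ∈ s, c ^ (∑ i, a i) * (∏ i, ((a i).factorial : ℝ)) * P.coeff a ^ 2 := by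
  refine Finset.sum_subset hs fun a _ ha => ?_
  simp [notMem_support_iff.1 ha]

lemma sum_antidiagonal_inv_factorial (b : ι →₀ ℕ) :
    (∏ i, ((b i).factorial : ℝ)) * ∑ x ∈ Finset.HasAntidiagonal.antidiagonal b,
      ((∏ i, ((x.1 i).factorial : ℝ)) * ∏ i, ((x.2 i).factorial : ℝ))⁻¹ ≤ 2 ^ (∑ i, b i) := by
  have h1 : ∀ x ∈ Finset.HasAntidiagonal.antidiagonal b, (∏ i, ((b i).factorial : ℝ)) *
      ((∏ i, ((x.1 i).factorial : ℝ)) * ∏ i, ((x.2 i).factorial : ℝ))⁻¹ =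
      ∏ i, ((b i).choose (x.1 i) : ℝ) := by
    intro x hx
    rw [Finset.HasAntidiagonal.mem_antidiagonal] at hx
    rw [← Finset.prod_mul_distrib, ← div_eq_mul_inv, ← Finset.prod_div_distrib]
    refine Finset.prod_congr rfl fun i _ => ?_
    have : b i = x.1 i + x.2 i := by rw [← hx]; rfl
    rw [this, Nat.cast_add_choose]
  rw [Finset.mul_sum, Finset.sum_congr rfl h1]
  have h2 : (2 : ℝ) ^ (∑ i, b i) = ∑ a ∈ Fintype.piFinset (fun i => Finset.range (b i + 1)),
      ∏ i, ((b i).choose (a i) : ℝ) := by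
    rw [← Finset.prod_univ_sum (fun i => Finset.range (b i + 1))
      (fun i j => ((b i).choose j : ℝ)), ← Finset.prod_pow_eq_pow_sum]
    refine Finset.prod_congr rfl fun i _ => ?_
    have := Nat.sum_range_choose (b i)
    exact_mod_cast this.symm
  rw [h2, ← Finset.sum_image (s := Finset.HasAntidiagonal.antidiagonal b) (g := fun x i => x.1 i)
    (f := fun a : ι → ℕ => ∏ i, ((b i).choose (a i) : ℝ))]
  · refine Finset.sum_le_sum_of_subset_of_nonneg ?_ fun _ _ _ => by positivity
    intro a ha
    obtain ⟨x, hx, rfl⟩ := Finset.mem_image.1 ha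
    rw [Finset.HasAntidiagonal.mem_antidiagonal] at hx
    simp only [Fintype.mem_piFinset, Finset.mem_range]
    intro i
    have : b i = x.1 i + x.2 i := by rw [← hx]; rfl
    omega
  · intro x hx y hy hxy
    rw [Finset.mem_coe, Finset.HasAntidiagonal.mem_antidiagonal] at hx hy
    have h : x.1 = y.1 := DFunLike.coe_injective hxy
    refine Prod.ext h ?_
    rw [← hy, h] at hx
    exact add_left_cancel hx

lemma fockN_mul_le {c : ℝ} (hc : 0 ≤ c) (P Q : MvPolynomial ι ℝ) :
    fockN c (P * Q) ≤ fockN (2 * c) P * fockN (2 * c) Q := by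
  set w : (ι →₀ ℕ) → ℝ := fun a => ∏ i, ((a i).factorial : ℝ) with hw
  have hwpos : ∀ a, 0 < w a := fun a => by positivity
  set F : (ι →₀ ℕ) × (ι →₀ ℕ) → ℝ := fun x =>
    ((2 * c) ^ (∑ i, x.1 i) * w x.1 * P.coeff x.1 ^ 2) *
      ((2 * c) ^ (∑ i, x.2 i) * w x.2 * Q.coeff x.2 ^ 2) with hF
  have hF0 : ∀ x, 0 ≤ F x := fun x => by have := hwpos x.1; have := hwpos x.2; positivity
  have hb : ∀ b : ι →₀ ℕ, c ^ (∑ i, b i) * w b * (P * Q).coeff b ^ 2 ≤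
      ∑ x ∈ Finset.HasAntidiagonal.antidiagonal b, F x := by
    intro b
    have hcs : ((P * Q).coeff b) ^ 2 ≤ (∑ x ∈ Finset.HasAntidiagonal.antidiagonal b, (w x.1 * w x.2)⁻¹) *
        ∑ x ∈ Finset.HasAntidiagonal.antidiagonal b, w x.1 * w x.2 * (P.coeff x.1 * Q.coeff x.2) ^ 2 := by
      rw [coeff_mul]
      refine Finset.sum_sq_le_sum_mul_sum_of_sq_le_mul _ (fun x _ => ?_) (fun x _ => ?_)
        fun x _ => le_of_eq ?_
      · have := hwpos x.1; have := hwpos x.2; positivity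
      · have := hwpos x.1; have := hwpos x.2; positivity
      · have h1 := (hwpos x.1).ne'; have h2 := (hwpos x.2).ne'
        field_simp
    have h3 := sum_antidiagonal_inv_factorial b
    set T := ∑ x ∈ Finset.HasAntidiagonal.antidiagonal b, w x.1 * w x.2 * (P.coeff x.1 * Q.coeff x.2) ^ 2
    have hT : 0 ≤ T := Finset.sum_nonneg fun x _ => by
      have := hwpos x.1; have := hwpos x.2; positivity
    calc c ^ (∑ i, b i) * w b * (P * Q).coeff b ^ 2
        ≤ c ^ (∑ i, b i) * w b * ((∑ x ∈ Finset.HasAntidiagonal.antidiagonal b, (w x.1 * w x.2)⁻¹) * T) := by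
          have := hwpos b; gcongr
      _ = c ^ (∑ i, b i) * (w b * ∑ x ∈ Finset.HasAntidiagonal.antidiagonal b, (w x.1 * w x.2)⁻¹) * T := by ring
      _ ≤ c ^ (∑ i, b i) * 2 ^ (∑ i, b i) * T := by gcongr
      _ = ∑ x ∈ Finset.HasAntidiagonal.antidiagonal b, F x := by
          rw [Finset.mul_sum]
          refine Finset.sum_congr rfl fun x hx => ?_
          rw [Finset.HasAntidiagonal.mem_antidiagonal] at hx
          have : ∑ i, b i = ∑ i, x.1 i + ∑ i, x.2 i := by
            rw [← hx, ← Finset.sum_add_distrib]; rfl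
          rw [hF, this]
          simp only [pow_add, mul_pow]
          ring
  have hsum : fockN (2 * c) P * fockN (2 * c) Q = ∑ x ∈ P.support ×ˢ Q.support, F x := by
    rw [fockN, fockN, Finset.sum_mul_sum, Finset.sum_product]
  rw [hsum, fockN]
  refine (Finset.sum_le_sum fun b _ => hb b).trans ?_
  rw [← Finset.sum_fiberwise_of_maps_to (s := P.support ×ˢ Q.support)
    (t := (P.support ×ˢ Q.support).image fun x => x.1 + x.2) (g := fun x => x.1 + x.2)
    (fun x hx => Finset.mem_image_of_mem _ hx)]
  have hsub : (P * Q).support ⊆ (P.support ×ˢ Q.support).image fun x => x.1 + x.2 :=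
    (support_mul P Q).trans (by
      intro a ha
      obtain ⟨x, hx, y, hy, rfl⟩ := Finset.mem_add.1 ha
      exact Finset.mem_image.2 ⟨(x, y), Finset.mem_product.2 ⟨hx, hy⟩, rfl⟩)
  refine le_trans (Finset.sum_le_sum_of_subset_of_nonneg hsub fun b _ _ =>
    Finset.sum_nonneg fun x _ => hF0 x) (Finset.sum_le_sum fun b _ => ?_)
  refine le_of_eq (Finset.sum_subset ?_ ?_).symm
  · intro x hx
    rw [Finset.mem_filter] at hx
    exact Finset.HasAntidiagonal.mem_antidiagonal.2 hx.2
  · intro x hx hx2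
    rw [Finset.HasAntidiagonal.mem_antidiagonal] at hx
    simp only [Finset.mem_filter, Finset.mem_product, hx, and_true, not_and_or,
      notMem_support_iff] at hx2
    rcases hx2 with h | h <;> simp [hF, h]

lemma fockN_nonneg {c : ℝ} (hc : 0 ≤ c) (P : MvPolynomial ι ℝ) : 0 ≤ fockN c P :=
  Finset.sum_nonneg fun _ _ => by positivity

lemma fockN_pow_le (s : ℕ) : ∀ {c : ℝ}, 0 ≤ c → ∀ P : MvPolynomial ι ℝ,
    fockN c (P ^ 2 ^ s) ≤ fockN (2 ^ s * c) P ^ 2 ^ s := by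
  induction s with
  | zero => intro c _ P; simp
  | succ s ih =>
    intro c hc P
    have h1 := fockN_mul_le hc (P ^ 2 ^ s) (P ^ 2 ^ s)
    have h2 := ih (c := 2 * c) (by positivity) P
    rw [pow_succ 2 s, pow_mul, sq]
    refine h1.trans ?_
    rw [← sq, pow_mul]
    refine pow_le_pow_left₀ (fockN_nonneg (by positivity) _) ?_ 2
    rwa [pow_succ, mul_assoc]

/-- The Wick average `E_y P(x + i y)`. -/
noncomputable def wick (x : ι → ℝ) (P : MvPolynomial ι ℝ) : ℂ :=
  gEc (aeval (fun i => (C (x i : ℂ) + C Complex.I * X i : MvPolynomial ι ℂ)) P)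

lemma wick_smul (x : ι → ℝ) (c : ℝ) (P : MvPolynomial ι ℝ) : wick x (c • P) = c * wick x P := by
  have h : aeval (fun i => (C (x i : ℂ) + C Complex.I * X i : MvPolynomial ι ℂ)) (c • P) =
      (c : ℂ) • aeval (fun i => (C (x i : ℂ) + C Complex.I * X i : MvPolynomial ι ℂ)) P := by
    rw [smul_eq_C_mul, map_mul, aeval_C, MvPolynomial.algebraMap_apply, smul_eq_C_mul]
    rfl
  rw [wick, h, gEc_smul, wick]

lemma wick_sum {A : Type*} (x : ι → ℝ) (s : Finset A) (P : A → MvPolynomial ι ℝ) :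
    wick x (∑ a ∈ s, P a) = ∑ a ∈ s, wick x (P a) := by
  simp only [wick, map_sum]

lemma pderiv_aeval_wick (x : ι → ℝ) (i : ι) (P : MvPolynomial ι ℝ) :
    pderiv i (aeval (fun i => (C (x i : ℂ) + C Complex.I * X i : MvPolynomial ι ℂ)) P) =
      C Complex.I * aeval (fun i => (C (x i : ℂ) + C Complex.I * X i : MvPolynomial ι ℂ))
        (pderiv i P) := by
  induction P using MvPolynomial.induction_on with
  | C a => simp [MvPolynomial.algebraMap_apply]
  | add p q hp hq => simp only [map_add, hp, hq, mul_add]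
  | mul_X p j hp =>
    have : pderiv i (C (x j : ℂ) + C Complex.I * X j : MvPolynomial ι ℂ) =
        C Complex.I * (Pi.single i 1 : ι → MvPolynomial ι ℂ) j := by
      by_cases h : j = i
      · subst h; simp
      · simp [h]
    rw [map_mul, aeval_X, Derivation.leibniz, hp, this, Derivation.leibniz, pderiv_X, map_add]
    by_cases h : j = i
    · subst h; simp; ring
    · simp [h]; ring

lemma wick_X_mul (x : ι → ℝ) (i : ι) (P : MvPolynomial ι ℝ) :
    wick x (X i * P) = x i * wick x P - wick x (pderiv i P) := by
  set Φ := aeval (R := ℝ) (fun i => (C (x i : ℂ) + C Complex.I * X i : MvPolynomial ι ℂ)) with hΦ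
  have h1 : Φ (X i * P) = (x i : ℂ) • Φ P + Complex.I • (X i * Φ P) := by
    rw [map_mul, hΦ, aeval_X, smul_eq_C_mul, smul_eq_C_mul]; ring
  rw [wick, ← hΦ, h1, gEc_add, gEc_smul, gEc_smul, gEc_X_mul, hΦ, pderiv_aeval_wick,
    ← smul_eq_C_mul, gEc_smul, ← mul_assoc, Complex.I_mul_I, wick, wick]
  ring

/-- The normalized monomial `z^α / √α!`. -/
noncomputable def fockMon (α : ι → ℕ) : MvPolynomial ι ℝ :=
  monomial (Finsupp.equivFunOnFinite.symm α) (∏ i, √((α i).factorial : ℝ))⁻¹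

lemma prod_sqrt_factorial_add (i : ι) (α : ι → ℕ) :
    ∏ j, √(((α + Pi.single i 1 : ι → ℕ) j).factorial : ℝ) =
      √(α i + 1 : ℝ) * ∏ j, √((α j).factorial : ℝ) := by
  rw [← Finset.mul_prod_erase _ _ (Finset.mem_univ i),
    ← Finset.mul_prod_erase _ (fun j => √((α j).factorial : ℝ)) (Finset.mem_univ i), ← mul_assoc]
  congr 1
  · simp [sqrt_factorial_succ]
  · refine Finset.prod_congr rfl fun j hj => ?_
    simp [(Finset.ne_of_mem_erase hj)]

lemma equivFunOnFinite_symm_add_single (i : ι) (α : ι → ℕ) :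
    Finsupp.equivFunOnFinite.symm (α + Pi.single i 1) =
      Finsupp.equivFunOnFinite.symm α + Finsupp.single i 1 := by
  ext j
  by_cases h : j = i
  · subst h; simp
  · simp [h]

lemma X_mul_fockMon (i : ι) (α : ι → ℕ) :
    X i * fockMon α = √(α i + 1 : ℝ) • fockMon (α + Pi.single i 1) := by
  have h : √(α i + 1 : ℝ) ≠ 0 := by positivity
  rw [fockMon, fockMon, smul_monomial, prod_sqrt_factorial_add, equivFunOnFinite_symm_add_single, X,
    monomial_mul, one_mul, add_comm, smul_eq_mul, mul_inv, mul_inv_cancel_left₀ h]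

lemma pderiv_fockMon_add (i : ι) (α : ι → ℕ) :
    pderiv i (fockMon (α + Pi.single i 1)) = √(α i + 1 : ℝ) • fockMon α := by
  have h : √(α i + 1 : ℝ) ≠ 0 := by positivity
  have h2 : √(α i + 1 : ℝ) ^ 2 = α i + 1 := Real.sq_sqrt (by positivity)
  rw [fockMon, fockMon, smul_monomial, prod_sqrt_factorial_add, equivFunOnFinite_symm_add_single,
    pderiv_monomial, add_tsub_cancel_right]
  congr 1
  simp
  field_simp
  linarith

lemma pderiv_fockMon_of_eq_zero (i : ι) (α : ι → ℕ) (h : α i = 0) :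
    pderiv i (fockMon α) = 0 := by
  rw [fockMon, pderiv_monomial]; simp [h]

lemma wick_fockMon (x : ι → ℝ) (α : ι → ℕ) : wick x (fockMon α) = (eval x (hermPoly α) : ℝ) := by
  induction hs : ∑ i, α i using Nat.strong_induction_on generalizing α with
  | _ k ih =>
  by_cases h0 : α = 0
  · subst h0
    have : fockMon (0 : ι → ℕ) = 1 := by
      have h : Finsupp.equivFunOnFinite.symm (0 : ι → ℕ) = 0 := by ext; rfl
      rw [fockMon, h]; simp
    rw [this, hermPoly_zero]
    simp [wick, gEc_apply]
  · obtain ⟨i, β, rfl⟩ := exists_add_single h0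
    have hk : ∑ j, β j + 1 = k := by simpa [Finset.sum_add_distrib] using hs
    have hβ := ih (∑ j, β j) (by omega) β rfl
    have h1 : wick x (pderiv i (fockMon β)) = (eval x (pderiv i (hermPoly β)) : ℝ) := by
      by_cases hb : β i = 0
      · rw [pderiv_fockMon_of_eq_zero i β hb, pderiv_hermPoly_of_eq_zero i β hb]
        simp [wick]
      · obtain ⟨γ, rfl⟩ : ∃ γ : ι → ℕ, β = γ + Pi.single i 1 := ⟨β - Pi.single i 1, by
          ext j
          by_cases hj : j = i
          · subst hj; simp; omega
          · simp [hj]⟩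
        have hk2 : ∑ j, γ j + 1 = ∑ j, (γ + Pi.single i 1 : ι → ℕ) j := by
          simp [Finset.sum_add_distrib]
        have := ih (∑ j, γ j) (by omega) γ rfl
        rw [pderiv_fockMon_add, pderiv_hermPoly_add, wick_smul, this, smul_eval]
        push_cast; ring
    have h2 := wick_X_mul x i (fockMon β)
    rw [X_mul_fockMon, wick_smul, hβ, h1] at h2
    have h3 := congrArg (eval x) (X_mul_hermPoly i β)
    rw [map_mul, map_add, eval_X, smul_eval] at h3
    have h4 : ((√(β i + 1 : ℝ) : ℝ) : ℂ) ≠ 0 := by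
      rw [Complex.ofReal_ne_zero]; positivity
    refine mul_left_cancel₀ h4 (h2.trans ?_)
    rw [← Complex.ofReal_mul, ← Complex.ofReal_mul, ← Complex.ofReal_sub]
    congr 1
    linarith

end Fock

section Hyper

variable {ι : Type*} [Fintype ι] [DecidableEq ι]

/-- The value of a real polynomial at `x + i y`. -/
noncomputable def evalI (P : MvPolynomial ι ℝ) (x y : ι → ℝ) : ℂ :=
  aeval (fun i => (x i : ℂ) + Complex.I * y i) P

lemma eval_aeval_zPoly (s : ℂ) (P : MvPolynomial ι ℝ) (w : ι ⊕ ι → ℝ) :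
    eval (fun i => (w i : ℂ)) (aeval (zPoly s) P) =
      aeval (fun i => (w (Sum.inl i) : ℂ) + s * w (Sum.inr i)) P := by
  induction P using MvPolynomial.induction_on with
  | C a => simp [MvPolynomial.algebraMap_apply]
  | add p q hp hq => simp only [map_add, hp, hq]
  | mul_X p j hp => simp only [map_mul, hp, aeval_X]; simp [zPoly]

lemma conj_aeval (z : ι → ℂ) (P : MvPolynomial ι ℝ) :
    (starRingEnd ℂ) (aeval z P) = aeval (fun i => (starRingEnd ℂ) (z i)) P := by
  induction P using MvPolynomial.induction_on with
  | C a => simp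
  | add p q hp hq => simp only [map_add, hp, hq]
  | mul_X p j hp => simp only [map_mul, hp, aeval_X]

lemma wick_eq_integral (x : ι → ℝ) (P : MvPolynomial ι ℝ) :
    wick x P = ∫ y, evalI P x y ∂(gaussPi ι) := by
  rw [wick, gEc_apply]
  congr 1
  ext y
  rw [evalI]
  induction P using MvPolynomial.induction_on with
  | C a => simp [MvPolynomial.algebraMap_apply]
  | add p q hp hq => simp only [map_add, hp, hq]
  | mul_X p j hp => simp only [map_mul, hp, aeval_X]; simp

lemma integrable_evalI (x : ι → ℝ) (P : MvPolynomial ι ℝ) :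
    Integrable (fun y => evalI P x y) (gaussPi ι) := by
  have := integrable_evalC (aeval (fun i => (C (x i : ℂ) + C Complex.I * X i : MvPolynomial ι ℂ)) P)
  refine this.congr (Filter.Eventually.of_forall fun y => ?_)
  simp only [evalI]
  induction P using MvPolynomial.induction_on with
  | C a => simp [MvPolynomial.algebraMap_apply]
  | add p q hp hq =>
    simp only [map_add, hp (integrable_evalC _), hq (integrable_evalC _)]
  | mul_X p j hp => simp only [map_mul, hp (integrable_evalC _), aeval_X]; simp

lemma evalI_pow (P : MvPolynomial ι ℝ) (r : ℕ) (x y : ι → ℝ) :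
    evalI (P ^ r) x y = evalI P x y ^ r := by simp [evalI]

lemma zPoly_mul_conj (P : MvPolynomial ι ℝ) (w : ι ⊕ ι → ℝ) :
    eval (fun i => (w i : ℂ)) (aeval (zPoly Complex.I) P * aeval (zPoly (-Complex.I)) P) =
      ((‖evalI P (fun i => w (Sum.inl i)) (fun i => w (Sum.inr i))‖ ^ 2 : ℝ) : ℂ) := by
  rw [map_mul, eval_aeval_zPoly, eval_aeval_zPoly, evalI]
  have : (fun i => (w (Sum.inl i) : ℂ) + -Complex.I * w (Sum.inr i)) = fun i =>
      (starRingEnd ℂ) ((w (Sum.inl i) : ℂ) + Complex.I * w (Sum.inr i)) := by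
    ext i; simp
  rw [this, ← conj_aeval, Complex.mul_conj, Complex.normSq_eq_norm_sq]

lemma fockN_two_eq_integral (P : MvPolynomial ι ℝ) :
    fockN 2 P = ∫ x, ∫ y, ‖evalI P x y‖ ^ 2 ∂(gaussPi ι) ∂(gaussPi ι) ∧
    Integrable (fun x => ∫ y, ‖evalI P x y‖ ^ 2 ∂(gaussPi ι)) (gaussPi ι) := by
  have hmp := measurePreserving_sumPiEquivProdPi (ι := ι) (ι' := ι) (X := fun _ => ℝ)
    (fun _ => gaussianReal 0 1)
  set G : (ι → ℝ) × (ι → ℝ) → ℝ := fun p => ‖evalI P p.1 p.2‖ ^ 2 with hG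
  have hGw : ∀ w : ι ⊕ ι → ℝ, G (MeasurableEquiv.sumPiEquivProdPi (fun _ => ℝ) w) =
      ‖evalI P (fun i => w (Sum.inl i)) (fun i => w (Sum.inr i))‖ ^ 2 := fun w => rfl
  have hint : Integrable (fun w : ι ⊕ ι → ℝ =>
      G (MeasurableEquiv.sumPiEquivProdPi (fun _ => ℝ) w)) (gaussPi (ι ⊕ ι)) := by
    have := (integrable_evalC
      (aeval (zPoly Complex.I) P * aeval (zPoly (-Complex.I)) P)).re
    refine this.congr (Filter.Eventually.of_forall fun w => ?_)
    simp only [zPoly_mul_conj, hGw]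
    exact Complex.ofReal_re _
  have hint2 : Integrable G ((gaussPi ι).prod (gaussPi ι)) :=
    (hmp.integrable_comp_emb (MeasurableEquiv.measurableEmbedding _)).1 hint
  refine ⟨?_, hint2.integral_prod_left⟩
  have h1 := fockJ_self P
  rw [fockJ, gEc_apply] at h1
  simp_rw [zPoly_mul_conj] at h1
  rw [integral_complex_ofReal] at h1
  rw [← Complex.ofReal_injective h1, ← integral_prod (f := G) hint2,
    ← hmp.integral_comp' (g := G)]
  rfl

lemma fockN_sum_fockMon {D : ℕ} (c : ℝ) (a : (ι → ℕ) → ℝ) :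
    fockN c (∑ α ∈ multiIdx ι D, a α • fockMon α) =
      ∑ α ∈ multiIdx ι D, c ^ (∑ i, α i) * a α ^ 2 := by
  have hco : ∀ b : ι →₀ ℕ, (∑ α ∈ multiIdx ι D, a α • fockMon α).coeff b =
      if (b : ι → ℕ) ∈ multiIdx ι D then a b * (∏ i, √((b i).factorial : ℝ))⁻¹ else 0 := by
    intro b
    rw [coeff_sum]
    simp only [coeff_smul, fockMon, coeff_monomial, smul_eq_mul]
    have : ∀ α : ι → ℕ, Finsupp.equivFunOnFinite.symm α = b ↔ α = b := fun α => by
      rw [Equiv.symm_apply_eq]; rfl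
    simp only [this, mul_ite, mul_zero]
    rw [Finset.sum_ite_eq']
  rw [fockN_eq_sum (s := (multiIdx ι D).image Finsupp.equivFunOnFinite.symm),
    Finset.sum_image (fun _ _ _ _ h => Finsupp.equivFunOnFinite.symm.injective h)]
  · refine Finset.sum_congr rfl fun α hα => ?_
    rw [hco]
    have h1 : (∏ i, √((α i).factorial : ℝ)) ^ 2 = ∏ i, ((α i).factorial : ℝ) := by
      rw [← Finset.prod_pow]
      exact Finset.prod_congr rfl fun i _ => Real.sq_sqrt (by positivity)
    have h2 : ∏ i, √((α i).factorial : ℝ) ≠ 0 := by positivity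
    simp only [Finsupp.coe_equivFunOnFinite_symm, hα, if_true]
    rw [← h1]
    field_simp
  · intro b hb
    rw [mem_support_iff, hco] at hb
    refine Finset.mem_image.2 ⟨b, ?_, ?_⟩
    · by_contra h; exact hb (if_neg h)
    · rw [Equiv.symm_apply_eq]; rfl

/-- Gaussian hypercontractivity for moments `2 ^ (s + 1)`. -/
lemma gE_pow_le {D : ℕ} {f : MvPolynomial ι ℝ} (hf : f.totalDegree ≤ D) (s : ℕ) :
    gE (f ^ (2 * 2 ^ s)) ≤
      (∑ α ∈ multiIdx ι D, (2 ^ (s + 1) : ℝ) ^ (∑ i, α i) * hcf f α ^ 2) ^ 2 ^ s := by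
  set F : MvPolynomial ι ℝ := ∑ α ∈ multiIdx ι D, hcf f α • fockMon α with hF
  have hw : ∀ x, wick x F = (eval x f : ℝ) := by
    intro x
    rw [hF, wick_sum]
    conv_rhs => rw [eq_sum_hermPoly hf]
    rw [map_sum, Complex.ofReal_sum]
    refine Finset.sum_congr rfl fun α _ => ?_
    rw [wick_smul, wick_fockMon, smul_eval]; push_cast; rfl
  obtain ⟨h1, h2⟩ := fockN_two_eq_integral (F ^ 2 ^ s)
  have hpt : ∀ x, eval x (f ^ (2 * 2 ^ s)) ≤ ∫ y, ‖evalI (F ^ 2 ^ s) x y‖ ^ 2 ∂(gaussPi ι) := by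
    intro x
    have e : ∀ y, ‖evalI (F ^ 2 ^ s) x y‖ ^ 2 = ‖evalI F x y‖ ^ (2 * 2 ^ s) := fun y => by
      rw [evalI_pow, norm_pow, ← pow_mul, mul_comm]
    simp_rw [e]
    have ha : eval x (f ^ (2 * 2 ^ s)) = ‖wick x F‖ ^ (2 * 2 ^ s) := by
      rw [hw, map_pow, Complex.norm_real, Real.norm_eq_abs, Even.pow_abs ⟨2 ^ s, by ring⟩]
    rw [ha, wick_eq_integral]
    refine (pow_le_pow_left₀ (norm_nonneg _) (norm_integral_le_integral_norm _) _).trans ?_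
    refine (convexOn_pow (𝕜 := ℝ) (2 * 2 ^ s)).map_integral_le (by fun_prop) isClosed_Ici
      (Filter.Eventually.of_forall fun y => norm_nonneg _) (integrable_evalI x F).norm ?_
    have := (integrable_evalI x (F ^ (2 * 2 ^ s))).norm
    refine this.congr (Filter.Eventually.of_forall fun y => ?_)
    simp [evalI_pow]
  calc gE (f ^ (2 * 2 ^ s)) ≤ fockN 2 (F ^ 2 ^ s) := by
        rw [h1]
        exact integral_mono (integrable_eval _) h2 hpt
    _ ≤ fockN (2 ^ s * 2) F ^ 2 ^ s := fockN_pow_le s (by norm_num) F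
    _ = _ := by rw [hF, fockN_sum_fockMon, pow_succ]

end Hyper

section Kane

open Polynomial in
lemma logMahlerMeasure_eq_of_ne_zero {Q : Polynomial ℂ} (h : ∀ z : ℂ, ‖z‖ < 1 → Q.eval z ≠ 0) :
    Q.logMahlerMeasure = Real.log ‖Q.eval 0‖ := by
  rw [Polynomial.logMahlerMeasure_eq_log_MahlerMeasure,
    Polynomial.mahlerMeasure_eq_leadingCoeff_mul_prod_roots,
    (IsAlgClosed.splits Q).eval_eq_prod_roots, norm_mul]
  congr 2
  have hQ : Q ≠ 0 := by rintro rfl; exact h 0 (by simp) (by simp)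
  have e : ∀ s : Multiset ℂ, ‖s.prod‖ = (s.map fun z => ‖z‖).prod := fun s =>
    map_multiset_prod (normHom (α := ℂ)) s
  rw [e, Multiset.map_map]
  congr 1
  refine Multiset.map_congr rfl fun a ha => ?_
  have h1 : 1 ≤ ‖a‖ := by
    by_contra hcon
    exact h a (by linarith) ((Polynomial.mem_roots hQ).1 ha)
  simp [h1]

/-- A polynomial with given roots can be replaced by one without roots in the open disc. -/
lemma exists_outer_poly (s : Multiset ℂ) : ∃ Q : Polynomial ℂ,
    (∀ z : ℂ, ‖z‖ = 1 → ‖Q.eval z‖ = ‖(s.map fun a => Polynomial.X - Polynomial.C a).prod.eval z‖) ∧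
    (∀ z : ℂ, ‖z‖ < 1 → Q.eval z ≠ 0) ∧
    (∀ z : ℂ, ‖z‖ ≤ 1 → (z * (Polynomial.derivative Q).eval z *
      (starRingEnd ℂ) (Q.eval z)).re ≤ (s.card / 2 : ℝ) * ‖Q.eval z‖ ^ 2) ∧
    (∀ z : ℂ, ‖z‖ = 1 → (z * (Polynomial.derivative Q).eval z * (starRingEnd ℂ) (Q.eval z)).im =
      (z * (Polynomial.derivative (s.map fun a => Polynomial.X - Polynomial.C a).prod).eval z *
      (starRingEnd ℂ) ((s.map fun a => Polynomial.X - Polynomial.C a).prod.eval z)).im) := by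
  induction s using Multiset.induction_on with
  | empty => exact ⟨1, by simp, by simp, by simp, by simp⟩
  | cons a s ih =>
    obtain ⟨Q, h1, h2, h3, h4⟩ := ih
    set pr := (s.map fun a => Polynomial.X - Polynomial.C a).prod
    have key : ∃ φ : Polynomial ℂ,
        (∀ z : ℂ, ‖z‖ = 1 → ‖φ.eval z‖ ^ 2 = ‖z - a‖ ^ 2) ∧
        (∀ z : ℂ, ‖z‖ < 1 → φ.eval z ≠ 0) ∧
        (∀ z : ℂ, ‖z‖ ≤ 1 → (z * (Polynomial.derivative φ).eval z *
          (starRingEnd ℂ) (φ.eval z)).re ≤ (1 / 2 : ℝ) * ‖φ.eval z‖ ^ 2) ∧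
        (∀ z : ℂ, ‖z‖ = 1 → (z * (Polynomial.derivative φ).eval z *
          (starRingEnd ℂ) (φ.eval z)).im = (z * (starRingEnd ℂ) (z - a)).im) := by
      by_cases ha : 1 ≤ ‖a‖
      · refine ⟨Polynomial.X - Polynomial.C a, by simp, ?_, ?_, by simp⟩
        · intro z hz h0
          simp only [Polynomial.eval_sub, Polynomial.eval_X, Polynomial.eval_C, sub_eq_zero] at h0
          subst h0; linarith
        · intro z hz
          have e1 : ‖z‖ ^ 2 ≤ ‖a‖ ^ 2 := by gcongr; linarith
          rw [← Complex.normSq_eq_norm_sq, ← Complex.normSq_eq_norm_sq] at e1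
          rw [← Complex.normSq_eq_norm_sq]
          simp only [Complex.normSq_apply] at e1 ⊢
          simp
          nlinarith
      · refine ⟨1 - Polynomial.C ((starRingEnd ℂ) a) * Polynomial.X, ?_, ?_, ?_, ?_⟩
        · intro z hz
          have e1 : ‖z‖ ^ 2 = 1 := by rw [hz]; norm_num
          rw [← Complex.normSq_eq_norm_sq] at e1
          rw [← Complex.normSq_eq_norm_sq, ← Complex.normSq_eq_norm_sq]
          simp only [Complex.normSq_apply] at e1 ⊢
          simp
          linear_combination (a.re ^ 2 + a.im ^ 2 - 1) * e1
        · intro z hz h0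
          simp only [Polynomial.eval_sub, Polynomial.eval_X, Polynomial.eval_C, sub_eq_zero,
            Polynomial.eval_one, Polynomial.eval_mul] at h0
          have := congrArg norm h0
          rw [norm_mul, norm_one, Complex.norm_conj] at this
          push Not at ha
          nlinarith [norm_nonneg a, norm_nonneg z]
        · intro z hz
          have e1 : (‖a‖ * ‖z‖) ^ 2 ≤ 1 := by
            push Not at ha
            have : ‖a‖ * ‖z‖ ≤ 1 := by nlinarith [norm_nonneg a, norm_nonneg z]
            exact pow_le_one₀ (by positivity) this
          rw [mul_pow, ← Complex.normSq_eq_norm_sq, ← Complex.normSq_eq_norm_sq] at e1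
          rw [← Complex.normSq_eq_norm_sq]
          simp only [Complex.normSq_apply] at e1 ⊢
          simp
          nlinarith
        · intro z hz
          have e1 : ‖z‖ ^ 2 = 1 := by rw [hz]; norm_num
          rw [← Complex.normSq_eq_norm_sq] at e1
          simp only [Complex.normSq_apply] at e1 ⊢
          simp
          ring
    obtain ⟨φ, k1, k2, k3, k4⟩ := key
    have e : ∀ φ Q : Polynomial ℂ, ∀ z : ℂ, z * (Polynomial.derivative (φ * Q)).eval z *
        (starRingEnd ℂ) ((φ * Q).eval z) =
        (z * (Polynomial.derivative φ).eval z * (starRingEnd ℂ) (φ.eval z)) *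
          ((‖Q.eval z‖ ^ 2 : ℝ) : ℂ) +
        (z * (Polynomial.derivative Q).eval z * (starRingEnd ℂ) (Q.eval z)) *
          ((‖φ.eval z‖ ^ 2 : ℝ) : ℂ) := by
      intro φ Q z
      rw [← Complex.normSq_eq_norm_sq, ← Complex.normSq_eq_norm_sq, ← Complex.mul_conj,
        ← Complex.mul_conj, Polynomial.derivative_mul, Polynomial.eval_add, Polynomial.eval_mul,
        Polynomial.eval_mul, Polynomial.eval_mul, map_mul]
      ring
    refine ⟨φ * Q, ?_, ?_, ?_, ?_⟩
    · intro z hz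
      have := k1 z hz
      rw [sq_eq_sq₀ (norm_nonneg _) (norm_nonneg _)] at this
      rw [Polynomial.eval_mul, norm_mul, h1 z hz, this]
      simp [pr]
    · intro z hz
      rw [Polynomial.eval_mul]
      exact mul_ne_zero (k2 z hz) (h2 z hz)
    · intro z hz
      have a1 := h3 z hz
      have a2 := k3 z hz
      rw [e, Complex.add_re, Complex.re_mul_ofReal, Complex.re_mul_ofReal, Polynomial.eval_mul,
        norm_mul, Multiset.card_cons]
      push_cast
      have := mul_le_mul_of_nonneg_right a1 (sq_nonneg ‖φ.eval z‖)
      have := mul_le_mul_of_nonneg_right a2 (sq_nonneg ‖Q.eval z‖)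
      nlinarith
    · intro z hz
      rw [Multiset.map_cons, Multiset.prod_cons, e, e, Complex.add_im, Complex.im_mul_ofReal,
        Complex.im_mul_ofReal, Complex.add_im, Complex.im_mul_ofReal,
        Complex.im_mul_ofReal, h4 z hz, k4 z hz, k1 z hz, h1 z hz]
      simp [pr]

/-- One-dimensional logarithmic derivative estimate on the circle. -/
lemma lintegral_log_one_add_logDeriv_sq_le {m : ℕ} {Λ : ℝ} (hΛ : 0 < Λ) {P : Polynomial ℂ}
    (hP0 : P ≠ 0) (hP : P.natDegree ≤ 2 * m) (q q' : ℝ → ℝ)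
    (hq : ∀ θ, P.eval (circleMap 0 1 θ) = circleMap 0 1 (m * θ) * q θ)
    (hq' : ∀ θ, HasDerivAt q (q' θ) θ) :
    ∫⁻ θ in Set.Ioc 0 (2 * Real.pi), ENNReal.ofReal (Real.log (1 + (q' θ) ^ 2 / (Λ * q θ) ^ 2)) ≤
      ENNReal.ofReal (2 * Real.pi * (2 * m / Λ)) := by
  obtain ⟨Q₀, h1, h2, h3, h4⟩ := exists_outer_poly P.roots
  have hsplit := (IsAlgClosed.splits P).eq_prod_roots
  set c := P.leadingCoeff with hc
  have hc0 : c ≠ 0 := by rwa [hc, Polynomial.leadingCoeff_ne_zero]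
  set Q := Polynomial.C c * Q₀ with hQ
  have hcard : (P.roots.card : ℝ) ≤ 2 * m := by
    exact_mod_cast (Polynomial.card_roots' P).trans hP
  set pr := (P.roots.map fun a => Polynomial.X - Polynomial.C a).prod with hpr
  have hQe : ∀ z, z * (Polynomial.derivative Q).eval z * (starRingEnd ℂ) (Q.eval z) =
      (z * (Polynomial.derivative Q₀).eval z * (starRingEnd ℂ) (Q₀.eval z)) *
        ((‖c‖ ^ 2 : ℝ) : ℂ) := by
    intro z
    rw [hQ, ← Complex.normSq_eq_norm_sq, ← Complex.mul_conj]
    simp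
    ring
  have hPe : ∀ z, z * (Polynomial.derivative P).eval z * (starRingEnd ℂ) (P.eval z) =
      (z * (Polynomial.derivative pr).eval z * (starRingEnd ℂ) (pr.eval z)) *
        ((‖c‖ ^ 2 : ℝ) : ℂ) := by
    intro z
    rw [hsplit, ← Complex.normSq_eq_norm_sq, ← Complex.mul_conj]
    simp
    ring
  have g1 : ∀ z : ℂ, ‖z‖ = 1 → ‖Q.eval z‖ = ‖P.eval z‖ := by
    intro z hz
    rw [hsplit, hQ, Polynomial.eval_mul, Polynomial.eval_mul, norm_mul, norm_mul, h1 z hz]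
  have g2 : ∀ z : ℂ, ‖z‖ < 1 → Q.eval z ≠ 0 := by
    intro z hz
    rw [hQ, Polynomial.eval_mul, Polynomial.eval_C]
    exact mul_ne_zero hc0 (h2 z hz)
  have g3 : ∀ z : ℂ, ‖z‖ ≤ 1 → (z * (Polynomial.derivative Q).eval z *
      (starRingEnd ℂ) (Q.eval z)).re ≤ m * ‖Q.eval z‖ ^ 2 := by
    intro z hz
    rw [hQe, Complex.re_mul_ofReal, hQ, Polynomial.eval_mul, Polynomial.eval_C, norm_mul, mul_pow]
    have := mul_le_mul_of_nonneg_right (h3 z hz) (sq_nonneg ‖c‖)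
    have h5 : (P.roots.card / 2 : ℝ) * ‖Q₀.eval z‖ ^ 2 * ‖c‖ ^ 2 ≤
        m * ‖Q₀.eval z‖ ^ 2 * ‖c‖ ^ 2 := by
      gcongr; linarith
    linarith
  have g4 : ∀ z : ℂ, ‖z‖ = 1 →
      (z * (Polynomial.derivative Q).eval z * (starRingEnd ℂ) (Q.eval z)).im =
      (z * (Polynomial.derivative P).eval z * (starRingEnd ℂ) (P.eval z)).im := by
    intro z hz
    rw [hQe, hPe, Complex.im_mul_ofReal, Complex.im_mul_ofReal, h4 z hz]
  set T : Polynomial ℂ := Polynomial.C ((1 + m / Λ : ℝ) : ℂ) * Q -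
    Polynomial.C ((Λ⁻¹ : ℝ) : ℂ) * (Polynomial.X * Polynomial.derivative Q) with hT
  have hTe : ∀ z, T.eval z * (starRingEnd ℂ) (Q.eval z) =
      ((1 + m / Λ : ℝ) : ℂ) * ((‖Q.eval z‖ ^ 2 : ℝ) : ℂ) - ((Λ⁻¹ : ℝ) : ℂ) *
        (z * (Polynomial.derivative Q).eval z * (starRingEnd ℂ) (Q.eval z)) := by
    intro z
    rw [← Complex.normSq_eq_norm_sq, ← Complex.mul_conj, hT]
    simp
    ring
  have hTre : ∀ z : ℂ, ‖z‖ ≤ 1 → ‖Q.eval z‖ ^ 2 ≤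
      (T.eval z * (starRingEnd ℂ) (Q.eval z)).re := by
    intro z hz
    rw [hTe, Complex.sub_re, Complex.re_ofReal_mul, Complex.re_ofReal_mul, Complex.ofReal_re]
    have := mul_le_mul_of_nonneg_left (g3 z hz) (inv_nonneg.2 hΛ.le)
    have e : (1 + m / Λ) * ‖Q.eval z‖ ^ 2 = ‖Q.eval z‖ ^ 2 + Λ⁻¹ * (m * ‖Q.eval z‖ ^ 2) := by
      field_simp
    linarith
  have hT0 : ∀ z : ℂ, ‖z‖ < 1 → T.eval z ≠ 0 := by
    intro z hz h0
    have := hTre z hz.le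
    rw [h0, zero_mul, Complex.zero_re] at this
    have h5 := norm_pos_iff.2 (g2 z hz)
    nlinarith
  set b : ℝ → ℝ := fun θ => 2 * (Real.log ‖T.eval (circleMap 0 1 θ)‖ -
    Real.log ‖Q.eval (circleMap 0 1 θ)‖) with hb
  have hcirc : ∀ θ, ‖circleMap 0 1 θ‖ = 1 := fun θ => by simp
  have hpt : ∀ θ, P.eval (circleMap 0 1 θ) ≠ 0 → 0 ≤ b θ ∧
      Real.log (1 + (q' θ) ^ 2 / (Λ * q θ) ^ 2) ≤ b θ := by
    intro θ hθ
    set z := circleMap 0 1 θ with hz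
    have hz1 := hcirc θ
    rw [← hz] at hz1
    have hq0 : q θ ≠ 0 := by
      intro h; apply hθ; rw [hq, h]; simp
    have hder : z * (Polynomial.derivative P).eval z = ((m : ℂ) * q θ - Complex.I * q' θ) *
        circleMap 0 1 (m * θ) := by
      have d1 : HasDerivAt (fun θ : ℝ => P.eval (circleMap 0 1 θ))
          ((Polynomial.derivative P).eval z * (circleMap 0 1 θ * Complex.I)) θ := by
        have := (P.hasDerivAt (circleMap 0 1 θ)).comp θ (hasDerivAt_circleMap 0 1 θ)
        exact this
      have d2 : HasDerivAt (fun θ : ℝ => circleMap 0 1 (m * θ) * (q θ : ℂ))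
          ((m : ℂ) * (circleMap 0 1 (m * θ) * Complex.I) * q θ + circleMap 0 1 (m * θ) * q' θ)
          θ := by
        have e1 : HasDerivAt (fun θ : ℝ => (m : ℝ) * θ) m θ := by
          simpa using (hasDerivAt_id θ).const_mul (m : ℝ)
        have e2 := (hasDerivAt_circleMap 0 1 (m * θ)).scomp θ e1
        have e3 := e2.mul (hq' θ).ofReal_comp
        convert! e3 using 1
      have := d1.unique (by simpa only [hq] using d2)
      rw [← hz] at this
      linear_combination -Complex.I * this + (z * (Polynomial.derivative P).eval z - 
        circleMap 0 1 (m * θ) * m * q θ) * Complex.I_mul_I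
    have hn : (circleMap 0 1 (m * θ)) * (starRingEnd ℂ) (circleMap 0 1 (m * θ)) = 1 := by
      rw [Complex.mul_conj, Complex.normSq_eq_norm_sq, hcirc]; simp
    have him : (z * (Polynomial.derivative P).eval z * (starRingEnd ℂ) (P.eval z)).im =
        - (q θ * q' θ) := by
      have : z * (Polynomial.derivative P).eval z * (starRingEnd ℂ) (P.eval z) =
          ((m * q θ * q θ : ℝ) : ℂ) - ((q θ * q' θ : ℝ) : ℂ) * Complex.I := by
        rw [hder, hq, map_mul, Complex.conj_ofReal]
        push_cast
        linear_combination ((m : ℂ) * q θ - Complex.I * q' θ) * q θ * hn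
      rw [this]; simp
    have hQn : ‖Q.eval z‖ ^ 2 = q θ ^ 2 := by
      rw [g1 z hz1, hq, norm_mul, hcirc, one_mul, Complex.norm_real, Real.norm_eq_abs, sq_abs]
    have hQpos : 0 < ‖Q.eval z‖ := by
      rw [g1 z hz1]; exact norm_pos_iff.2 hθ
    have hTim : (T.eval z * (starRingEnd ℂ) (Q.eval z)).im = Λ⁻¹ * (q θ * q' θ) := by
      rw [hTe, Complex.sub_im, Complex.im_ofReal_mul, Complex.im_ofReal_mul, Complex.ofReal_im,
        g4 z hz1, him]
      ring
    have hTn : (1 + (q' θ) ^ 2 / (Λ * q θ) ^ 2) * ‖Q.eval z‖ ^ 2 ≤ ‖T.eval z‖ ^ 2 := by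
      have e1 : ‖T.eval z‖ ^ 2 * ‖Q.eval z‖ ^ 2 =
          (T.eval z * (starRingEnd ℂ) (Q.eval z)).re ^ 2 +
          (T.eval z * (starRingEnd ℂ) (Q.eval z)).im ^ 2 := by
        rw [← mul_pow, ← Complex.norm_conj (Q.eval z), ← norm_mul, ← Complex.normSq_eq_norm_sq,
          Complex.normSq_apply]
        ring
      have e2 : (‖Q.eval z‖ ^ 2) ^ 2 ≤ (T.eval z * (starRingEnd ℂ) (Q.eval z)).re ^ 2 :=
        pow_le_pow_left₀ (by positivity) (hTre z hz1.le) 2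
      have e3 : ((1 + (q' θ) ^ 2 / (Λ * q θ) ^ 2) * ‖Q.eval z‖ ^ 2) * ‖Q.eval z‖ ^ 2 =
          (‖Q.eval z‖ ^ 2) ^ 2 + (Λ⁻¹ * (q θ * q' θ)) ^ 2 := by
        rw [hQn]
        field_simp
      rw [hTim] at e1
      refine le_of_mul_le_mul_right ?_ (pow_pos hQpos 2)
      rw [e1, e3]
      linarith
    have hTpos : 0 < ‖T.eval z‖ := by
      have : 0 < ‖T.eval z‖ ^ 2 := lt_of_lt_of_le (by positivity) hTn
      exact lt_of_le_of_ne (norm_nonneg _) fun h => by rw [← h] at this; norm_num at this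
    have hpos : 1 ≤ 1 + (q' θ) ^ 2 / (Λ * q θ) ^ 2 := by
      have : 0 ≤ (q' θ) ^ 2 / (Λ * q θ) ^ 2 := by positivity
      linarith
    have hlog := Real.log_le_log (by positivity) hTn
    rw [Real.log_mul (by positivity) (by positivity), Real.log_pow, Real.log_pow] at hlog
    have hl0 := Real.log_nonneg hpos
    have hbz : b θ = 2 * (Real.log ‖T.eval z‖ - Real.log ‖Q.eval z‖) := rfl
    push_cast at hlog
    constructor <;> linarith
  have hae : ∀ᵐ θ ∂(volume.restrict (Set.Ioc 0 (2 * Real.pi))),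
      P.eval (circleMap 0 1 θ) ≠ 0 := by
    refine ae_restrict_of_ae ?_
    have : (circleMap 0 1 ⁻¹' (P.roots.toFinset : Set ℂ)).Countable :=
      (Finset.countable_toSet _).preimage_circleMap 0 one_ne_zero
    refine measure_mono_null ?_ (this.measure_zero volume)
    intro θ hθ
    simp only [Set.mem_compl_iff, Set.mem_ofPred_eq, not_not] at hθ
    simp [hP0, hθ]
  have hint : IntervalIntegrable b volume 0 (2 * Real.pi) :=
    (T.intervalIntegrable_mahlerMeasure.sub Q.intervalIntegrable_mahlerMeasure).const_mul 2
  have hint2 : ∫ θ in (0:ℝ)..(2 * Real.pi), b θ = 2 * Real.pi * (2 * Real.log (1 + m / Λ)) := by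
    have m1 := logMahlerMeasure_eq_of_ne_zero hT0
    have m2 := logMahlerMeasure_eq_of_ne_zero g2
    rw [Polynomial.logMahlerMeasure_def, Real.circleAverage_def, smul_eq_mul] at m1 m2
    have hpi := Real.pi_pos
    have n1 := (inv_mul_eq_iff_eq_mul₀ (by positivity)).1 m1
    have n2 := (inv_mul_eq_iff_eq_mul₀ (by positivity)).1 m2
    rw [hb, intervalIntegral.integral_const_mul, intervalIntegral.integral_sub
      T.intervalIntegrable_mahlerMeasure Q.intervalIntegrable_mahlerMeasure, n1, n2]
    have hT00 : T.eval 0 = ((1 + m / Λ : ℝ) : ℂ) * Q.eval 0 := by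
      rw [hT]; simp
    have hpos : 0 < 1 + m / Λ := by positivity
    rw [hT00, norm_mul, Complex.norm_real, Real.norm_eq_abs, abs_of_pos hpos,
      Real.log_mul hpos.ne' (norm_ne_zero_iff.2 (g2 0 (by simp)))]
    ring
  have hpi := Real.pi_pos
  calc _ ≤ ∫⁻ θ in Set.Ioc 0 (2 * Real.pi), ENNReal.ofReal (b θ) := by
        refine lintegral_mono_ae ?_
        filter_upwards [hae] with θ hθ
        exact ENNReal.ofReal_le_ofReal (hpt θ hθ).2
    _ = ENNReal.ofReal (∫ θ in Set.Ioc 0 (2 * Real.pi), b θ) := by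
        rw [ofReal_integral_eq_lintegral_ofReal]
        · exact (intervalIntegrable_iff_integrableOn_Ioc_of_le (by positivity)).1 hint
        · filter_upwards [hae] with θ hθ
          exact (hpt θ hθ).1
    _ ≤ _ := by
        rw [← intervalIntegral.integral_of_le (by positivity), hint2]
        refine ENNReal.ofReal_le_ofReal ?_
        have : Real.log (1 + m / Λ) ≤ m / Λ := by
          have := Real.log_le_sub_one_of_pos (show 0 < 1 + m / Λ by positivity)
          linarith
        have : 2 * Real.log (1 + m / Λ) ≤ 2 * m / Λ := by
          rw [mul_div_assoc]; linarith
        gcongr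

end Kane

section Rotation

variable {ι : Type*} [Fintype ι]

instance isGaussian_gaussPi : IsGaussian (gaussPi ι) := by
  have h1 : iIndepFun (fun (i : ι) (ω : ι → ℝ) => ω i) (gaussPi ι) :=
    iIndepFun_pi (X := fun _ => id) fun _ => aemeasurable_id
  have h2 : ∀ i : ι, HasGaussianLaw (fun ω : ι → ℝ => ω i) (gaussPi ι) := by
    intro i
    constructor
    have := (measurePreserving_eval (fun _ : ι => gaussianReal 0 1) i).map_eq
    rw [show (fun ω : ι → ℝ => ω i) = Function.eval i from rfl, this]
    infer_instance
  have := (h1.hasGaussianLaw h2).isGaussian_map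
  simpa using this

lemma integral_coord_gaussPi (i : ι) : ∫ x, x i ∂(gaussPi ι) = 0 := by
  have := (measurePreserving_eval (fun _ : ι => gaussianReal 0 1) i).map_eq
  have h2 : ∫ t, t ∂(gaussianReal 0 1) = ∫ x : ι → ℝ, x i ∂(gaussPi ι) := by
    rw [← this, integral_map (measurable_pi_apply i).aemeasurable (by fun_prop)]
  rw [← h2]; simp

lemma integral_dual_gaussPi (L : StrongDual ℝ (ι → ℝ)) : ∫ x, L x ∂(gaussPi ι) = 0 := by
  classical
  have e : ∀ x : ι → ℝ, L x = ∑ i, x i * L (Pi.single i 1) := by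
    intro x
    conv_lhs => rw [pi_eq_sum_univ' x]
    rw [map_sum]
    exact Finset.sum_congr rfl fun i _ => map_smul L _ _
  rw [integral_congr_ae (Filter.Eventually.of_forall e)]
  rw [integral_finsetSum]
  · refine Finset.sum_eq_zero fun i _ => ?_
    rw [integral_mul_const, integral_coord_gaussPi, zero_mul]
  · intro i _
    exact integrable_of_eval (X i * C (L (Pi.single i 1))) (by simp)

lemma measurePreserving_rotation_gaussPi (θ : ℝ) :
    MeasurePreserving (fun p : (ι → ℝ) × (ι → ℝ) =>
      (Real.cos θ • p.1 + Real.sin θ • p.2, -Real.sin θ • p.1 + Real.cos θ • p.2))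
      ((gaussPi ι).prod (gaussPi ι)) ((gaussPi ι).prod (gaussPi ι)) := by
  refine ⟨by fun_prop, ?_⟩
  exact IsGaussian.map_rotation_eq_self_of_forall_strongDual_eq_zero integral_dual_gaussPi θ

lemma gaussPi_map_dot (v : ι → ℝ) :
    (gaussPi ι).map (fun ξ => ∑ i, ξ i * v i) = gaussianReal 0 (∑ i, v i ^ 2).toNNReal := by
  classical
  set L : StrongDual ℝ (ι → ℝ) := ∑ i, v i • ContinuousLinearMap.proj i with hL
  have hLa : ∀ ξ, L ξ = ∑ i, ξ i * v i := by
    intro ξ; simp [hL, mul_comm]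
  have h1 := IsGaussian.map_eq_gaussianReal (μ := gaussPi ι) L
  rw [integral_dual_gaussPi, variance_of_integral_eq_zero (by fun_prop) (integral_dual_gaussPi L)]
    at h1
  have h2 : ∫ ξ, L ξ ^ 2 ∂(gaussPi ι) = ∑ i, v i ^ 2 := by
    have e : ∫ ξ, L ξ ^ 2 ∂(gaussPi ι) =
        gE (∑ i, v i • (X i * ∑ j, v j • X j : MvPolynomial ι ℝ)) := by
      rw [gE]
      refine integral_congr_ae (Filter.Eventually.of_forall fun ξ => ?_)
      simp [hLa, sq, smul_eval, Finset.sum_mul, mul_comm, mul_assoc]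
    rw [e, ← gEl_apply, map_sum]
    refine Finset.sum_congr rfl fun i _ => ?_
    rw [map_smul, gEl_apply, gE_X_mul, map_sum]
    have : ∑ j, pderiv i (v j • X j : MvPolynomial ι ℝ) = v i • 1 := by
      rw [Finset.sum_eq_single i]
      · simp
      · intro j _ hj
        simp [pderiv_X_of_ne hj]
      · simp
    rw [this, gE_smul, gE_one, smul_eq_mul]; ring
  rw [h2] at h1
  rw [← h1]
  congr 1
  exact (funext hLa).symm

end Rotation

section Directional

variable {ι : Type*} [Fintype ι]

/-- The derivative of `f` at `x` in direction `y`. -/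
noncomputable def dirD (f : MvPolynomial ι ℝ) (x y : ι → ℝ) : ℝ :=
  ∑ i, y i * eval x (pderiv i f)

lemma hasDerivAt_eval_comp (f : MvPolynomial ι ℝ) {u u' : ℝ → ι → ℝ} {t : ℝ}
    (h : ∀ i, HasDerivAt (fun s => u s i) (u' t i) t) :
    HasDerivAt (fun s => eval (u s) f) (dirD f (u t) (u' t)) t := by
  classical
  induction f using MvPolynomial.induction_on with
  | C a => simpa [dirD] using hasDerivAt_const t a
  | add p q hp hq =>
    have := hp.add hq
    convert! this using 1
    · ext s; simp
    · simp [dirD, mul_add, Finset.sum_add_distrib]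
  | mul_X p i hp =>
    have := hp.mul (h i)
    convert! this using 1
    · ext s; simp
    · simp only [dirD, Derivation.leibniz, pderiv_X, smul_eq_mul, map_add, map_mul, eval_X,
        mul_add, Finset.sum_add_distrib]
      rw [add_comm, Finset.sum_mul]
      congr 1
      · exact Finset.sum_congr rfl fun j _ => by ring
      · rw [Finset.sum_eq_single i]
        · simp; ring
        · intro j _ hj
          simp [Pi.single_eq_of_ne hj.symm]
        · simp

lemma exists_circle_poly (f : MvPolynomial ι ℝ) {m : ℕ} (hf : f.totalDegree ≤ m)
    (x y : ι → ℝ) : ∃ P : Polynomial ℂ, P.natDegree ≤ 2 * m ∧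
      ∀ θ : ℝ, P.eval (circleMap 0 1 θ) =
        circleMap 0 1 (m * θ) * (eval (Real.cos θ • x + Real.sin θ • y) f : ℝ) := by
  classical
  refine ⟨∑ a ∈ f.support, Polynomial.C ((f.coeff a : ℝ) : ℂ) * (Polynomial.X ^ (m - ∑ i, a i) *
    ∏ i, (Polynomial.C (x i / 2 : ℂ) * (Polynomial.X ^ 2 + 1) +
      Polynomial.C (y i / (2 * Complex.I) : ℂ) * (Polynomial.X ^ 2 - 1)) ^ a i), ?_, ?_⟩
  · refine Polynomial.natDegree_sum_le_of_forall_le _ _ fun a ha => ?_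
    have hd : ∑ i, a i ≤ m := by
      refine le_trans ?_ hf
      have := le_totalDegree ha
      rwa [Finsupp.sum_fintype _ _ (by simp)] at this
    refine (Polynomial.natDegree_C_mul_le _ _).trans ?_
    refine (Polynomial.natDegree_mul_le_of_le (Polynomial.natDegree_X_pow_le _)
      ((Polynomial.natDegree_prod_le _ _).trans (Finset.sum_le_sum (g := fun i => a i * 2)
        fun i _ => ?_))).trans ?_
    · refine Polynomial.natDegree_pow_le_of_le _ ?_
      compute_degree
    · rw [← Finset.sum_mul]; omega
  · intro θ
    set z := circleMap 0 1 θ with hz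
    have hz' : z = Complex.cos θ + Complex.sin θ * Complex.I := by
      rw [hz, circleMap]; simp [Complex.exp_mul_I]
    have hzm : circleMap 0 1 (m * θ) = z ^ m := by
      rw [hz, circleMap, circleMap]
      simp [← Complex.exp_nat_mul]
      ring_nf
    have hcs : Complex.cos θ ^ 2 + Complex.sin θ ^ 2 = 1 := Complex.cos_sq_add_sin_sq _
    have hfac : ∀ i, (x i / 2 : ℂ) * (z ^ 2 + 1) + (y i / (2 * Complex.I) : ℂ) * (z ^ 2 - 1) =
        z * ((Real.cos θ * x i + Real.sin θ * y i : ℝ) : ℂ) := by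
      intro i
      have e1 : z ^ 2 + 1 = 2 * (z * Complex.cos θ) := by
        rw [hz']
        linear_combination (Complex.sin θ) ^ 2 * Complex.I_sq - hcs
      have e2 : z ^ 2 - 1 = (2 * Complex.I) * (z * Complex.sin θ) := by
        rw [hz']
        linear_combination -(Complex.sin θ) ^ 2 * Complex.I_sq + hcs
      rw [e1, e2]
      have : (2 * Complex.I : ℂ) ≠ 0 := by simp
      push_cast
      field_simp
    rw [eval_eq_sum_prod, hzm, Polynomial.eval_finsetSum, Complex.ofReal_sum, Finset.mul_sum]
    refine Finset.sum_congr rfl fun a ha => ?_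
    have hd : ∑ i, a i ≤ m := by
      refine le_trans ?_ hf
      have := le_totalDegree ha
      rwa [Finsupp.sum_fintype _ _ (by simp)] at this
    simp only [Polynomial.eval_mul, Polynomial.eval_C, Polynomial.eval_pow, Polynomial.eval_X,
      Polynomial.eval_prod, Polynomial.eval_add, Polynomial.eval_sub, Polynomial.eval_one, hfac,
      Pi.add_apply, Pi.smul_apply, smul_eq_mul]
    rw [Finset.prod_congr rfl fun i _ => mul_pow _ _ _, Finset.prod_mul_distrib,
      Finset.prod_pow_eq_pow_sum]
    push_cast
    have : z ^ m = z ^ (m - ∑ i, a i) * z ^ (∑ i, a i) := by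
      rw [← pow_add]; congr 1; omega
    rw [this]; ring

/-- The integrand of the logarithmic derivative estimate. -/
noncomputable def logDerivFun (Λ : ℝ) (f : MvPolynomial ι ℝ) (x y : ι → ℝ) : ENNReal :=
  ENNReal.ofReal (Real.log (1 + dirD f x y ^ 2 / (Λ * eval x f) ^ 2))

lemma lintegral_circle_logDerivFun_le {m : ℕ} {Λ : ℝ} (hΛ : 0 < Λ) (f : MvPolynomial ι ℝ)
    (hf : f.totalDegree ≤ m) (x y : ι → ℝ) :
    ∫⁻ θ in Set.Ioc 0 (2 * Real.pi), logDerivFun Λ f (Real.cos θ • x + Real.sin θ • y)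
      (-Real.sin θ • x + Real.cos θ • y) ≤ ENNReal.ofReal (2 * Real.pi * (2 * m / Λ)) := by
  obtain ⟨P, hP, hPq⟩ := exists_circle_poly f hf x y
  by_cases h0 : P = 0
  · have : ∀ θ : ℝ, eval (Real.cos θ • x + Real.sin θ • y) f = 0 := by
      intro θ
      have := hPq θ
      rw [h0, Polynomial.eval_zero, eq_comm, mul_eq_zero] at this
      rcases this with h | h
      · have h2 : ‖circleMap 0 1 (m * θ)‖ = 1 := by simp
        rw [h] at h2; simp at h2
      · exact_mod_cast h
    simp [logDerivFun, this]
  · refine lintegral_log_one_add_logDeriv_sq_le hΛ h0 hP _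
      (fun θ => dirD f (Real.cos θ • x + Real.sin θ • y) (-Real.sin θ • x + Real.cos θ • y)) hPq
      fun θ => ?_
    refine hasDerivAt_eval_comp f (u := fun θ => Real.cos θ • x + Real.sin θ • y)
      (u' := fun θ => -Real.sin θ • x + Real.cos θ • y) fun i => ?_
    exact ((Real.hasDerivAt_cos θ).mul_const (x i)).add ((Real.hasDerivAt_sin θ).mul_const (y i))

@[fun_prop]
lemma continuous_eval_poly (f : MvPolynomial ι ℝ) : Continuous fun x : ι → ℝ => eval x f :=
  MvPolynomial.continuous_eval f

lemma measurable_logDerivFun (Λ : ℝ) (f : MvPolynomial ι ℝ) :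
    Measurable fun p : (ι → ℝ) × (ι → ℝ) => logDerivFun Λ f p.1 p.2 := by
  unfold logDerivFun dirD
  have h : ∀ g : MvPolynomial ι ℝ, Measurable fun p : (ι → ℝ) × (ι → ℝ) => eval p.1 g := fun g =>
    (continuous_eval_poly g).measurable.comp measurable_fst
  refine (Real.measurable_log.comp ?_).ennreal_ofReal
  refine measurable_const.add (Measurable.div ?_ ?_)
  · refine (Finset.measurable_sum _ fun i _ => ?_).pow_const 2
    exact ((measurable_pi_apply i).comp measurable_snd).mul (h _)
  · exact (measurable_const.mul (h f)).pow_const 2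

/-- Kane's logarithmic derivative estimate. -/
theorem lintegral_logDerivFun_le {m : ℕ} {Λ : ℝ} (hΛ : 0 < Λ) (f : MvPolynomial ι ℝ)
    (hf : f.totalDegree ≤ m) :
    ∫⁻ p, logDerivFun Λ f p.1 p.2 ∂((gaussPi ι).prod (gaussPi ι)) ≤
      ENNReal.ofReal (2 * m / Λ) := by
  set μ := (gaussPi ι).prod (gaussPi ι)
  set J := ∫⁻ p, logDerivFun Λ f p.1 p.2 ∂μ with hJ
  have hm := measurable_logDerivFun Λ f
  have hrot : ∀ θ : ℝ, ∫⁻ p, logDerivFun Λ f (Real.cos θ • p.1 + Real.sin θ • p.2)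
      (-Real.sin θ • p.1 + Real.cos θ • p.2) ∂μ = J := fun θ =>
    (measurePreserving_rotation_gaussPi θ).lintegral_comp hm
  have hpi := Real.pi_pos
  have h1 : ENNReal.ofReal (2 * Real.pi) * J ≤ ENNReal.ofReal (2 * Real.pi) *
      ENNReal.ofReal (2 * m / Λ) := by
    calc ENNReal.ofReal (2 * Real.pi) * J
        = ∫⁻ θ in Set.Ioc 0 (2 * Real.pi), ∫⁻ p, logDerivFun Λ f
            (Real.cos θ • p.1 + Real.sin θ • p.2) (-Real.sin θ • p.1 + Real.cos θ • p.2) ∂μ := by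
          simp_rw [hrot]
          simp [mul_comm]
      _ = ∫⁻ p, (∫⁻ θ in Set.Ioc 0 (2 * Real.pi), logDerivFun Λ f
            (Real.cos θ • p.1 + Real.sin θ • p.2) (-Real.sin θ • p.1 + Real.cos θ • p.2)) ∂μ := by
          rw [lintegral_lintegral_swap]
          refine Measurable.aemeasurable ?_
          exact hm.comp (f := fun q : ℝ × ((ι → ℝ) × (ι → ℝ)) =>
            (Real.cos q.1 • q.2.1 + Real.sin q.1 • q.2.2,
              -Real.sin q.1 • q.2.1 + Real.cos q.1 • q.2.2)) (by fun_prop)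
      _ ≤ ∫⁻ p, ENNReal.ofReal (2 * Real.pi * (2 * m / Λ)) ∂μ :=
          lintegral_mono fun p => lintegral_circle_logDerivFun_le hΛ f hf p.1 p.2
      _ = _ := by
          rw [lintegral_const, measure_univ, mul_one, ENNReal.ofReal_mul (by positivity)]
  refine (ENNReal.mul_le_mul_iff_right ?_ ENNReal.ofReal_ne_top).1 h1
  simp [hpi]

end Directional

section LogGaussian

variable {ι : Type*} [Fintype ι]

lemma lintegral_circle_indicator_le (f : MvPolynomial ι ℝ) (x y : ι → ℝ) :
    ∫⁻ θ in Set.Ioc 0 (2 * Real.pi), {x | eval x f = 0}.indicator (1 : (ι → ℝ) → ENNReal)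
      (Real.cos θ • x + Real.sin θ • y) ≤
    ENNReal.ofReal (2 * Real.pi) * ({x | eval x f = 0}.indicator 1 x *
      {x | eval x f = 0}.indicator 1 y) := by
  obtain ⟨P, -, hPq⟩ := exists_circle_poly f le_rfl x y
  have hne : ∀ t : ℝ, circleMap 0 1 t ≠ 0 := fun t h => by
    have h2 : ‖circleMap 0 1 t‖ = 1 := by simp
    rw [h] at h2; simp at h2
  by_cases h0 : P = 0
  · have hz : ∀ θ : ℝ, eval (Real.cos θ • x + Real.sin θ • y) f = 0 := by
      intro θ
      have := hPq θ
      rw [h0, Polynomial.eval_zero, eq_comm, mul_eq_zero] at this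
      exact_mod_cast this.resolve_left (hne _)
    have hx : eval x f = 0 := by simpa using hz 0
    have hy : eval y f = 0 := by simpa using hz (Real.pi / 2)
    simp [hz, hx, hy]
  · refine le_of_eq_of_le ?_ (zero_le)
    refine (lintegral_congr_ae ?_).trans lintegral_zero
    refine ae_restrict_of_ae ?_
    have : (circleMap 0 1 ⁻¹' (P.roots.toFinset : Set ℂ)).Countable :=
      (Finset.countable_toSet _).preimage_circleMap 0 one_ne_zero
    refine measure_mono_null ?_ (this.measure_zero volume)
    intro θ hθ
    simp only [Set.mem_compl_iff, Set.mem_ofPred_eq] at hθ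
    have hθ' : eval (Real.cos θ • x + Real.sin θ • y) f = 0 := by
      by_contra hcon
      exact hθ (by simp [hcon])
    simp [h0, hPq, hθ']

/-- The zero set of a nonzero polynomial is Gaussian-null. -/
lemma ae_eval_ne_zero {f : MvPolynomial ι ℝ} (hf : f ≠ 0) :
    ∀ᵐ x ∂(gaussPi ι), eval x f ≠ 0 := by
  classical
  set Z : Set (ι → ℝ) := {x | eval x f = 0} with hZ
  have hZm : MeasurableSet Z := (continuous_eval_poly f).measurable (measurableSet_singleton 0)
  set p := gaussPi ι Z with hp
  have hg : Measurable (Z.indicator (1 : (ι → ℝ) → ENNReal)) := measurable_one.indicator hZm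
  have hpi := Real.pi_pos
  have h1 : ENNReal.ofReal (2 * Real.pi) * p ≤ ENNReal.ofReal (2 * Real.pi) * (p * p) := by
    calc ENNReal.ofReal (2 * Real.pi) * p
        = ∫⁻ θ in Set.Ioc 0 (2 * Real.pi), ∫⁻ q, Z.indicator 1
            (Real.cos θ • q.1 + Real.sin θ • q.2) ∂((gaussPi ι).prod (gaussPi ι)) := by
          have : ∀ θ : ℝ, ∫⁻ q, Z.indicator 1
            (Real.cos θ • q.1 + Real.sin θ • q.2) ∂((gaussPi ι).prod (gaussPi ι)) = p := by
            intro θ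
            have e := (measurePreserving_rotation_gaussPi (ι := ι) θ).lintegral_comp
              (f := fun q => Z.indicator 1 q.1) (hg.comp measurable_fst)
            rw [e, lintegral_prod (fun q : (ι → ℝ) × (ι → ℝ) => Z.indicator 1 q.1)
              (hg.comp measurable_fst).aemeasurable]
            simp [lintegral_indicator_one hZm, hp]
          simp_rw [this]
          simp [mul_comm]
      _ = ∫⁻ q, (∫⁻ θ in Set.Ioc 0 (2 * Real.pi), Z.indicator 1
            (Real.cos θ • q.1 + Real.sin θ • q.2)) ∂((gaussPi ι).prod (gaussPi ι)) := by
          rw [lintegral_lintegral_swap]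
          refine Measurable.aemeasurable ?_
          exact hg.comp (f := fun q : ℝ × ((ι → ℝ) × (ι → ℝ)) =>
            (Real.cos q.1 • q.2.1 + Real.sin q.1 • q.2.2)) (by fun_prop)
      _ ≤ ∫⁻ q, ENNReal.ofReal (2 * Real.pi) * (Z.indicator 1 q.1 * Z.indicator 1 q.2)
            ∂((gaussPi ι).prod (gaussPi ι)) :=
          lintegral_mono fun q => lintegral_circle_indicator_le f q.1 q.2
      _ = _ := by
          have hgm : Measurable fun q : (ι → ℝ) × (ι → ℝ) =>
              Z.indicator (1 : (ι → ℝ) → ENNReal) q.1 * Z.indicator 1 q.2 :=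
            (hg.comp measurable_fst).mul (hg.comp measurable_snd)
          rw [lintegral_const_mul _ hgm,
            lintegral_prod_mul hg.aemeasurable hg.aemeasurable, lintegral_indicator_one hZm]
  have h2 : p ≤ p * p := by
    refine (ENNReal.mul_le_mul_iff_right ?_ ENNReal.ofReal_ne_top).1 h1
    simp [hpi]
  have hpt : p ≠ ⊤ := measure_ne_top _ _
  have hp0 : p = 0 := by
    by_contra hne
    have h3 : 1 ≤ p := by
      rw [← ENNReal.mul_le_mul_iff_right hne hpt, mul_one]; exact h2
    have h4 : p = 1 := le_antisymm prob_le_one h3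
    have h5 : ∀ᵐ x ∂(gaussPi ι), eval x f = 0 := (prob_compl_eq_zero_iff hZm).2 h4
    have h6 : ∀ α, hcf f α = 0 := by
      intro α
      rw [hcf, gE, integral_eq_zero_of_ae]
      filter_upwards [h5] with x hx
      simp [hx]
    apply hf
    rw [eq_sum_hermPoly (le_refl f.totalDegree)]
    simp [h6]
  rw [ae_iff]
  simpa using hp0

lemma gaussianReal_le_volume : gaussianReal 0 1 ≤ volume := by
  rw [gaussianReal_of_var_ne_zero _ one_ne_zero]
  calc volume.withDensity (gaussianPDF 0 1) ≤ volume.withDensity 1 := by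
        refine withDensity_mono (Filter.Eventually.of_forall fun x => ?_)
        rw [gaussianPDF, Pi.one_apply, ← ENNReal.ofReal_one]
        refine ENNReal.ofReal_le_ofReal ?_
        rw [gaussianPDFReal]
        refine mul_le_one₀ ?_ (by positivity) ?_
        · refine inv_le_one_of_one_le₀ ?_
          rw [Real.one_le_sqrt]
          have := Real.pi_gt_three
          simp; linarith
        · refine Real.exp_le_one_iff.2 ?_
          simp only [sub_zero, NNReal.coe_one]
          have := sq_nonneg x
          linarith
    _ = volume := withDensity_one

lemma integrable_log_gaussianReal : Integrable Real.log (gaussianReal 0 1) := by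
  have h1 : IntegrableOn Real.log (Set.Ioc (-1) 1) (gaussianReal 0 1) := by
    have := (intervalIntegral.intervalIntegrable_log' (a := -1) (b := 1)).1
    exact this.mono_measure gaussianReal_le_volume
  have h2 : IntegrableOn Real.log (Set.Ioc (-1) 1)ᶜ (gaussianReal 0 1) := by
    have hx : Integrable (fun x : ℝ => x ^ 1) (gaussianReal 0 1) := integrable_pow_gaussianReal 1
    refine Integrable.mono' hx.norm.integrableOn
      Real.measurable_log.aestronglyMeasurable ?_
    refine (ae_restrict_mem measurableSet_Ioc.compl).mono fun x hx => ?_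
    have h : 1 ≤ |x| := by
      by_contra hcon
      push Not at hcon
      rw [abs_lt] at hcon
      exact hx ⟨hcon.1, hcon.2.le⟩
    rw [pow_one, Real.norm_eq_abs, Real.norm_eq_abs, ← Real.log_abs, abs_of_nonneg (Real.log_nonneg h)]
    exact (Real.log_le_sub_one_of_pos (by linarith)).trans (by linarith)
  have := h1.union h2
  rwa [Set.union_compl_self, integrableOn_univ] at this

/-- The mean of `log g²` for a standard Gaussian `g`. -/
noncomputable def gaussLogMean : ℝ := ∫ t, Real.log (t ^ 2) ∂(gaussianReal 0 1)

lemma dot_log {v : ι → ℝ} (hv : ∑ i, v i ^ 2 ≠ 0) :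
    Integrable (fun ξ => Real.log ((∑ i, ξ i * v i) ^ 2)) (gaussPi ι) ∧
    ∫ ξ, Real.log ((∑ i, ξ i * v i) ^ 2) ∂(gaussPi ι) =
      Real.log (∑ i, v i ^ 2) + gaussLogMean := by
  set s := ∑ i, v i ^ 2 with hs
  have hs0 : 0 < s := lt_of_le_of_ne (Finset.sum_nonneg fun i _ => sq_nonneg _) (Ne.symm hv)
  have hlaw : (gaussPi ι).map (fun ξ => ∑ i, ξ i * v i) =
      (gaussianReal 0 1).map (fun x => √s * x) := by
    rw [gaussPi_map_dot, gaussianReal_map_const_mul]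
    congr 1
    · simp
    · ext
      simp [Real.sq_sqrt hs0.le, ← hs, Real.coe_toNNReal _ hs0.le]
  have hm1 : AEMeasurable (fun ξ : ι → ℝ => ∑ i, ξ i * v i) (gaussPi ι) :=
    Measurable.aemeasurable (by fun_prop)
  have hm2 : AEMeasurable (fun x : ℝ => √s * x) (gaussianReal 0 1) := by fun_prop
  have hm3 : Measurable (fun t : ℝ => Real.log (t ^ 2)) :=
    Real.measurable_log.comp (by fun_prop)
  have hae : (fun x : ℝ => Real.log ((√s * x) ^ 2)) =ᵐ[gaussianReal 0 1]
      fun x => Real.log s + Real.log (x ^ 2) := by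
    have h0 : ∀ᵐ x ∂(gaussianReal 0 1), x ≠ 0 := by
      rw [ae_iff]
      refine le_antisymm ((gaussianReal_le_volume _).trans ?_) zero_le
      simp
    filter_upwards [h0] with x hx
    rw [mul_pow, Real.sq_sqrt hs0.le, Real.log_mul hs0.ne' (by positivity)]
  have hint : Integrable (fun x => Real.log (x ^ 2)) (gaussianReal 0 1) := by
    simp_rw [Real.log_pow]
    exact integrable_log_gaussianReal.const_mul _
  have hint2 : Integrable (fun x => Real.log s + Real.log (x ^ 2)) (gaussianReal 0 1) :=
    (integrable_const _).add hint
  constructor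
  · have : Integrable (fun t : ℝ => Real.log (t ^ 2))
        ((gaussPi ι).map (fun ξ => ∑ i, ξ i * v i)) := by
      rw [hlaw, integrable_map_measure hm3.aestronglyMeasurable hm2]
      exact hint2.congr hae.symm
    rwa [integrable_map_measure hm3.aestronglyMeasurable hm1] at this
  · have h1 := integral_map hm1 (f := fun t : ℝ => Real.log (t ^ 2)) hm3.aestronglyMeasurable
    rw [← h1, hlaw, integral_map hm2 hm3.aestronglyMeasurable, integral_congr_ae hae,
      integral_add (integrable_const _) hint]
    simp [gaussLogMean]

lemma ae_dot_ne_zero {v : ι → ℝ} (hv : ∑ i, v i ^ 2 ≠ 0) :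
    ∀ᵐ ξ ∂(gaussPi ι), ∑ i, ξ i * v i ≠ 0 := by
  have hne : (∑ i, C (v i) * X i : MvPolynomial ι ℝ) ≠ 0 := by
    intro h
    have : eval v (∑ i, C (v i) * X i : MvPolynomial ι ℝ) = ∑ i, v i ^ 2 := by simp [sq]
    rw [h] at this
    exact hv (by simpa using this.symm)
  filter_upwards [ae_eval_ne_zero hne] with ξ hξ
  simpa [mul_comm] using hξ

lemma ofReal_integral_le_lintegral_ofReal {α : Type*} [MeasurableSpace α] {μ : Measure α}
    {h : α → ℝ} (hi : Integrable h μ) :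
    ENNReal.ofReal (∫ a, h a ∂μ) ≤ ∫⁻ a, ENNReal.ofReal (h a) ∂μ := by
  rw [integral_eq_lintegral_pos_part_sub_lintegral_neg_part hi]
  refine (ENNReal.ofReal_le_ofReal (sub_le_self _ ENNReal.toReal_nonneg)).trans ?_
  exact ENNReal.ofReal_toReal_le

lemma log_ratio_le_lintegral {Λ : ℝ} (hΛ : 0 < Λ) {u w : ι → ℝ} (hu : ∑ i, u i ^ 2 ≠ 0)
    (hw : ∑ i, w i ^ 2 ≠ 0) :
    ENNReal.ofReal (Real.log (∑ i, w i ^ 2) + (- Real.log (∑ i, u i ^ 2) - 2 * Real.log Λ)) ≤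
      ∫⁻ ξ, ENNReal.ofReal (Real.log (1 + (∑ i, ξ i * w i) ^ 2 / (Λ * ∑ i, ξ i * u i) ^ 2))
        ∂(gaussPi ι) := by
  obtain ⟨iu, eu⟩ := dot_log hu
  obtain ⟨iw, ew⟩ := dot_log hw
  have hI : Integrable (fun ξ : ι → ℝ => Real.log ((∑ i, ξ i * w i) ^ 2) -
      Real.log ((∑ i, ξ i * u i) ^ 2) - 2 * Real.log Λ) (gaussPi ι) :=
    (iw.sub iu).sub (integrable_const _)
  have hval : ∫ ξ : ι → ℝ, (Real.log ((∑ i, ξ i * w i) ^ 2) -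
      Real.log ((∑ i, ξ i * u i) ^ 2) - 2 * Real.log Λ) ∂(gaussPi ι) =
      Real.log (∑ i, w i ^ 2) + (- Real.log (∑ i, u i ^ 2) - 2 * Real.log Λ) := by
    have iwu : Integrable (fun ξ : ι → ℝ => Real.log ((∑ i, ξ i * w i) ^ 2) -
      Real.log ((∑ i, ξ i * u i) ^ 2)) (gaussPi ι) := iw.sub iu
    rw [integral_sub iwu (integrable_const _), integral_sub iw iu, eu, ew]
    simp; ring
  rw [← hval]
  refine (ofReal_integral_le_lintegral_ofReal hI).trans (lintegral_mono_ae ?_)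
  filter_upwards [ae_dot_ne_zero hu, ae_dot_ne_zero hw] with ξ h1 h2
  refine ENNReal.ofReal_le_ofReal ?_
  have e : Real.log ((∑ i, ξ i * w i) ^ 2 / (Λ * ∑ i, ξ i * u i) ^ 2) =
      Real.log ((∑ i, ξ i * w i) ^ 2) - Real.log ((∑ i, ξ i * u i) ^ 2) - 2 * Real.log Λ := by
    rw [Real.log_div (by positivity) (by positivity), mul_pow,
      Real.log_mul (by positivity) (by positivity), Real.log_pow Λ]
    push_cast; ring
  rw [← e]
  refine Real.log_le_log (by positivity) ?_
  linarith

lemma log_sum_sq_le_lintegral {A : Type*} [Fintype A] (M : A → ι → ℝ) (r : ℝ)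
    (hM : ∑ a, ∑ i, M a i ^ 2 ≠ 0) :
    ENNReal.ofReal (Real.log (∑ a, ∑ i, M a i ^ 2) + gaussLogMean + r) ≤
      ∫⁻ y, ENNReal.ofReal (Real.log (∑ a, (∑ i, y i * M a i) ^ 2) + r) ∂(gaussPi ι) := by
  classical
  set T := ∑ a, ∑ i, M a i ^ 2 with hT
  set m : A → ℝ := fun a => ∑ i, M a i ^ 2 with hm
  have hm0 : ∀ a, 0 ≤ m a := fun a => Finset.sum_nonneg fun i _ => sq_nonneg _
  have hT0 : 0 < T := lt_of_le_of_ne (Finset.sum_nonneg fun a _ => hm0 a) (Ne.symm hM)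
  set A' := Finset.univ.filter fun a => m a ≠ 0 with hA'
  have hw : ∑ a ∈ A', m a / T = 1 := by
    rw [← Finset.sum_div, hA', Finset.sum_filter_ne_zero]
    exact div_self hT0.ne'
  have hi : ∀ a ∈ A', Integrable (fun y : ι → ℝ => m a / T *
      (Real.log ((∑ i, y i * M a i) ^ 2) - Real.log (m a) + Real.log T)) (gaussPi ι) := by
    intro a ha
    exact (((dot_log (Finset.mem_filter.1 ha).2).1.sub (integrable_const _)).add
      (integrable_const _)).const_mul _
  have hI : Integrable (fun y : ι → ℝ => ∑ a ∈ A', m a / T *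
      (Real.log ((∑ i, y i * M a i) ^ 2) - Real.log (m a) + Real.log T)) (gaussPi ι) :=
    integrable_finsetSum _ hi
  have hval : ∫ y : ι → ℝ, ((∑ a ∈ A', m a / T *
      (Real.log ((∑ i, y i * M a i) ^ 2) - Real.log (m a) + Real.log T)) + r) ∂(gaussPi ι) =
      Real.log T + gaussLogMean + r := by
    rw [integral_add hI (integrable_const _), integral_finsetSum _ hi]
    have : ∀ a ∈ A', ∫ y : ι → ℝ, m a / T *
      (Real.log ((∑ i, y i * M a i) ^ 2) - Real.log (m a) + Real.log T) ∂(gaussPi ι) =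
      m a / T * (Real.log T + gaussLogMean) := by
      intro a ha
      obtain ⟨h1, h2⟩ := dot_log (Finset.mem_filter.1 ha).2
      have h3 : Integrable (fun y : ι → ℝ => Real.log ((∑ i, y i * M a i) ^ 2) - Real.log (m a))
        (gaussPi ι) := h1.sub (integrable_const _)
      rw [integral_const_mul, integral_add h3 (integrable_const _),
        integral_sub h1 (integrable_const _), h2]
      simp only [integral_const, probReal_univ, smul_eq_mul, one_mul, hm]; ring
    rw [Finset.sum_congr rfl this, ← Finset.sum_mul, hw]
    simp
  rw [← hval]
  refine (ofReal_integral_le_lintegral_ofReal (hI.add (integrable_const _))).trans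
    (lintegral_mono_ae ?_)
  have hae : ∀ᵐ y ∂(gaussPi ι), ∀ a ∈ A', ∑ i, y i * M a i ≠ 0 := by
    rw [Filter.eventually_all_finset]
    intro a ha
    exact ae_dot_ne_zero (Finset.mem_filter.1 ha).2
  filter_upwards [hae] with y hy
  refine ENNReal.ofReal_le_ofReal (add_le_add_left ?_ r)
  have hmpos : ∀ a ∈ A', 0 < m a := fun a ha =>
    lt_of_le_of_ne (hm0 a) (Ne.symm (Finset.mem_filter.1 ha).2)
  have hz : ∀ a ∈ A', (0 : ℝ) < (∑ i, y i * M a i) ^ 2 / m a * T := by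
    intro a ha
    have := hmpos a ha
    have := hy a ha
    positivity
  have hj := strictConcaveOn_log_Ioi.concaveOn.le_map_sum (t := A') (w := fun a => m a / T)
    (p := fun a => (∑ i, y i * M a i) ^ 2 / m a * T)
    (fun a _ => div_nonneg (hm0 a) hT0.le) hw hz
  have e1 : ∑ a ∈ A', (m a / T) • ((∑ i, y i * M a i) ^ 2 / m a * T) =
      ∑ a, (∑ i, y i * M a i) ^ 2 := by
    rw [← Finset.sum_filter_add_sum_filter_not Finset.univ (fun a => m a ≠ 0)
      (fun a => (∑ i, y i * M a i) ^ 2)]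
    rw [Finset.sum_eq_zero (s := Finset.univ.filter fun a => ¬ m a ≠ 0), add_zero]
    · refine Finset.sum_congr rfl fun a ha => ?_
      have := hmpos a ha
      rw [smul_eq_mul]
      field_simp
    · intro a ha
      have h0 : m a = 0 := by simpa using ha
      have h1 : ∀ i, M a i = 0 := by
        intro i
        have := (Finset.sum_eq_zero_iff_of_nonneg fun i _ => sq_nonneg (M a i)).1 h0 i
          (Finset.mem_univ i)
        simpa using this
      simp [h1]
  rw [e1] at hj
  refine le_trans (le_of_eq ?_) hj
  refine Finset.sum_congr rfl fun a ha => ?_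
  have h1 := hmpos a ha
  have h2 := hy a ha
  rw [smul_eq_mul, Real.log_mul (by positivity) (by positivity), Real.log_div (by positivity)
    (by positivity)]

end LogGaussian

section Chain

variable {ι : Type*} [Fintype ι]

/-- The mean logarithmic derivative of a finite family of polynomials. -/
noncomputable def familyLogDeriv {A : Type*} [Fintype A] (Λ : ℝ) (F : A → MvPolynomial ι ℝ)
    (x : ι → ℝ) : ENNReal :=
  ∫⁻ y, (∫⁻ ξ, ENNReal.ofReal (Real.log (1 + (∑ a, ξ a * dirD (F a) x y) ^ 2 /
    (Λ * ∑ a, ξ a * eval x (F a)) ^ 2)) ∂(gaussPi A)) ∂(gaussPi ι)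

lemma measurable_familyLogDeriv_integrand {A : Type*} [Fintype A] (Λ : ℝ)
    (F : A → MvPolynomial ι ℝ) :
    Measurable fun p : ((ι → ℝ) × (ι → ℝ)) × (A → ℝ) =>
      ENNReal.ofReal (Real.log (1 + (∑ a, p.2 a * dirD (F a) p.1.1 p.1.2) ^ 2 /
      (Λ * ∑ a, p.2 a * eval p.1.1 (F a)) ^ 2)) := by
  have h : ∀ g : MvPolynomial ι ℝ,
      Measurable fun p : ((ι → ℝ) × (ι → ℝ)) × (A → ℝ) => eval p.1.1 g := fun g =>
    (continuous_eval_poly g).measurable.comp (measurable_fst.comp measurable_fst)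
  have h2 : ∀ a, Measurable fun p : ((ι → ℝ) × (ι → ℝ)) × (A → ℝ) => p.2 a := fun a =>
    (measurable_pi_apply a).comp measurable_snd
  have h3 : ∀ i, Measurable fun p : ((ι → ℝ) × (ι → ℝ)) × (A → ℝ) => p.1.2 i := fun i =>
    (measurable_pi_apply i).comp (measurable_snd.comp measurable_fst)
  refine (Real.measurable_log.comp ?_).ennreal_ofReal
  refine measurable_const.add (Measurable.div ?_ ?_)
  · refine (Finset.measurable_sum _ fun a _ => ?_).pow_const 2
    refine (h2 a).mul ?_
    unfold dirD
    exact Finset.measurable_sum _ fun i _ => (h3 i).mul (h _)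
  · exact (measurable_const.mul (Finset.measurable_sum _ fun a _ => (h2 a).mul (h _))).pow_const 2

lemma measurable_familyLogDeriv {A : Type*} [Fintype A] (Λ : ℝ) (F : A → MvPolynomial ι ℝ) :
    Measurable (familyLogDeriv Λ F) := by
  have := measurable_familyLogDeriv_integrand Λ F
  exact Measurable.lintegral_prod_right' (ν := gaussPi ι)
    (f := fun p : (ι → ℝ) × (ι → ℝ) => ∫⁻ ξ, ENNReal.ofReal (Real.log (1 +
      (∑ a, ξ a * dirD (F a) p.1 p.2) ^ 2 / (Λ * ∑ a, ξ a * eval p.1 (F a)) ^ 2)) ∂(gaussPi A))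
    (Measurable.lintegral_prod_right' this)

lemma dirD_sum_smul {A : Type*} [Fintype A] (F : A → MvPolynomial ι ℝ) (ξ : A → ℝ)
    (x y : ι → ℝ) : dirD (∑ a, ξ a • F a) x y = ∑ a, ξ a * dirD (F a) x y := by
  simp only [dirD, map_sum, Derivation.map_smul, smul_eval, Finset.mul_sum]
  rw [Finset.sum_comm]
  refine Finset.sum_congr rfl fun a _ => Finset.sum_congr rfl fun i _ => by ring

lemma lintegral_familyLogDeriv_le {A : Type*} [Fintype A] {m : ℕ} {Λ : ℝ} (hΛ : 0 < Λ)
    (F : A → MvPolynomial ι ℝ) (hF : ∀ a, (F a).totalDegree ≤ m) :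
    ∫⁻ x, familyLogDeriv Λ F x ∂(gaussPi ι) ≤ ENNReal.ofReal (2 * m / Λ) := by
  have hm := measurable_familyLogDeriv_integrand Λ F
  have e1 : ∫⁻ x, familyLogDeriv Λ F x ∂(gaussPi ι) =
      ∫⁻ p, (∫⁻ ξ, ENNReal.ofReal (Real.log (1 + (∑ a, ξ a * dirD (F a) p.1 p.2) ^ 2 /
      (Λ * ∑ a, ξ a * eval p.1 (F a)) ^ 2)) ∂(gaussPi A)) ∂((gaussPi ι).prod (gaussPi ι)) := by
    rw [lintegral_prod]
    · rfl
    · exact (Measurable.lintegral_prod_right' hm).aemeasurable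
  rw [e1, lintegral_lintegral_swap hm.aemeasurable]
  calc _ ≤ ∫⁻ ξ : A → ℝ, ENNReal.ofReal (2 * m / Λ) ∂(gaussPi A) := by
        refine lintegral_mono fun ξ => ?_
        refine le_trans (le_of_eq ?_) (lintegral_logDerivFun_le hΛ (∑ a, ξ a • F a) (m := m) ?_)
        · refine lintegral_congr fun p => ?_
          rw [logDerivFun, dirD_sum_smul, map_sum]
          simp only [smul_eval]
        · refine (totalDegree_finsetSum_le fun a _ => ?_)
          exact (totalDegree_smul_le _ _).trans (hF a)
    _ = _ := by rw [lintegral_const, measure_univ, mul_one]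

lemma le_familyLogDeriv {A : Type*} [Fintype A] {Λ : ℝ} (hΛ : 0 < Λ) (F : A → MvPolynomial ι ℝ)
    (x : ι → ℝ) (h0 : ∑ a, eval x (F a) ^ 2 ≠ 0)
    (h1 : ∑ a, ∑ i, eval x (pderiv i (F a)) ^ 2 ≠ 0) :
    ENNReal.ofReal (Real.log (∑ a, ∑ i, eval x (pderiv i (F a)) ^ 2) -
      Real.log (∑ a, eval x (F a) ^ 2) + (gaussLogMean - 2 * Real.log Λ)) ≤
      familyLogDeriv Λ F x := by
  have h2 := log_sum_sq_le_lintegral (fun a i => eval x (pderiv i (F a)))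
    (- Real.log (∑ a, eval x (F a) ^ 2) - 2 * Real.log Λ) h1
  refine le_trans (le_of_eq ?_) (h2.trans ?_)
  · congr 1; ring
  · refine lintegral_mono_ae ?_
    obtain ⟨a, -, ha⟩ := Finset.exists_ne_zero_of_sum_ne_zero h1
    filter_upwards [ae_dot_ne_zero ha] with y hy
    refine log_ratio_le_lintegral hΛ (u := fun a => eval x (F a))
      (w := fun a => dirD (F a) x y) h0 ?_
    intro h
    have := (Finset.sum_eq_zero_iff_of_nonneg fun i _ => sq_nonneg (dirD (F i) x y)).1 h a
      (Finset.mem_univ a)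
    exact hy (by simpa [dirD] using this)

/-- Iterated partial derivatives. -/
noncomputable def iterPderiv (f : MvPolynomial ι ℝ) : (j : ℕ) → (Fin j → ι) → MvPolynomial ι ℝ
  | 0, _ => f
  | j + 1, s => pderiv (s 0) (iterPderiv f j (Fin.tail s))

lemma sum_fin_succ_fun {M : Type*} [AddCommMonoid M] (j : ℕ) (φ : (Fin (j + 1) → ι) → M) :
    ∑ s, φ s = ∑ s : Fin j → ι, ∑ i, φ (Fin.cons i s) := by
  rw [Finset.sum_comm, ← Fintype.sum_prod_type' (f := fun i s => φ (Fin.cons i s))]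
  exact (Fintype.sum_equiv (Fin.consEquiv fun _ => ι) _ _ fun p => rfl).symm

lemma sum_iterPderiv_succ {M : Type*} [AddCommMonoid M] (f : MvPolynomial ι ℝ) (j : ℕ)
    (φ : MvPolynomial ι ℝ → M) :
    ∑ s, φ (iterPderiv f (j + 1) s) = ∑ s, ∑ i, φ (pderiv i (iterPderiv f j s)) := by
  rw [sum_fin_succ_fun]
  simp [iterPderiv]

lemma totalDegree_iterPderiv_le [DecidableEq ι] {m : ℕ} (f : MvPolynomial ι ℝ)
    (hf : f.totalDegree ≤ m) (j : ℕ) (s : Fin j → ι) : (iterPderiv f j s).totalDegree ≤ m := by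
  induction j with
  | zero => exact hf
  | succ j ih =>
    have := totalDegree_pderiv_le (s 0) (iterPderiv f j (Fin.tail s))
    have := ih (Fin.tail s)
    rw [iterPderiv]
    omega

/-- The squared length of the tensor of `j`-th derivatives. -/
noncomputable def derivNormSq (f : MvPolynomial ι ℝ) (j : ℕ) (x : ι → ℝ) : ℝ :=
  ∑ s, eval x (iterPderiv f j s) ^ 2

lemma exists_iterPderiv_ne_zero_of_le (f : MvPolynomial ι ℝ) {i j : ℕ} (hij : i ≤ j)
    (h : ∃ s, iterPderiv f j s ≠ 0) : ∃ s, iterPderiv f i s ≠ 0 := by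
  induction j, hij using Nat.le_induction with
  | base => exact h
  | succ j hj ih =>
    obtain ⟨s, hs⟩ := h
    refine ih ⟨Fin.tail s, fun h0 => hs ?_⟩
    rw [iterPderiv, h0, map_zero]

lemma ae_derivNormSq_ne_zero (f : MvPolynomial ι ℝ) {j : ℕ}
    (h : ∃ s, iterPderiv f j s ≠ 0) :
    ∀ᵐ x ∂(gaussPi ι), ∀ i ∈ Finset.range (j + 1), derivNormSq f i x ≠ 0 := by
  rw [Filter.eventually_all_finset]
  intro i hi
  obtain ⟨s, hs⟩ := exists_iterPderiv_ne_zero_of_le f (Nat.lt_succ_iff.1 (Finset.mem_range.1 hi)) h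
  filter_upwards [ae_eval_ne_zero hs] with x hx h0
  have := (Finset.sum_eq_zero_iff_of_nonneg fun s _ => sq_nonneg _).1 h0 s (Finset.mem_univ s)
  exact hx (by simpa using this)

lemma le_sum_familyLogDeriv {Λ : ℝ} (hΛ : 0 < Λ) (f : MvPolynomial ι ℝ) (j : ℕ) (x : ι → ℝ)
    (h : ∀ i ∈ Finset.range (j + 1), derivNormSq f i x ≠ 0) :
    ENNReal.ofReal (Real.log (derivNormSq f j x) - Real.log (derivNormSq f 0 x) +
      j * (gaussLogMean - 2 * Real.log Λ)) ≤
      ∑ i ∈ Finset.range j, familyLogDeriv Λ (iterPderiv f i) x := by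
  induction j with
  | zero => simp
  | succ j ih =>
    have h1 := ih fun i hi => h i (Finset.mem_range.2 (by have := Finset.mem_range.1 hi; omega))
    have e : ∑ s, ∑ i, eval x (pderiv i (iterPderiv f j s)) ^ 2 = derivNormSq f (j + 1) x :=
      (sum_iterPderiv_succ f j fun q => eval x q ^ 2).symm
    have h2 := le_familyLogDeriv hΛ (iterPderiv f j) x (h j (by simp))
      (by rw [e]; exact h (j + 1) (by simp))
    rw [e] at h2
    rw [Finset.sum_range_succ]
    refine le_trans ?_ (add_le_add h1 h2)
    refine le_trans (le_of_eq ?_) ENNReal.ofReal_add_le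
    congr 1
    simp only [derivNormSq]
    push_cast
    ring

/-- The constant lost in each differentiation step. -/
noncomputable def stepConst : ℝ := min (Real.exp (gaussLogMean - 1)) 1

lemma stepConst_pos : 0 < stepConst := lt_min (Real.exp_pos _) one_pos

lemma stepConst_le_one : stepConst ≤ 1 := min_le_right _ _

theorem measure_eval_sq_lt_derivNormSq {m : ℕ} {Λ : ℝ} (hΛ : 0 < Λ) (f : MvPolynomial ι ℝ)
    (hf : f.totalDegree ≤ m) (j : ℕ) :
    gaussPi ι {x | eval x f ^ 2 < (stepConst / Λ ^ 2) ^ j * derivNormSq f j x} ≤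
      ENNReal.ofReal (2 * m / Λ) := by
  classical
  rcases Nat.eq_zero_or_pos j with rfl | hj
  · simp [derivNormSq, iterPderiv]
  by_cases h : ∃ s, iterPderiv f j s ≠ 0
  · have hc := stepConst_pos
    have key : ∀ᵐ x ∂(gaussPi ι), eval x f ^ 2 < (stepConst / Λ ^ 2) ^ j * derivNormSq f j x →
        (j : ENNReal) ≤ ∑ i ∈ Finset.range j, familyLogDeriv Λ (iterPderiv f i) x := by
      filter_upwards [ae_derivNormSq_ne_zero f h] with x hx hlt
      refine le_trans ?_ (le_sum_familyLogDeriv hΛ f j x hx)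
      rw [← ENNReal.ofReal_natCast]
      refine ENNReal.ofReal_le_ofReal ?_
      have e0 : derivNormSq f 0 x = eval x f ^ 2 := by simp [derivNormSq, iterPderiv]
      have hnn : ∀ i, 0 ≤ derivNormSq f i x := fun i => Finset.sum_nonneg fun s _ => sq_nonneg _
      have p0 : 0 < derivNormSq f 0 x := lt_of_le_of_ne (hnn 0) (Ne.symm (hx 0 (by simp)))
      have pj : 0 < derivNormSq f j x := lt_of_le_of_ne (hnn j) (Ne.symm (hx j (by simp)))
      rw [← e0] at hlt
      have hl := Real.log_lt_log p0 hlt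
      rw [Real.log_mul (by positivity) pj.ne', Real.log_pow, Real.log_div hc.ne' (by positivity),
        Real.log_pow] at hl
      have hcl : Real.log stepConst ≤ gaussLogMean - 1 := by
        rw [← Real.log_exp (gaussLogMean - 1)]
        exact Real.log_le_log hc (min_le_left _ _)
      have := mul_le_mul_of_nonneg_left hcl (Nat.cast_nonneg (α := ℝ) j)
      push_cast at hl
      nlinarith
    have hsum : ∫⁻ x, ∑ i ∈ Finset.range j, familyLogDeriv Λ (iterPderiv f i) x ∂(gaussPi ι) ≤
        j * ENNReal.ofReal (2 * m / Λ) := by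
      rw [lintegral_finsetSum _ fun i _ => measurable_familyLogDeriv Λ _]
      refine (Finset.sum_le_sum fun i _ => lintegral_familyLogDeriv_le hΛ (iterPderiv f i)
        (totalDegree_iterPderiv_le f hf i)).trans ?_
      simp
    have hmk := mul_meas_ge_le_lintegral (μ := gaussPi ι)
      (f := fun x => ∑ i ∈ Finset.range j, familyLogDeriv Λ (iterPderiv f i) x)
      (Finset.measurable_sum _ fun i _ => measurable_familyLogDeriv Λ _) (j : ENNReal)
    refine (measure_mono_ae key).trans ?_
    refine (ENNReal.mul_le_mul_iff_right (a := (j : ENNReal)) (by simp; omega) (by simp)).1 ?_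
    exact hmk.trans hsum
  · push Not at h
    simp [derivNormSq, h, (sq_nonneg _).not_gt]

end Chain

section Level

variable {ι : Type*} [Fintype ι] [DecidableEq ι]

/-- Multi-indices of degree exactly `l`. -/
def levelIdx (ι : Type*) [Fintype ι] [DecidableEq ι] (l : ℕ) : Finset (ι → ℕ) :=
  (multiIdx ι l).filter fun α => ∑ i, α i = l

lemma mem_levelIdx {l : ℕ} {α : ι → ℕ} : α ∈ levelIdx ι l ↔ ∑ i, α i = l := by
  simp only [levelIdx, Finset.mem_filter, mem_multiIdx, and_iff_right_iff_imp]
  exact fun h => h.le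

/-- The Hermite weight at level `l`. -/
noncomputable def levelWt (f : MvPolynomial ι ℝ) (l : ℕ) : ℝ := ∑ α ∈ levelIdx ι l, hcf f α ^ 2

lemma levelWt_nonneg (f : MvPolynomial ι ℝ) (l : ℕ) : 0 ≤ levelWt f l :=
  Finset.sum_nonneg fun _ _ => sq_nonneg _

lemma sum_multiIdx_eq_sum_level {M : Type*} [AddCommMonoid M] (D : ℕ) (φ : (ι → ℕ) → M) :
    ∑ α ∈ multiIdx ι D, φ α = ∑ l ∈ Finset.range (D + 1), ∑ α ∈ levelIdx ι l, φ α := by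
  rw [← Finset.sum_fiberwise_of_maps_to (s := multiIdx ι D) (t := Finset.range (D + 1))
    (g := fun α => ∑ i, α i)
    (fun α hα => Finset.mem_range.2 (Nat.lt_succ_of_le (mem_multiIdx.1 hα)))]
  refine Finset.sum_congr rfl fun l hl => Finset.sum_congr ?_ fun _ _ => rfl
  ext α
  have := Finset.mem_range.1 hl
  simp only [Finset.mem_filter, mem_multiIdx, mem_levelIdx]
  omega

lemma sum_multiIdx_mul_sq (D : ℕ) (f : MvPolynomial ι ℝ) (φ : ℕ → ℝ) :
    ∑ α ∈ multiIdx ι D, φ (∑ i, α i) * hcf f α ^ 2 =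
      ∑ l ∈ Finset.range (D + 1), φ l * levelWt f l := by
  rw [sum_multiIdx_eq_sum_level]
  refine Finset.sum_congr rfl fun l _ => ?_
  rw [levelWt, Finset.mul_sum]
  exact Finset.sum_congr rfl fun α hα => by rw [mem_levelIdx.1 hα]

lemma gE_sq_eq_sum_levelWt {D : ℕ} {f : MvPolynomial ι ℝ} (hf : f.totalDegree ≤ D) :
    gE (f ^ 2) = ∑ l ∈ Finset.range (D + 1), levelWt f l := by
  rw [gE_sq_eq_sum hf]
  simpa using sum_multiIdx_mul_sq D f fun _ => 1

lemma levelWt_eq_zero {D l : ℕ} {f : MvPolynomial ι ℝ} (hf : f.totalDegree ≤ D) (hl : D < l) :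
    levelWt f l = 0 :=
  Finset.sum_eq_zero fun α hα => by
    rw [hcf_eq_zero_of_totalDegree_lt D f α hf (by rw [mem_levelIdx.1 hα]; exact hl)]; simp

lemma sum_levelWt_pderiv (f : MvPolynomial ι ℝ) (l : ℕ) :
    ∑ i, levelWt (pderiv i f) l = (l + 1) * levelWt f (l + 1) := by
  have h : ∀ i, levelWt (pderiv i f) l = ∑ β ∈ levelIdx ι (l + 1), (β i : ℝ) * hcf f β ^ 2 := by
    intro i
    refine Finset.sum_of_injOn (fun α => α + Pi.single i 1) ?_ ?_ ?_ ?_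
    · intro a _ b _ hab
      exact add_right_cancel hab
    · intro α hα
      have := mem_levelIdx.1 (Finset.mem_coe.1 hα)
      refine Finset.mem_coe.2 (mem_levelIdx.2 ?_)
      simp [Finset.sum_add_distrib, this]
    · intro β hβ hn
      have : β i = 0 := by
        by_contra h0
        refine hn ⟨β - Pi.single i 1, ?_, ?_⟩
        · refine Finset.mem_coe.2 (mem_levelIdx.2 ?_)
          have h1 : β - Pi.single i 1 + Pi.single i 1 = β := by
            ext j
            rcases eq_or_ne j i with rfl | hj
            · simp; omega
            · simp [hj]
          have h2 := mem_levelIdx.1 hβ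
          rw [← h1] at h2
          simp only [Pi.add_apply, Finset.sum_add_distrib, Finset.sum_pi_single', Finset.mem_univ,
            if_true] at h2
          omega
        · ext j
          rcases eq_or_ne j i with rfl | hj
          · simp; omega
          · simp [hj]
      simp [this]
    · intro α _
      rw [hcf_pderiv, mul_pow, Real.sq_sqrt (by positivity)]
      simp
  simp_rw [h]
  rw [Finset.sum_comm, levelWt, Finset.mul_sum]
  refine Finset.sum_congr rfl fun β hβ => ?_
  rw [← Finset.sum_mul, ← Nat.cast_sum, mem_levelIdx.1 hβ]
  push_cast; ring

lemma sum_levelWt_iterPderiv (f : MvPolynomial ι ℝ) (j l : ℕ) :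
    (l.factorial : ℝ) * ∑ s, levelWt (iterPderiv f j s) l =
      (l + j).factorial * levelWt f (l + j) := by
  induction j generalizing l with
  | zero => simp [iterPderiv]
  | succ j ih =>
    rw [sum_iterPderiv_succ f j fun q => levelWt q l]
    simp_rw [sum_levelWt_pderiv]
    rw [← Finset.mul_sum, ← mul_assoc]
    have := ih (l + 1)
    rw [Nat.factorial_succ] at this
    push_cast at this
    rw [show l + (j + 1) = l + 1 + j by ring, ← this]
    ring

end Level

section AntiConc

variable {ι : Type*} [Fintype ι] [DecidableEq ι]

lemma hcf_zero_eq (f : MvPolynomial ι ℝ) : hcf f 0 = gE f := by rw [hcf, hermPoly_zero, mul_one]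

lemma levelWt_zero (f : MvPolynomial ι ℝ) : levelWt f 0 = gE f ^ 2 := by
  have : levelIdx ι 0 = {0} := by
    ext α
    simp [mem_levelIdx, funext_iff]
  rw [levelWt, this, Finset.sum_singleton, hcf_zero_eq]

/-- Projecting a family to its mean direction: hypercontractive concentration. -/
lemma gE_pow_mean_proj_le {A : Type*} [Fintype A] {D : ℕ} (F : A → MvPolynomial ι ℝ)
    (hF : ∀ a, (F a).totalDegree ≤ D) (s : ℕ) {M E : ℝ} (hM : M = ∑ a, gE (F a) ^ 2)
    (hE : ∑ l ∈ Finset.Ico 1 (D + 1), (2 ^ (s + 1) : ℝ) ^ l * ∑ a, levelWt (F a) l ≤ E) :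
    gE ((∑ a, gE (F a) • F a - C M) ^ (2 * 2 ^ s)) ≤ (M * E) ^ 2 ^ s := by
  have hM0 : 0 ≤ M := hM ▸ Finset.sum_nonneg fun _ _ => sq_nonneg _
  set φ := ∑ a, gE (F a) • F a - C M with hφ
  have hd : φ.totalDegree ≤ D := by
    refine (totalDegree_sub _ _).trans (max_le ?_ (by simp))
    exact totalDegree_finsetSum_le fun a _ => (totalDegree_smul_le _ _).trans (hF a)
  refine (gE_pow_le hd s).trans (pow_le_pow_left₀ (Finset.sum_nonneg fun _ _ => by positivity) ?_ _)
  have hc : ∀ α, hcf φ α = ∑ a, gE (F a) * hcf (F a) α - M * if α = 0 then 1 else 0 := by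
    intro α
    rw [← hcfl_apply, hφ, map_sub, map_sum]
    congr 1
    · exact Finset.sum_congr rfl fun a _ => by rw [hcfl_apply, hcf_smul]
    · rw [show (C M : MvPolynomial ι ℝ) = M • hermPoly 0 by
        rw [hermPoly_zero, smul_eq_C_mul, mul_one], hcfl_apply, hcf_smul, hcf_hermPoly]
      simp [eq_comm]
  have h0 : levelWt φ 0 = 0 := by
    rw [levelWt_zero, ← hcf_zero_eq, hc]
    simp only [hcf_zero_eq, hM]
    simp [sq]
  have hl : ∀ l ∈ Finset.Ico 1 (D + 1), levelWt φ l ≤ M * ∑ a, levelWt (F a) l := by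
    intro l hl
    have hl1 := (Finset.mem_Ico.1 hl).1
    simp only [levelWt]
    rw [Finset.sum_comm, Finset.mul_sum]
    refine Finset.sum_le_sum fun α hα => ?_
    have hα0 : α ≠ 0 := by
      rintro rfl
      have := mem_levelIdx.1 hα
      simp at this
      omega
    rw [hc, if_neg hα0, mul_zero, sub_zero, hM]
    exact Finset.sum_mul_sq_le_sq_mul_sq _ _ _
  rw [sum_multiIdx_mul_sq D φ fun l => (2 ^ (s + 1) : ℝ) ^ l, Finset.range_eq_Ico,
    Finset.sum_eq_sum_Ico_succ_bot (by omega), h0, mul_zero, zero_add]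
  calc _ ≤ ∑ l ∈ Finset.Ico 1 (D + 1), (2 ^ (s + 1) : ℝ) ^ l * (M * ∑ a, levelWt (F a) l) :=
        Finset.sum_le_sum fun l hl' => mul_le_mul_of_nonneg_left (hl l hl') (by positivity)
    _ = M * ∑ l ∈ Finset.Ico 1 (D + 1), (2 ^ (s + 1) : ℝ) ^ l * ∑ a, levelWt (F a) l := by
        rw [Finset.mul_sum]; exact Finset.sum_congr rfl fun _ _ => by ring
    _ ≤ M * E := mul_le_mul_of_nonneg_left hE hM0

/-- Markov's inequality for a nonnegative polynomial. -/
lemma measure_eval_ge_le {p : MvPolynomial ι ℝ} (hp : ∀ x, 0 ≤ eval x p) {t b : ℝ} (ht : 0 < t)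
    (hb : gE p ≤ b * t) : gaussPi ι {x | t ≤ eval x p} ≤ ENNReal.ofReal b := by
  have h := mul_meas_ge_le_integral_of_nonneg (μ := gaussPi ι) (Filter.Eventually.of_forall hp)
    (integrable_eval p) t
  have h2 : (gaussPi ι).real {x | t ≤ eval x p} ≤ b := by
    have : t * (gaussPi ι).real {x | t ≤ eval x p} ≤ t * b := by
      rw [mul_comm t b]; exact h.trans hb
    exact le_of_mul_le_mul_left this ht
  rw [← ofReal_measureReal (measure_ne_top _ _)]
  exact ENNReal.ofReal_le_ofReal h2

lemma measure_sum_sq_lt_le {A : Type*} [Fintype A] {D : ℕ} (F : A → MvPolynomial ι ℝ)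
    (hF : ∀ a, (F a).totalDegree ≤ D) (s : ℕ) {M : ℝ} (hM : M = ∑ a, gE (F a) ^ 2)
    (hM0 : 0 < M)
    (hE : ∑ l ∈ Finset.Ico 1 (D + 1), (2 ^ (s + 1) : ℝ) ^ l * ∑ a, levelWt (F a) l ≤ M / 16) :
    gaussPi ι {x | ∑ a, eval x (F a) ^ 2 < M / 4} ≤ ENNReal.ofReal ((1 / 4) ^ 2 ^ s) := by
  have h := gE_pow_mean_proj_le F hF s hM hE
  set φ := ∑ a, gE (F a) • F a - C M with hφ
  refine le_trans (measure_mono ?_) (measure_eval_ge_le (p := φ ^ (2 * 2 ^ s))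
    (t := (M ^ 2 / 4) ^ 2 ^ s) (b := (1 / 4) ^ 2 ^ s) ?_ (by positivity) ?_)
  · intro x hx
    simp only [Set.mem_ofPred_eq] at hx ⊢
    rw [map_pow, pow_mul]
    refine pow_le_pow_left₀ (by positivity) ?_ _
    have hcs : (∑ a, gE (F a) * eval x (F a)) ^ 2 ≤ M * ∑ a, eval x (F a) ^ 2 := by
      rw [hM]; exact Finset.sum_mul_sq_le_sq_mul_sq _ _ _
    have e : eval x φ = ∑ a, gE (F a) * eval x (F a) - M := by
      simp [hφ, smul_eval]
    rw [e]
    set z := ∑ a, gE (F a) * eval x (F a)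
    have hz : z ^ 2 < (M / 2) ^ 2 := by nlinarith
    have := abs_lt_of_sq_lt_sq hz (by positivity)
    have h1 := (abs_lt.1 this).2
    nlinarith
  · intro x
    rw [map_pow, pow_mul]; positivity
  · refine h.trans (le_of_eq ?_)
    rw [← mul_pow]; congr 1; ring

end AntiConc

section AntiConcMain

variable {ι : Type*} [Fintype ι] [DecidableEq ι]

lemma one_lt_log_three_div {β : ℝ} (h0 : 0 < β) (h1 : β < 1) : 1 < Real.log (3 / β) := by
  rw [Real.lt_log_iff_exp_lt (by positivity)]
  have := Real.exp_one_lt_d9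
  have : 3 < 3 / β := by rw [lt_div_iff₀ h0]; linarith
  linarith

lemma exists_pow_two_between {L : ℝ} (hL : 1 ≤ L) : ∃ s : ℕ, L ≤ 2 ^ s ∧ (2 : ℝ) ^ s ≤ 2 * L := by
  obtain ⟨n, h1, h2⟩ := exists_nat_pow_near hL (one_lt_two)
  refine ⟨n + 1, h2.le, ?_⟩
  rw [pow_succ]; linarith

lemma sum_geometric_le {q : ℝ} (h0 : 0 ≤ q) (h1 : q ≤ 1 / 2) (D : ℕ) :
    ∑ l ∈ Finset.range D, q ^ l ≤ 2 := by
  calc _ ≤ ∑ l ∈ Finset.range D, (1 / 2 : ℝ) ^ l :=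
        Finset.sum_le_sum fun l _ => pow_le_pow_left₀ h0 h1 l
    _ ≤ 2 := sum_geometric_two_le D

/-- Polynomial anticoncentration under the Gaussian measure, with polynomial dependence on the
degree. -/
theorem measure_eval_sq_lt_le {D : ℕ} (hD : 1 ≤ D) (f : MvPolynomial ι ℝ)
    (hf : f.totalDegree ≤ D) {β : ℝ} (hβ0 : 0 < β) (hβ1 : β < 1) :
    gaussPi ι {x | eval x f ^ 2 <
      (stepConst * β ^ 2 / (2048 * D ^ 2 * Real.log (3 / β))) ^ D / 8 * gE (f ^ 2)} ≤
      ENNReal.ofReal β := by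
  set L := Real.log (3 / β) with hLdef
  have hL1 : 1 < L := one_lt_log_three_div hβ0 hβ1
  obtain ⟨s, hs1, hs2⟩ := exists_pow_two_between hL1.le
  have hc0 := stepConst_pos
  have hc1 := stepConst_le_one
  set r : ℝ := 2 ^ s with hr
  set B : ℝ := 64 * r with hB
  have hr1 : 1 ≤ r := by linarith
  have hB0 : 0 < B := by positivity
  obtain ⟨j, hjD, hj⟩ := Finset.exists_max_image (Finset.range (D + 1))
    (fun l => (l.factorial : ℝ) * levelWt f l * B ^ l) ⟨0, by simp⟩
  set M : ℝ := j.factorial * levelWt f j with hM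
  have hM0 : 0 ≤ M := mul_nonneg (by positivity) (levelWt_nonneg f j)
  have hwt : ∀ l, (l.factorial : ℝ) * levelWt f l * B ^ l ≤ M * B ^ j := by
    intro l
    by_cases hl : l ≤ D
    · exact hj l (Finset.mem_range.2 (by omega))
    · rw [levelWt_eq_zero hf (by omega)]
      simp; positivity
  have hDR : (1 : ℝ) ≤ D := by exact_mod_cast hD
  have hnorm : gE (f ^ 2) ≤ 2 * (B ^ j * M) := by
    rw [gE_sq_eq_sum_levelWt hf]
    calc _ ≤ ∑ l ∈ Finset.range (D + 1), (1 / B) ^ l * (M * B ^ j) := by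
          refine Finset.sum_le_sum fun l _ => ?_
          have h1 := hwt l
          have h2 : levelWt f l * B ^ l ≤ (l.factorial : ℝ) * levelWt f l * B ^ l := by
            refine mul_le_mul_of_nonneg_right ?_ (by positivity)
            exact le_mul_of_one_le_left (levelWt_nonneg f l)
              (by exact_mod_cast l.factorial_pos)
          rw [one_div, inv_pow, ← div_eq_inv_mul, le_div_iff₀ (by positivity)]
          exact h2.trans h1
      _ = (∑ l ∈ Finset.range (D + 1), (1 / B) ^ l) * (M * B ^ j) := by rw [Finset.sum_mul]
      _ ≤ 2 * (M * B ^ j) := by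
          refine mul_le_mul_of_nonneg_right (sum_geometric_le (by positivity) ?_ _) (by positivity)
          rw [div_le_div_iff₀ hB0 two_pos]; linarith
      _ = _ := by ring
  by_cases hMz : M = 0
  · have : gE (f ^ 2) ≤ 0 := by simpa [hMz] using hnorm
    refine le_trans (le_of_eq ?_) zero_le
    convert! measure_empty (μ := gaussPi ι)
    ext x
    simp only [Set.mem_ofPred_eq, Set.mem_empty_iff_false, iff_false, not_lt]
    refine le_trans (mul_nonpos_of_nonneg_of_nonpos (by positivity) this) (sq_nonneg _)
  have hMpos : 0 < M := lt_of_le_of_ne hM0 (Ne.symm hMz)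
  have hwtF : ∀ l, ∑ a, levelWt (iterPderiv f j a) l ≤ M * (1 / B) ^ l := by
    intro l
    have h1 := sum_levelWt_iterPderiv f j l
    have h2 := hwt (l + j)
    have h3 : (0 : ℝ) ≤ ∑ a, levelWt (iterPderiv f j a) l :=
      Finset.sum_nonneg fun _ _ => levelWt_nonneg _ _
    have h4 : ∑ a, levelWt (iterPderiv f j a) l ≤
        (l.factorial : ℝ) * ∑ s, levelWt (iterPderiv f j s) l :=
      le_mul_of_one_le_left h3 (by exact_mod_cast l.factorial_pos)
    rw [← h1, pow_add, ← mul_assoc] at h2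
    have h5 := le_of_mul_le_mul_right h2 (by positivity)
    rw [one_div, inv_pow, ← div_eq_mul_inv, le_div_iff₀ (by positivity)]
    exact (mul_le_mul_of_nonneg_right h4 (by positivity)).trans h5
  have hMeq : M = ∑ a, gE (iterPderiv f j a) ^ 2 := by
    have := sum_levelWt_iterPderiv f j 0
    simp only [Nat.factorial_zero, Nat.cast_one, one_mul, zero_add, levelWt_zero] at this
    rw [this]
  have hE : ∑ l ∈ Finset.Ico 1 (D + 1), (2 ^ (s + 1) : ℝ) ^ l *
      ∑ a, levelWt (iterPderiv f j a) l ≤ M / 16 := by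
    have e : ∀ l, (2 ^ (s + 1) : ℝ) ^ l * (M * (1 / B) ^ l) = M * (1 / 32) ^ l := by
      intro l
      have : (2 ^ (s + 1) : ℝ) * (1 / B) = 1 / 32 := by
        rw [pow_succ, ← hr, hB]; field_simp; norm_num
      rw [← this, mul_pow]; ring
    calc _ ≤ ∑ l ∈ Finset.Ico 1 (D + 1), M * (1 / 32) ^ l := by
          refine Finset.sum_le_sum fun l _ => ?_
          rw [← e]
          exact mul_le_mul_of_nonneg_left (hwtF l) (by positivity)
      _ = ∑ l ∈ Finset.range D, M / 32 * (1 / 32) ^ l := by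
          rw [Finset.sum_Ico_eq_sum_range]
          refine Finset.sum_congr (by simp) fun l _ => by rw [pow_add]; ring
      _ = M / 32 * ∑ l ∈ Finset.range D, (1 / 32 : ℝ) ^ l := by rw [Finset.mul_sum]
      _ ≤ M / 32 * 2 := mul_le_mul_of_nonneg_left
          (sum_geometric_le (by norm_num) (by norm_num) _) (by positivity)
      _ = M / 16 := by ring
  have hP1 := measure_sum_sq_lt_le (iterPderiv f j) (totalDegree_iterPderiv_le f hf j) s hMeq
    hMpos hE
  set Λ : ℝ := 4 * D / β with hΛ
  have hΛ0 : 0 < Λ := by positivity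
  have hP2 := measure_eval_sq_lt_derivNormSq hΛ0 f hf j
  have hsub : {x | eval x f ^ 2 < (stepConst * β ^ 2 / (2048 * D ^ 2 * L)) ^ D / 8 * gE (f ^ 2)} ⊆
      {x | ∑ a, eval x (iterPderiv f j a) ^ 2 < M / 4} ∪
      {x | eval x f ^ 2 < (stepConst / Λ ^ 2) ^ j * derivNormSq f j x} := by
    intro x hx
    by_contra hn
    simp only [Set.mem_union, Set.mem_ofPred_eq, not_or, not_lt] at hn hx
    obtain ⟨h1, h2⟩ := hn
    refine absurd hx (not_lt.2 (le_trans ?_ h2))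
    set q := stepConst * β ^ 2 / (2048 * D ^ 2 * L) with hq
    have hq0 : 0 ≤ q := by positivity
    have hden : 1 ≤ 2048 * (D : ℝ) ^ 2 * L := by nlinarith [sq_nonneg ((D : ℝ) - 1)]
    have hq1 : q ≤ 1 := by
      rw [hq, div_le_one (by positivity)]
      have : β ^ 2 ≤ 1 := by nlinarith
      nlinarith
    have hqB : q * B ≤ stepConst / Λ ^ 2 := by
      have e : stepConst / Λ ^ 2 = q * (128 * L) := by
        rw [hq, hΛ]; field_simp; norm_num
      rw [e]
      refine mul_le_mul_of_nonneg_left ?_ hq0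
      rw [hB]; linarith
    have hjD' : j ≤ D := by have := Finset.mem_range.1 hjD; omega
    calc q ^ D / 8 * gE (f ^ 2) ≤ q ^ j / 8 * (2 * (B ^ j * M)) := by
          refine mul_le_mul ?_ hnorm ?_ (by positivity)
          · have := pow_le_pow_of_le_one hq0 hq1 hjD'
            linarith
          · rw [gE_sq_eq_sum_levelWt hf]
            exact Finset.sum_nonneg fun _ _ => levelWt_nonneg _ _
      _ = (q * B) ^ j * (M / 4) := by rw [mul_pow q B j]; ring
      _ ≤ (stepConst / Λ ^ 2) ^ j * derivNormSq f j x :=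
          mul_le_mul (pow_le_pow_left₀ (by positivity) hqB j) h1 (by positivity) (by positivity)
  refine (measure_mono hsub).trans ((measure_union_le _ _).trans
    ((add_le_add hP1 hP2).trans ?_))
  rw [← ENNReal.ofReal_add (by positivity) (by positivity)]
  refine ENNReal.ofReal_le_ofReal ?_
  have e2 : 2 * (D : ℝ) / Λ = β / 2 := by rw [hΛ]; field_simp; norm_num
  have e1 : (1 / 4 : ℝ) ^ 2 ^ s ≤ β / 3 := by
    have h1 : (1 / 4 : ℝ) ≤ Real.exp (-1) := by
      rw [Real.exp_neg, ← one_div]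
      exact one_div_le_one_div_of_le (Real.exp_pos _) (by linarith [Real.exp_one_lt_d9])
    calc (1 / 4 : ℝ) ^ 2 ^ s ≤ Real.exp (-1) ^ 2 ^ s := pow_le_pow_left₀ (by norm_num) h1 _
      _ = Real.exp (-r) := by rw [← Real.exp_nat_mul, hr]; push_cast; ring_nf
      _ ≤ Real.exp (-L) := Real.exp_le_exp.2 (by linarith)
      _ = β / 3 := by
          rw [hLdef, Real.exp_neg, Real.exp_log (by positivity), inv_div]
  rw [e2]; linarith

end AntiConcMain

section Mehler

lemma eval_hermite_succ_succ (m : ℕ) (z : ℝ) :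
    ((Polynomial.hermite (m + 2)).map (Int.castRingHom ℝ)).eval z =
      z * ((Polynomial.hermite (m + 1)).map (Int.castRingHom ℝ)).eval z -
      (m + 1) * ((Polynomial.hermite m).map (Int.castRingHom ℝ)).eval z := by
  rw [Polynomial.hermite_succ, derivative_hermite_succ]
  simp

lemma eval_hermite_rotate {a b : ℝ} (hab : a ^ 2 + b ^ 2 = 1) (s t : ℝ) (m : ℕ) :
    ∑ p ∈ Finset.HasAntidiagonal.antidiagonal m, (m.choose p.1 : ℝ) *
      (a ^ p.1 * ((Polynomial.hermite p.1).map (Int.castRingHom ℝ)).eval s *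
        (b ^ p.2 * ((Polynomial.hermite p.2).map (Int.castRingHom ℝ)).eval t)) =
      ((Polynomial.hermite m).map (Int.castRingHom ℝ)).eval (a * s + b * t) := by
  set H : ℕ → ℝ → ℝ := fun k z => ((Polynomial.hermite k).map (Int.castRingHom ℝ)).eval z with hH
  have H0 : ∀ z, H 0 z = 1 := fun z => by simp [hH]
  have H1 : ∀ z, H 1 z = z := fun z => by simp [hH]
  have H2 : ∀ k z, H (k + 2) z = z * H (k + 1) z - (k + 1) * H k z := eval_hermite_succ_succ
  have Hs : ∀ k z, H (k + 1) z = z * H k z - k * H (k - 1) z := by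
    intro k z
    cases k with
    | zero => simp [H0, H1]
    | succ k => rw [H2]; push_cast; simp
  set S : ℕ → ℝ := fun m => ∑ p ∈ Finset.HasAntidiagonal.antidiagonal m, (m.choose p.1 : ℝ) *
    (a ^ p.1 * H p.1 s * (b ^ p.2 * H p.2 t)) with hS
  have hrec : ∀ m, S (m + 2) = (a * s + b * t) * S (m + 1) - (m + 1) * S m := by
    intro m
    have e1 : S (m + 2) = _ := Finset.sum_antidiagonal_choose_succ_mul
      (fun p q => a ^ p * H p s * (b ^ q * H q t)) (m + 1)
    have e2 : ∑ p ∈ Finset.HasAntidiagonal.antidiagonal (m + 1), ((m + 1).choose p.1 : ℝ) *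
        (a ^ p.1 * H p.1 s * (b ^ (p.2 + 1) * (p.2 * H (p.2 - 1) t))) = b ^ 2 * ((m + 1) * S m) := by
      rw [Finset.Nat.sum_antidiagonal_succ', hS, Finset.mul_sum, Finset.mul_sum]
      simp only [Nat.cast_zero, zero_mul, mul_zero, zero_add]
      refine Finset.sum_congr rfl fun p hp => ?_
      have hp' := Finset.HasAntidiagonal.mem_antidiagonal.1 hp
      have hc : ((m + 1).choose p.1 : ℝ) * ((p.2 + 1 : ℕ) : ℝ) = (m + 1) * m.choose p.1 := by
        have h := Nat.add_one_mul_choose_eq m p.2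
        have h1 : m.choose p.1 = m.choose p.2 := by
          rw [← hp', Nat.choose_symm_add]
        have h2 : (m + 1).choose p.1 = (m + 1).choose (p.2 + 1) := by
          rw [← hp', show p.1 + p.2 + 1 = p.1 + (p.2 + 1) by ring, Nat.choose_symm_add]
        rw [h1, h2]
        exact_mod_cast h.symm
      simp only [Nat.add_sub_cancel]
      linear_combination (a ^ p.1 * H p.1 s * (b ^ (p.2 + 1 + 1) * H p.2 t)) * hc
    have e3 : ∑ p ∈ Finset.HasAntidiagonal.antidiagonal (m + 1), ((m + 1).choose p.2 : ℝ) *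
        (a ^ (p.1 + 1) * (p.1 * H (p.1 - 1) s) * (b ^ p.2 * H p.2 t)) = a ^ 2 * ((m + 1) * S m) := by
      rw [Finset.Nat.sum_antidiagonal_succ, hS, Finset.mul_sum, Finset.mul_sum]
      simp only [Nat.cast_zero, zero_mul, mul_zero, zero_add]
      refine Finset.sum_congr rfl fun p hp => ?_
      have hp' := Finset.HasAntidiagonal.mem_antidiagonal.1 hp
      have hc : ((m + 1).choose p.2 : ℝ) * ((p.1 + 1 : ℕ) : ℝ) = (m + 1) * m.choose p.1 := by
        have h := Nat.add_one_mul_choose_eq m p.1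
        have h2 : (m + 1).choose p.2 = (m + 1).choose (p.1 + 1) := by
          rw [← hp', show p.1 + p.2 + 1 = p.1 + 1 + p.2 by ring, Nat.choose_symm_add]
        rw [h2]
        exact_mod_cast h.symm
      simp only [Nat.add_sub_cancel]
      linear_combination (a ^ (p.1 + 1 + 1) * H p.1 s * (b ^ p.2 * H p.2 t)) * hc
    have e4 : ∑ p ∈ Finset.HasAntidiagonal.antidiagonal (m + 1), ((m + 1).choose p.1 : ℝ) *
        (a ^ p.1 * H p.1 s * (b ^ (p.2 + 1) * (t * H p.2 t))) = b * t * S (m + 1) := by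
      rw [hS, Finset.mul_sum]
      exact Finset.sum_congr rfl fun p _ => by ring
    have e5 : ∑ p ∈ Finset.HasAntidiagonal.antidiagonal (m + 1), ((m + 1).choose p.2 : ℝ) *
        (a ^ (p.1 + 1) * (s * H p.1 s) * (b ^ p.2 * H p.2 t)) = a * s * S (m + 1) := by
      rw [hS, Finset.mul_sum]
      refine Finset.sum_congr rfl fun p hp => ?_
      have h1 : (m + 1).choose p.2 = (m + 1).choose p.1 := by
        rw [← Finset.HasAntidiagonal.mem_antidiagonal.1 hp, Nat.choose_symm_add]
      rw [h1]; ring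
    have e6 : S (m + 2) = (b * t * S (m + 1) - b ^ 2 * ((m + 1) * S m)) +
        (a * s * S (m + 1) - a ^ 2 * ((m + 1) * S m)) := by
      rw [e1, ← e2, ← e3, ← e4, ← e5, ← Finset.sum_sub_distrib, ← Finset.sum_sub_distrib]
      congr 1
      · exact Finset.sum_congr rfl fun p _ => by rw [Hs p.2 t]; ring
      · exact Finset.sum_congr rfl fun p _ => by rw [Hs p.1 s]; ring
    rw [e6]
    linear_combination (-(m + 1) * S m) * hab
  have hmain : ∀ m, S m = H m (a * s + b * t) ∧ S (m + 1) = H (m + 1) (a * s + b * t) := by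
    intro m
    induction m with
    | zero =>
      constructor
      · simp [hS, H0]
      · simp [hS, H0, H1, Finset.Nat.antidiagonal_succ]; ring
    | succ m ih =>
      refine ⟨ih.2, ?_⟩
      rw [hrec, H2, ih.1, ih.2]
  exact (hmain m).1

lemma hermiteFn_rotate {a b : ℝ} (hab : a ^ 2 + b ^ 2 = 1) (s t : ℝ) (m : ℕ) :
    hermiteFn m (a * s + b * t) = ∑ q ∈ Finset.range (m + 1),
      (√(m.choose q : ℝ) * a ^ (m - q) * b ^ q) * hermiteFn (m - q) s * hermiteFn q t := by
  rw [hermiteFn, ← eval_hermite_rotate hab, ← Finset.Nat.sum_antidiagonal_swap,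
    Finset.Nat.sum_antidiagonal_eq_sum_range_succ_mk, Finset.sum_div]
  refine Finset.sum_congr rfl fun q hq => ?_
  have hq' : q ≤ m := Nat.lt_succ_iff.1 (Finset.mem_range.1 hq)
  have h := Nat.choose_mul_factorial_mul_factorial hq'
  have h2 : √(m.factorial : ℝ) = √(m.choose q : ℝ) * √(q.factorial : ℝ) *
      √((m - q).factorial : ℝ) := by
    rw [← h]; push_cast
    rw [Real.sqrt_mul (by positivity), Real.sqrt_mul (by positivity)]
  have hc : (0 : ℝ) < m.choose q := by exact_mod_cast Nat.choose_pos hq'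
  have hc' : (√(m.choose q : ℝ)) ^ 2 = m.choose q := Real.sq_sqrt hc.le
  have p1 : √(m.choose q : ℝ) ≠ 0 := by positivity
  have p2 : √(q.factorial : ℝ) ≠ 0 := by positivity
  have p3 : √((m - q).factorial : ℝ) ≠ 0 := by positivity
  simp only [Prod.swap_prod_mk, hermiteFn, h2, Nat.choose_symm hq']
  field_simp
  rw [hc']
  ring

end Mehler

section ZoomExpansion

variable {ι : Type*} [Fintype ι] [DecidableEq ι]

lemma totalDegree_hermPoly_le (α : ι → ℕ) : (hermPoly α).totalDegree ≤ ∑ i, α i := by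
  refine (totalDegree_finsetProd _ _).trans (Finset.sum_le_sum fun i _ => ?_)
  have hd : (hermP (α i)).natDegree ≤ α i := by
    refine (Polynomial.natDegree_smul_le _ _).trans (Polynomial.natDegree_map_le.trans ?_)
    rw [Polynomial.natDegree_hermite]
  rw [Polynomial.aeval_eq_sum_range]
  refine totalDegree_finsetSum_le fun j hj => ?_
  refine (totalDegree_smul_le _ _).trans ((totalDegree_pow _ _).trans ?_)
  rw [totalDegree_X, mul_one]
  have := Finset.mem_range.1 hj
  omega

/-- The coefficient of `h_γ(x) h_β(y)` in `h_{β+γ}(a x + b y)`. -/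
noncomputable def zoomCoef (a b : ℝ) (β γ : ι → ℕ) : ℝ :=
  ∏ i, (√((β i + γ i).choose (β i) : ℝ) * a ^ γ i * b ^ β i)

lemma eval_zoom {n : ℕ} (g : MvPolynomial (Fin n) ℝ) (lam : ℝ) (x y : Fin n → ℝ) :
    eval y (zoom g lam x) = eval (fun i => √(1 - lam) * x i + √lam * y i) g := by
  induction g using MvPolynomial.induction_on with
  | C a => simp [zoom]
  | add p q hp hq => simp only [zoom, map_add] at *; rw [hp, hq]
  | mul_X p i hp => simp only [zoom, map_mul, aeval_X] at *; rw [hp]; simp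

lemma zoom_hermPoly {n : ℕ} {lam : ℝ} (h0 : 0 ≤ lam) (h1 : lam ≤ 1) (x : Fin n → ℝ)
    (α : Fin n → ℕ) : zoom (hermPoly α) lam x =
      ∑ β ∈ Fintype.piFinset fun i => Finset.range (α i + 1),
        (zoomCoef √(1 - lam) √lam β (α - β) * eval x (hermPoly (α - β))) • hermPoly β := by
  have hab : √(1 - lam) ^ 2 + √lam ^ 2 = 1 := by
    rw [Real.sq_sqrt h0, Real.sq_sqrt (by linarith)]; ring
  refine MvPolynomial.funext fun y => ?_
  rw [eval_zoom, eval_hermPoly]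
  simp_rw [hermiteFn_rotate hab]
  rw [Finset.prod_univ_sum, map_sum]
  refine Finset.sum_congr rfl fun β hβ => ?_
  rw [smul_eval, eval_hermPoly, eval_hermPoly, zoomCoef, ← Finset.prod_mul_distrib,
    ← Finset.prod_mul_distrib]
  refine Finset.prod_congr rfl fun i _ => ?_
  have : β i ≤ α i := by
    have := Finset.mem_range.1 (Fintype.mem_piFinset.1 hβ i)
    omega
  rw [Pi.sub_apply, Nat.add_sub_cancel' this]

lemma zoom_eq_sum {n D : ℕ} {f : MvPolynomial (Fin n) ℝ} (hf : f.totalDegree ≤ D) (lam : ℝ)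
    (x : Fin n → ℝ) :
    zoom f lam x = ∑ α ∈ multiIdx (Fin n) D, hcf f α • zoom (hermPoly α) lam x := by
  conv_lhs => rw [eq_sum_hermPoly hf]
  simp only [zoom, map_sum, map_smul]

lemma totalDegree_zoom_le {n D : ℕ} {f : MvPolynomial (Fin n) ℝ} (hf : f.totalDegree ≤ D)
    {lam : ℝ} (h0 : 0 ≤ lam) (h1 : lam ≤ 1) (x : Fin n → ℝ) :
    (zoom f lam x).totalDegree ≤ D := by
  rw [zoom_eq_sum hf]
  refine totalDegree_finsetSum_le fun α hα => (totalDegree_smul_le _ _).trans ?_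
  rw [zoom_hermPoly h0 h1]
  refine totalDegree_finsetSum_le fun β hβ => (totalDegree_smul_le _ _).trans ?_
  refine (totalDegree_hermPoly_le β).trans (le_trans ?_ (mem_multiIdx.1 hα))
  refine Finset.sum_le_sum fun i _ => ?_
  have := Finset.mem_range.1 (Fintype.mem_piFinset.1 hβ i)
  omega

lemma hcf_zoom {n D : ℕ} {f : MvPolynomial (Fin n) ℝ} (hf : f.totalDegree ≤ D)
    {lam : ℝ} (h0 : 0 ≤ lam) (h1 : lam ≤ 1) (x : Fin n → ℝ) (β : Fin n → ℕ) :
    hcf (zoom f lam x) β = ∑ γ ∈ multiIdx (Fin n) D,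
      eval x (hermPoly γ) * (zoomCoef √(1 - lam) √lam β γ * hcf f (β + γ)) := by
  classical
  have hz : ∀ α, hcf (zoom (hermPoly α) lam x) β =
      if β ≤ α then zoomCoef √(1 - lam) √lam β (α - β) * eval x (hermPoly (α - β)) else 0 := by
    intro α
    rw [← hcfl_apply, zoom_hermPoly h0 h1, map_sum]
    simp only [map_smul, hcfl_apply, hcf_hermPoly, smul_eq_mul, mul_ite, mul_one, mul_zero]
    rw [Finset.sum_ite_eq']
    refine if_congr ?_ rfl rfl
    simp [Fintype.mem_piFinset, Pi.le_def]
  rw [← hcfl_apply, zoom_eq_sum hf, map_sum]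
  simp only [map_smul, hcfl_apply, hz, smul_eq_mul]
  symm
  rw [← Finset.sum_filter_of_ne (s := multiIdx (Fin n) D) (p := fun γ => ∑ i, (β + γ) i ≤ D)]
  · refine Finset.sum_of_injOn (fun γ => β + γ) ?_ ?_ ?_ ?_
    · intro a _ b _ hab
      exact add_left_cancel hab
    · intro γ hγ
      exact Finset.mem_coe.2 (mem_multiIdx.2 (Finset.mem_filter.1 (Finset.mem_coe.1 hγ)).2)
    · intro α hα hn
      by_cases hβ : β ≤ α
      · refine absurd ⟨α - β, ?_, add_tsub_cancel_of_le hβ⟩ hn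
        refine Finset.mem_coe.2 (Finset.mem_filter.2 ⟨mem_multiIdx.2 ?_, ?_⟩)
        · refine (Finset.sum_le_sum fun i _ => ?_).trans (mem_multiIdx.1 hα)
          simp
        · rw [add_tsub_cancel_of_le hβ]; exact mem_multiIdx.1 hα
      · simp [hβ]
    · intro γ _
      rw [if_pos le_self_add, add_tsub_cancel_left]
      ring
  · intro γ _ hne
    by_contra hlt
    refine hne ?_
    rw [hcf_eq_zero_of_totalDegree_lt D f (β + γ) hf (not_le.1 hlt)]
    ring

end ZoomExpansion

section MeanSquare

variable {ι κ : Type*} [Fintype ι] [DecidableEq ι] [Fintype κ] [DecidableEq κ]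

/-- The polynomial `x ↦ E_υ (∑ γ ∈ s, e_γ(υ) h_γ(x))²`. -/
noncomputable def meanSq (s : Finset (ι → ℕ)) (e : (ι → ℕ) → MvPolynomial κ ℝ) :
    MvPolynomial ι ℝ :=
  ∑ γ ∈ s, ∑ γ' ∈ s, gE (e γ * e γ') • (hermPoly γ * hermPoly γ')

lemma eval_meanSq (s : Finset (ι → ℕ)) (e : (ι → ℕ) → MvPolynomial κ ℝ) (x : ι → ℝ) :
    eval x (meanSq s e) = gE ((∑ γ ∈ s, eval x (hermPoly γ) • e γ) ^ 2) := by
  rw [sq, Finset.sum_mul_sum, gE_sum, meanSq, map_sum]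
  refine Finset.sum_congr rfl fun γ _ => ?_
  rw [gE_sum, map_sum]
  refine Finset.sum_congr rfl fun γ' _ => ?_
  rw [smul_eval, map_mul, smul_mul_smul_comm, gE_smul]
  ring

lemma gE_nonneg {p : MvPolynomial κ ℝ} (hp : ∀ x, 0 ≤ eval x p) : 0 ≤ gE p := integral_nonneg hp

lemma gE_sq_nonneg (p : MvPolynomial κ ℝ) : 0 ≤ gE (p ^ 2) :=
  gE_nonneg fun x => by rw [map_pow]; positivity

lemma eval_meanSq_nonneg (s : Finset (ι → ℕ)) (e : (ι → ℕ) → MvPolynomial κ ℝ) (x : ι → ℝ) :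
    0 ≤ eval x (meanSq s e) := by
  rw [eval_meanSq]; exact gE_sq_nonneg _

lemma gE_meanSq (s : Finset (ι → ℕ)) (e : (ι → ℕ) → MvPolynomial κ ℝ) :
    gE (meanSq s e) = ∑ γ ∈ s, gE (e γ ^ 2) := by
  rw [meanSq, gE_sum]
  refine Finset.sum_congr rfl fun γ hγ => ?_
  rw [gE_sum]
  have : ∀ γ' ∈ s, gE (gE (e γ * e γ') • (hermPoly γ * hermPoly γ')) =
      if γ = γ' then gE (e γ * e γ') else 0 := by
    intro γ' _
    have h : gE (hermPoly γ * hermPoly γ') = if γ = γ' then 1 else 0 := hcf_hermPoly γ' γ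
    rw [gE_smul, h]
    simp
  rw [Finset.sum_congr rfl this, Finset.sum_ite_eq, if_pos hγ, sq]

lemma totalDegree_meanSq_le {k : ℕ} {s : Finset (ι → ℕ)} (hs : ∀ γ ∈ s, ∑ i, γ i ≤ k)
    (e : (ι → ℕ) → MvPolynomial κ ℝ) : (meanSq s e).totalDegree ≤ 2 * k := by
  refine totalDegree_finsetSum_le fun γ hγ => totalDegree_finsetSum_le fun γ' hγ' => ?_
  refine (totalDegree_smul_le _ _).trans ((totalDegree_mul _ _).trans ?_)
  have h1 := (totalDegree_hermPoly_le γ).trans (hs γ hγ)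
  have h2 := (totalDegree_hermPoly_le γ').trans (hs γ' hγ')
  omega

lemma eval_meanSq_ge {s t : Finset (ι → ℕ)} (hst : s ⊆ t) (e : (ι → ℕ) → MvPolynomial κ ℝ)
    (x : ι → ℝ) :
    eval x (meanSq s e) / 2 - eval x (meanSq (t \ s) e) ≤ eval x (meanSq t e) := by
  simp only [eval_meanSq]
  rw [← Finset.sum_sdiff hst]
  set A := ∑ γ ∈ s, eval x (hermPoly γ) • e γ
  set B := ∑ γ ∈ t \ s, eval x (hermPoly γ) • e γ
  have h : (B + A) ^ 2 = (1 / 2 : ℝ) • A ^ 2 - B ^ 2 + (1 / 2 : ℝ) • (A + (2 : ℝ) • B) ^ 2 := by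
    have h2 : C (1 / 2 : ℝ) * 2 = (1 : MvPolynomial κ ℝ) := by
      rw [show (2 : MvPolynomial κ ℝ) = C 2 from rfl, ← C_mul]
      norm_num
    have h3 : (C 2 : MvPolynomial κ ℝ) = 2 := rfl
    simp only [smul_eq_C_mul, h3]
    linear_combination (- A ^ 2 - 2 * A * B - 2 * B ^ 2) * h2
  rw [h, gE_add, gE_sub, gE_smul, gE_smul]
  have := gE_sq_nonneg (A + (2 : ℝ) • B)
  linarith

end MeanSquare

section NiceFamilies

variable {n I d : ℕ} {g : (Fin I → ℝ) → MvPolynomial (Fin n) ℝ}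

lemma NiceFamily.exists_hcf_poly (hg : NiceFamily n I d g) :
    ∃ c : (Fin n → ℕ) → MvPolynomial (Fin I) ℝ, ∀ α υ, hcf (g υ) α = eval υ (c α) := by
  choose P hP1 hP2 using hg.2
  let T : Finset (Fin n →₀ ℕ) := (multiIdx (Fin n) d).map Finsupp.equivFunOnFinite.symm.toEmbedding
  have hsupp : ∀ υ, (g υ).support ⊆ T := by
    intro υ m hm
    refine Finset.mem_map.2 ⟨Finsupp.equivFunOnFinite m, mem_multiIdx.2 ?_, by simp⟩
    have := (le_totalDegree hm).trans (hg.1 υ)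
    rw [Finsupp.sum_fintype _ _ (fun _ => rfl)] at this
    simpa using this
  refine ⟨fun α => ∑ m ∈ T, hcf (monomial m 1) α • P m, fun α υ => ?_⟩
  have h1 : g υ = ∑ m ∈ T, coeff m (g υ) • monomial m 1 := by
    conv_lhs => rw [(g υ).as_sum]
    rw [Finset.sum_subset (hsupp υ)]
    · exact Finset.sum_congr rfl fun m _ => by rw [smul_monomial, smul_eq_mul, mul_one]
    · intro m _ hm
      rw [notMem_support_iff.1 hm, map_zero]
  rw [← hcfl_apply]
  conv_lhs => rw [h1]
  rw [map_sum, map_sum]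
  refine Finset.sum_congr rfl fun m _ => ?_
  rw [hcfl_apply, hcf_smul, smul_eval, hP2]
  ring

variable {c : (Fin n → ℕ) → MvPolynomial (Fin I) ℝ}

lemma integral_sq_eval (p : MvPolynomial (Fin I) ℝ) :
    ∫ υ, eval υ p ^ 2 ∂(gaussianN I) = gE (p ^ 2) := by
  simp [gE, gaussianN]

lemma integrable_sq_eval (p : MvPolynomial (Fin I) ℝ) :
    Integrable (fun υ => eval υ p ^ 2) (gaussianN I) :=
  integrable_of_eval (p ^ 2) fun υ => by rw [map_pow]

lemma integral_hyperVarGE_eq {f : (Fin I → ℝ) → MvPolynomial (Fin n) ℝ}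
    (hf : ∀ υ, (f υ).totalDegree ≤ d) (hc : ∀ α υ, hcf (f υ) α = eval υ (c α)) (R : ℝ) (m : ℕ) :
    ∫ υ, hyperVarGE R m (f υ) ∂(gaussianN I) = ∑ α ∈ multiIdx (Fin n) d,
      if m ≤ ∑ i, α i then R ^ (2 * ∑ i, α i) * gE (c α ^ 2) else 0 := by
  simp_rw [fun υ => hyperVarGE_eq_sum R m (hf υ), hc]
  rw [integral_finsetSum]
  · refine Finset.sum_congr rfl fun α _ => ?_
    split_ifs
    · rw [integral_const_mul, integral_sq_eval]
    · simp
  · intro α _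
    split_ifs
    · exact (integrable_sq_eval _).const_mul _
    · exact integrable_zero _ _ _

lemma integral_norm2sq_eq {f : (Fin I → ℝ) → MvPolynomial (Fin n) ℝ}
    (hf : ∀ υ, (f υ).totalDegree ≤ d) (hc : ∀ α υ, hcf (f υ) α = eval υ (c α)) :
    ∫ υ, norm2sq (f υ) ∂(gaussianN I) = ∑ α ∈ multiIdx (Fin n) d, gE (c α ^ 2) := by
  simp_rw [norm2sq_eq_gE, fun υ => gE_sq_eq_sum (hf υ), hc]
  rw [integral_finsetSum _ fun α _ => integrable_sq_eval _]
  exact Finset.sum_congr rfl fun α _ => integral_sq_eval _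

/-- The Hermite coefficients of the zoom, as polynomials in the parameter. -/
noncomputable def zoomFam (c : (Fin n → ℕ) → MvPolynomial (Fin I) ℝ) (lam : ℝ) (β γ : Fin n → ℕ) :
    MvPolynomial (Fin I) ℝ :=
  zoomCoef √(1 - lam) √lam β γ • c (β + γ)

lemma hcf_zoom_eq_eval (hg : ∀ υ, (g υ).totalDegree ≤ d) (hc : ∀ α υ, hcf (g υ) α = eval υ (c α))
    {lam : ℝ} (h0 : 0 ≤ lam) (h1 : lam ≤ 1) (x : Fin n → ℝ) (β : Fin n → ℕ) (υ : Fin I → ℝ) :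
    hcf (zoom (g υ) lam x) β = eval υ
      (∑ γ ∈ multiIdx (Fin n) d, eval x (hermPoly γ) • zoomFam c lam β γ) := by
  rw [hcf_zoom (hg υ) h0 h1, map_sum]
  refine Finset.sum_congr rfl fun γ _ => ?_
  rw [smul_eval, zoomFam, smul_eval, hc]

lemma integral_hyperVarGE_zoom (hg : ∀ υ, (g υ).totalDegree ≤ d)
    (hc : ∀ α υ, hcf (g υ) α = eval υ (c α)) {lam : ℝ} (h0 : 0 ≤ lam) (h1 : lam ≤ 1)
    (x : Fin n → ℝ) (R : ℝ) (m : ℕ) :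
    ∫ υ, hyperVarGE R m (zoom (g υ) lam x) ∂(gaussianN I) =
      eval x (∑ β ∈ (multiIdx (Fin n) d).filter (fun β => m ≤ ∑ i, β i),
        (R ^ (2 * ∑ i, β i)) • meanSq (multiIdx (Fin n) d) (zoomFam c lam β)) := by
  rw [integral_hyperVarGE_eq (fun υ => totalDegree_zoom_le (hg υ) h0 h1 x)
    (fun β υ => hcf_zoom_eq_eval hg hc h0 h1 x β υ), map_sum, Finset.sum_filter]
  simp_rw [smul_eval, eval_meanSq]

lemma integral_norm2sq_zoom_ge (hg : ∀ υ, (g υ).totalDegree ≤ d)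
    (hc : ∀ α υ, hcf (g υ) α = eval υ (c α)) {lam : ℝ} (h0 : 0 ≤ lam) (h1 : lam ≤ 1)
    (x : Fin n → ℝ) :
    eval x (meanSq (multiIdx (Fin n) d) (zoomFam c lam 0)) ≤
      ∫ υ, norm2sq (zoom (g υ) lam x) ∂(gaussianN I) := by
  rw [integral_norm2sq_eq (fun υ => totalDegree_zoom_le (hg υ) h0 h1 x)
    (fun β υ => hcf_zoom_eq_eval hg hc h0 h1 x β υ), eval_meanSq]
  exact Finset.single_le_sum (f := fun β => gE ((∑ γ ∈ multiIdx (Fin n) d,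
    eval x (hermPoly γ) • zoomFam c lam β γ) ^ 2)) (fun β _ => gE_sq_nonneg _)
    (mem_multiIdx.2 (by simp))

end NiceFamilies

section ZoomMoments

variable {ι κ : Type*} [Fintype ι] [DecidableEq ι] [Fintype κ] [DecidableEq κ]

/-- The part of the binomial expansion of `(1 + μ) ^ |α|` of order at least `m` in `μ`. -/
noncomputable def binomTail (μ : ℝ) (m : ℕ) (α : ι → ℕ) : ℝ :=
  ∑ β ∈ Fintype.piFinset (fun i => Finset.range (α i + 1)),
    if m ≤ ∑ i, β i then (∏ i, ((α i).choose (β i) : ℝ)) * μ ^ (∑ i, β i) else 0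

lemma sum_prod_choose (μ : ℝ) (α : ι → ℕ) :
    ∑ β ∈ Fintype.piFinset (fun i => Finset.range (α i + 1)),
      (∏ i, ((α i).choose (β i) : ℝ)) * μ ^ (∑ i, β i) = (1 + μ) ^ (∑ i, α i) := by
  rw [← Finset.prod_pow_eq_pow_sum]
  have : ∀ i, (1 + μ) ^ α i = ∑ j ∈ Finset.range (α i + 1), ((α i).choose j : ℝ) * μ ^ j := by
    intro i
    rw [add_comm, add_pow]
    exact Finset.sum_congr rfl fun j _ => by rw [one_pow]; ring
  simp_rw [this]
  rw [Finset.prod_univ_sum]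
  refine Finset.sum_congr rfl fun β _ => ?_
  rw [Finset.prod_mul_distrib, Finset.prod_pow_eq_pow_sum]

lemma binomTail_le_pow {μ : ℝ} (h0 : 0 ≤ μ) (h1 : μ ≤ 1) (m : ℕ) (α : ι → ℕ) :
    binomTail μ m α ≤ 2 ^ (∑ i, α i) * μ ^ m := by
  have h := sum_prod_choose 1 α
  rw [one_add_one_eq_two] at h
  rw [← h, Finset.sum_mul]
  refine Finset.sum_le_sum fun β _ => ?_
  have hp : (0 : ℝ) ≤ ∏ i, ((α i).choose (β i) : ℝ) := by positivity
  rw [one_pow, mul_one]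
  split_ifs with h
  · exact mul_le_mul_of_nonneg_left (pow_le_pow_of_le_one h0 h1 h) hp
  · positivity

lemma binomTail_le_sub_one {μ : ℝ} (h0 : 0 ≤ μ) {m : ℕ} (hm : 1 ≤ m) (α : ι → ℕ) :
    binomTail μ m α ≤ (1 + μ) ^ (∑ i, α i) - 1 := by
  rw [← sum_prod_choose]
  have h0m : (0 : ι → ℕ) ∈ Fintype.piFinset (fun i => Finset.range (α i + 1)) := by simp
  rw [binomTail, ← Finset.add_sum_erase _ _ h0m, ← Finset.add_sum_erase _ _ h0m]
  have : ¬ m ≤ ∑ i, (0 : ι → ℕ) i := by simp; omega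
  rw [if_neg this]
  simp only [Pi.zero_apply, Nat.choose_zero_right, Nat.cast_one, Finset.prod_const_one,
    Finset.sum_const_zero, pow_zero, mul_one, zero_add, add_sub_cancel_left]
  refine Finset.sum_le_sum fun β _ => ?_
  split_ifs with h
  · rfl
  · positivity

lemma zoomCoef_sq_le {lam : ℝ} (h0 : 0 ≤ lam) (h1 : lam ≤ 1) (β γ : ι → ℕ) :
    zoomCoef √(1 - lam) √lam β γ ^ 2 ≤
      (∏ i, (((β + γ) i).choose (β i) : ℝ)) * lam ^ (∑ i, β i) := by
  rw [zoomCoef, ← Finset.prod_pow, ← Finset.prod_pow_eq_pow_sum, ← Finset.prod_mul_distrib]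
  refine Finset.prod_le_prod (fun i _ => sq_nonneg _) fun i _ => ?_
  have e1 : (√(1 - lam) ^ γ i) ^ 2 = (1 - lam) ^ γ i := by
    rw [← pow_mul, mul_comm, pow_mul, Real.sq_sqrt (by linarith)]
  have e2 : (√lam ^ β i) ^ 2 = lam ^ β i := by
    rw [← pow_mul, mul_comm, pow_mul, Real.sq_sqrt h0]
  rw [mul_pow, mul_pow, e1, e2, Real.sq_sqrt (by positivity), Pi.add_apply]
  have : (1 - lam) ^ γ i ≤ 1 := pow_le_one₀ (by linarith) (by linarith)
  refine mul_le_mul_of_nonneg_right ?_ (by positivity)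
  exact mul_le_of_le_one_right (by positivity) this

lemma zoomCoef_zero_sq {lam : ℝ} (h1 : lam ≤ 1) (γ : ι → ℕ) :
    zoomCoef √(1 - lam) √lam 0 γ ^ 2 = (1 - lam) ^ (∑ i, γ i) := by
  rw [zoomCoef, ← Finset.prod_pow, ← Finset.prod_pow_eq_pow_sum]
  refine Finset.prod_congr rfl fun i _ => ?_
  have e1 : (√(1 - lam) ^ γ i) ^ 2 = (1 - lam) ^ γ i := by
    rw [← pow_mul, mul_comm, pow_mul, Real.sq_sqrt (by linarith)]
  simp [e1]

lemma sum_sum_add_le {s : Finset (ι → ℕ)} {W : (ι → ℕ) → ℝ} (hW : ∀ α, 0 ≤ W α)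
    (hWs : ∀ α ∉ s, W α = 0) {μ : ℝ} (h0 : 0 ≤ μ) (m : ℕ) :
    ∑ β ∈ s.filter (fun β => m ≤ ∑ i, β i), ∑ γ ∈ s,
      (∏ i, (((β + γ) i).choose (β i) : ℝ)) * μ ^ (∑ i, β i) * W (β + γ) ≤
      ∑ α ∈ s, binomTail μ m α * W α := by
  classical
  set F : (ι → ℕ) → (ι → ℕ) → ℝ := fun α β =>
    if m ≤ ∑ i, β i then (∏ i, ((α i).choose (β i) : ℝ)) * μ ^ (∑ i, β i) else 0 with hF
  have hF0 : ∀ α β, 0 ≤ F α β := fun α β => by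
    simp only [hF]; split_ifs <;> positivity
  have h1 : ∑ β ∈ s.filter (fun β => m ≤ ∑ i, β i), ∑ γ ∈ s,
      (∏ i, (((β + γ) i).choose (β i) : ℝ)) * μ ^ (∑ i, β i) * W (β + γ) =
      ∑ β ∈ s, ∑ γ ∈ s, F (β + γ) β * W (β + γ) := by
    rw [Finset.sum_filter]
    refine Finset.sum_congr rfl fun β _ => ?_
    split_ifs with h
    · refine Finset.sum_congr rfl fun γ _ => ?_
      simp only [hF, if_pos h]
    · exact (Finset.sum_eq_zero fun γ _ => by simp only [hF, if_neg h, zero_mul]).symm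
  have h2 : ∀ β γ, F (β + γ) β * W (β + γ) = ∑ α ∈ s, if β + γ = α then F α β * W α else 0 := by
    intro β γ
    rw [Finset.sum_ite_eq]
    split_ifs with h
    · rfl
    · rw [hWs _ h, mul_zero]
  rw [h1]
  simp_rw [h2]
  rw [Finset.sum_congr rfl fun β _ => Finset.sum_comm, Finset.sum_comm]
  refine Finset.sum_le_sum fun α _ => ?_
  have h3 : ∀ β ∈ s, (∑ γ ∈ s, if β + γ = α then F α β * W α else 0) ≤
      if β ∈ Fintype.piFinset (fun i => Finset.range (α i + 1)) then F α β * W α else 0 := by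
    intro β _
    have hnn := mul_nonneg (hF0 α β) (hW α)
    by_cases hβ : β ∈ Fintype.piFinset (fun i => Finset.range (α i + 1))
    · rw [if_pos hβ]
      calc (∑ γ ∈ s, if β + γ = α then F α β * W α else 0)
          ≤ ∑ γ ∈ s, if γ = α - β then F α β * W α else 0 := by
            refine Finset.sum_le_sum fun γ _ => ?_
            by_cases h : β + γ = α
            · rw [if_pos h, if_pos (by rw [← h, add_tsub_cancel_left])]
            · rw [if_neg h]; split_ifs
              · exact hnn
              · rfl
        _ ≤ _ := by
            rw [Finset.sum_ite_eq']
            split_ifs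
            · rfl
            · exact hnn
    · rw [if_neg hβ]
      refine (Finset.sum_eq_zero fun γ _ => if_neg fun h => hβ ?_).le
      rw [Fintype.mem_piFinset]
      intro i
      rw [← h, Finset.mem_range, Pi.add_apply]
      omega
  refine (Finset.sum_le_sum h3).trans ?_
  rw [← Finset.sum_filter, binomTail, Finset.sum_mul]
  refine Finset.sum_le_sum_of_subset_of_nonneg (fun β hβ => (Finset.mem_filter.1 hβ).2)
    fun β _ _ => mul_nonneg (hF0 α β) (hW α)

end ZoomMoments

lemma gE_pow_two_le {ι : Type*} [Fintype ι] [DecidableEq ι] (p : MvPolynomial ι ℝ) :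
    gE p ^ 2 ≤ gE (p ^ 2) := by
  have h : (p - C (gE p)) ^ 2 = p ^ 2 - (2 * gE p) • p + C (gE p ^ 2) := by
    simp only [smul_eq_C_mul, C_mul, C_pow]
    rw [show (C 2 : MvPolynomial ι ℝ) = 2 from rfl]
    ring
  have h2 := gE_sq_nonneg (p - C (gE p))
  have h3 : gE (C (gE p ^ 2) : MvPolynomial ι ℝ) = gE p ^ 2 := by
    simp [gE]
  rw [h, gE_add, gE_sub, gE_smul, h3] at h2
  nlinarith

section Numerics

lemma one_add_pow_sub_one_le {μ : ℝ} (h0 : 0 ≤ μ) {d j : ℕ} (hj : j ≤ d) (hd : d * μ ≤ 1) :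
    (1 + μ) ^ j - 1 ≤ 2 * d * μ := by
  have hjd : (j : ℝ) * μ ≤ d * μ := by gcongr
  have hj0 : 0 ≤ (j : ℝ) * μ := by positivity
  have h1 : (1 + μ) ^ j ≤ Real.exp (j * μ) := by
    rw [Real.exp_nat_mul]
    exact pow_le_pow_left₀ (by linarith) (by linarith [Real.add_one_le_exp μ]) _
  have h2 := Real.abs_exp_sub_one_le (x := j * μ) (by rw [abs_of_nonneg hj0]; linarith)
  rw [abs_of_nonneg hj0] at h2
  have := le_abs_self (Real.exp (j * μ) - 1)
  linarith

lemma log_twelve_div_le {β : ℝ} (h0 : 0 < β) (h1 : β < 1) :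
    Real.log (3 / (β / 4)) ≤ 3 * Real.log (3 / β) := by
  have hL := one_lt_log_three_div h0 h1
  have : (3 : ℝ) / (β / 4) = 2 ^ 2 * (3 / β) := by field_simp; norm_num
  rw [this, Real.log_mul (by norm_num) (by positivity), Real.log_pow]
  have := Real.log_two_lt_d9
  push_cast
  linarith

lemma mul_log_three_div_sq_le {b : ℝ} (h0 : 0 < b) : b * Real.log (3 / b ^ 2) ≤ 2 := by
  rw [Real.log_div (by norm_num) (by positivity), Real.log_pow]
  have h3 := Real.log_le_sub_one_of_pos (show (0 : ℝ) < 3 by norm_num)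
  have h4 := Real.one_sub_inv_le_log_of_pos h0
  have h5 : b * (1 - b⁻¹) ≤ b * Real.log b := by gcongr
  rw [mul_sub, mul_inv_cancel₀ h0.ne'] at h5
  push_cast
  nlinarith

variable {c β : ℝ}

/-- The relative small-ball radius of the truncated mean square norm. -/
noncomputable def ballRatio (c β : ℝ) (k : ℕ) : ℝ := c * β ^ 2 / (k ^ 2 * Real.log (3 / β))

lemma ballRatio_pos (hc : 0 < c) (h0 : 0 < β) (h1 : β < 1) {k : ℕ} (hk : 1 ≤ k) :
    0 < ballRatio c β k := by
  have hL := one_lt_log_three_div h0 h1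
  have hk' : (0 : ℝ) < k := by exact_mod_cast hk
  unfold ballRatio
  positivity

/-- Constant in the local hyperconcentration theorem, before squaring. -/
noncomputable def zoomConst (c : ℝ) : ℝ := 384 + 8 / c

lemma zoomConst_ge (hc : 0 < c) : 384 ≤ zoomConst c := by
  have : 0 < 8 / c := by positivity
  unfold zoomConst; linarith

lemma mul_zoomConst_ge (hc : 0 < c) : 8 ≤ c * zoomConst c := by
  have : c * zoomConst c = 384 * c + 8 := by unfold zoomConst; field_simp
  linarith

lemma ballRatio_mul_pow_ge (hc : 0 < c) (h0 : 0 < β) (h1 : β < 1) {k : ℕ} (hk : 1 ≤ k) {S : ℝ}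
    (hS : zoomConst c ^ 2 * k * Real.log (3 / β) / β ≤ S) :
    192 ≤ β * ballRatio c β k ^ k * S ^ (2 * (k + 1)) := by
  have hL := one_lt_log_three_div h0 h1
  have hk' : (1 : ℝ) ≤ k := by exact_mod_cast hk
  have hA := zoomConst_ge hc
  have hcA := mul_zoomConst_ge hc
  set A := zoomConst c
  set L := Real.log (3 / β) with hLdef
  have hT0 : 0 ≤ A ^ 2 * k * L / β := by positivity
  have hS2 : (A ^ 2 * k * L / β) ^ 2 ≤ S ^ 2 := pow_le_pow_left₀ hT0 hS 2
  have hq := ballRatio_pos hc h0 h1 hk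
  have e1 : 1 ≤ ballRatio c β k * S ^ 2 := by
    calc (1 : ℝ) ≤ c * A * (A ^ 3 * L) := by
          have : 1 ≤ A ^ 3 * L := one_le_mul_of_one_le_of_one_le
            (one_le_pow₀ (by linarith)) hL.le
          nlinarith
      _ = ballRatio c β k * (A ^ 2 * k * L / β) ^ 2 := by
          unfold ballRatio
          rw [← hLdef]
          field_simp
      _ ≤ _ := by gcongr
  have e2 : 192 ≤ β * S ^ 2 := by
    have hkL : 1 ≤ (k * L) ^ 2 := one_le_pow₀ (one_le_mul_of_one_le_of_one_le hk' hL.le)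
    have hA4 : 192 ≤ A ^ 4 := by
      calc (192 : ℝ) ≤ 384 ^ 4 := by norm_num
        _ ≤ A ^ 4 := by gcongr
    calc (192 : ℝ) ≤ A ^ 4 * (k * L) ^ 2 := by nlinarith
      _ ≤ A ^ 4 * (k * L) ^ 2 / β := by
          rw [le_div_iff₀ h0]
          exact mul_le_of_le_one_right (by positivity) h1.le
      _ = β * (A ^ 2 * k * L / β) ^ 2 := by field_simp
      _ ≤ _ := by gcongr
  calc (192 : ℝ) ≤ (ballRatio c β k * S ^ 2) ^ k * (β * S ^ 2) := by
        have := one_le_pow₀ e1 (n := k)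
        nlinarith
    _ = β * ballRatio c β k ^ k * S ^ (2 * (k + 1)) := by
        rw [mul_pow (ballRatio c β k) (S ^ 2) k, ← pow_mul]
        ring

lemma two_pow_mul_pow_le (hc : 0 < c) (h0 : 0 < β) (h1 : β < 1) {k : ℕ} (hk : 1 ≤ k)
    {ε μ : ℝ} (hε0 : 0 < ε) (hε1 : ε ≤ 1) (hμ0 : 0 ≤ μ)
    (hμ : μ ≤ ε * β ^ 5 / (zoomConst c ^ 2 * k ^ 4)) :
    2 ^ k * μ ^ (k / 2 + 1) ≤ ε * β * ballRatio c β k ^ k / 384 := by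
  have hL := one_lt_log_three_div h0 h1
  have hk' : (1 : ℝ) ≤ k := by exact_mod_cast hk
  have hA := zoomConst_ge hc
  have hcA := mul_zoomConst_ge hc
  set A := zoomConst c
  have hA0 : 0 < A := by linarith
  obtain ⟨b, hb0, rfl⟩ : ∃ b : ℝ, 0 < b ∧ β = b ^ 2 :=
    ⟨√β, Real.sqrt_pos.2 h0, (Real.sq_sqrt h0.le).symm⟩
  have hb1 : b < 1 := by nlinarith
  have hbL := mul_log_three_div_sq_le hb0
  set L := Real.log (3 / b ^ 2) with hLdef
  set t := b ^ 5 / (A * k ^ 2) with ht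
  have ht0 : 0 < t := by positivity
  have hμt : μ ≤ ε * t ^ 2 := by
    refine hμ.trans_eq ?_
    rw [ht]; field_simp
  have htq : 2 * t ≤ ballRatio c (b ^ 2) k := by
    unfold ballRatio
    rw [ht, ← hLdef, ← mul_div_assoc, div_le_div_iff₀ (by positivity) (by positivity)]
    have : 2 * b * L ≤ c * A := by nlinarith
    calc 2 * b ^ 5 * (k ^ 2 * L) = (2 * b * L) * (b ^ 4 * k ^ 2) := by ring
      _ ≤ c * A * (b ^ 4 * k ^ 2) := by gcongr
      _ = _ := by ring
  have htb : t ≤ b ^ 2 / 384 := by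
    rw [ht]
    refine div_le_div₀ (by positivity) (pow_le_pow_of_le_one hb0.le hb1.le (by norm_num))
      (by norm_num) ?_
    nlinarith [one_le_pow₀ hk' (n := 2)]
  have ht1 : t ≤ 1 := by nlinarith
  have hq := ballRatio_pos hc h0 h1 hk
  calc 2 ^ k * μ ^ (k / 2 + 1) ≤ 2 ^ k * (ε * t ^ 2) ^ (k / 2 + 1) := by gcongr
    _ = 2 ^ k * (ε ^ (k / 2 + 1) * t ^ (2 * (k / 2 + 1))) := by
        rw [mul_pow ε (t ^ 2), ← pow_mul]
    _ ≤ 2 ^ k * (ε * t ^ (k + 1)) := by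
        have e1 : ε ^ (k / 2 + 1) ≤ ε := by
          simpa using pow_le_pow_of_le_one hε0.le hε1 (show 1 ≤ k / 2 + 1 by omega)
        have e2 : t ^ (2 * (k / 2 + 1)) ≤ t ^ (k + 1) :=
          pow_le_pow_of_le_one ht0.le ht1 (by omega)
        gcongr
    _ = ε * (2 * t) ^ k * t := by rw [mul_pow 2 t k]; ring
    _ ≤ ε * ballRatio c (b ^ 2) k ^ k * (b ^ 2 / 384) := by gcongr
    _ = _ := by ring

end Numerics

section OneStage

variable {n I d k : ℕ} {c : (Fin n → ℕ) → MvPolynomial (Fin I) ℝ} {lam : ℝ}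

lemma gE_zoomFam_zero_sq (h1 : lam ≤ 1) (γ : Fin n → ℕ) :
    gE (zoomFam c lam 0 γ ^ 2) = (1 - lam) ^ (∑ i, γ i) * gE (c γ ^ 2) := by
  rw [zoomFam, smul_pow, gE_smul, zoomCoef_zero_sq h1, zero_add]

lemma gE_hyperVar_zoom_le (hcz : ∀ α ∉ multiIdx (Fin n) d, gE (c α ^ 2) = 0)
    (h0 : 0 ≤ lam) (h1 : lam ≤ 1) (R : ℝ) (m : ℕ) :
    gE (∑ β ∈ (multiIdx (Fin n) d).filter (fun β => m ≤ ∑ i, β i),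
        (R ^ (2 * ∑ i, β i)) • meanSq (multiIdx (Fin n) d) (zoomFam c lam β)) ≤
      ∑ α ∈ multiIdx (Fin n) d, binomTail (lam * R ^ 2) m α * gE (c α ^ 2) := by
  refine le_trans ?_ (sum_sum_add_le (fun α => gE_sq_nonneg (c α)) hcz (by positivity) m)
  rw [gE_sum]
  refine Finset.sum_le_sum fun β _ => ?_
  rw [gE_smul, gE_meanSq, Finset.mul_sum]
  refine Finset.sum_le_sum fun γ _ => ?_
  rw [zoomFam, smul_pow, gE_smul, ← mul_assoc]
  refine mul_le_mul_of_nonneg_right ?_ (gE_sq_nonneg _)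
  calc R ^ (2 * ∑ i, β i) * zoomCoef √(1 - lam) √lam β γ ^ 2
      ≤ R ^ (2 * ∑ i, β i) * ((∏ i, (((β + γ) i).choose (β i) : ℝ)) * lam ^ (∑ i, β i)) := by
        refine mul_le_mul_of_nonneg_left (zoomCoef_sq_le h0 h1 β γ) ?_
        rw [pow_mul]; positivity
    _ = _ := by rw [mul_pow lam, pow_mul]; ring

lemma multiIdx_subset (hkd : k ≤ d) : multiIdx (Fin n) k ⊆ multiIdx (Fin n) d := fun _ hα =>
  mem_multiIdx.2 ((mem_multiIdx.1 hα).trans hkd)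

/-- The total weight of the levels above `k`. -/
noncomputable def highWt (c : (Fin n → ℕ) → MvPolynomial (Fin I) ℝ) (k d : ℕ) : ℝ :=
  ∑ α ∈ multiIdx (Fin n) d \ multiIdx (Fin n) k, gE (c α ^ 2)

lemma highWt_nonneg : 0 ≤ highWt c k d := Finset.sum_nonneg fun _ _ => gE_sq_nonneg _

/-- The total weight of all levels. -/
noncomputable def totalWt (c : (Fin n → ℕ) → MvPolynomial (Fin I) ℝ) (d : ℕ) : ℝ :=
  ∑ α ∈ multiIdx (Fin n) d, gE (c α ^ 2)

lemma totalWt_nonneg : 0 ≤ totalWt c d := Finset.sum_nonneg fun _ _ => gE_sq_nonneg _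

lemma highWt_add (hkd : k ≤ d) : highWt c k d + totalWt c k = totalWt c d :=
  Finset.sum_sdiff (multiIdx_subset hkd)

lemma highWt_mul_pow_le {S : ℝ} (hS : 1 ≤ S) :
    highWt c k d * S ^ (2 * (k + 1)) ≤ ∑ α ∈ multiIdx (Fin n) d,
      if k + 1 ≤ ∑ i, α i then S ^ (2 * ∑ i, α i) * gE (c α ^ 2) else 0 := by
  rw [← Finset.sum_filter, highWt, Finset.sum_mul]
  have hs : multiIdx (Fin n) d \ multiIdx (Fin n) k =
      (multiIdx (Fin n) d).filter (fun α => k + 1 ≤ ∑ i, α i) := by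
    ext α
    simp only [Finset.mem_sdiff, Finset.mem_filter, mem_multiIdx]
    omega
  rw [hs]
  refine Finset.sum_le_sum fun α hα => ?_
  rw [mul_comm]
  exact mul_le_mul_of_nonneg_right
    (pow_le_pow_right₀ hS (Nat.mul_le_mul_left 2 (Finset.mem_filter.1 hα).2)) (gE_sq_nonneg _)

lemma sum_binomTail_le (hkd : k ≤ d) {μ : ℝ} (h0 : 0 ≤ μ) (h1 : μ ≤ 1) (hd : d * μ ≤ 1) {m : ℕ}
    (hm : 1 ≤ m) :
    ∑ α ∈ multiIdx (Fin n) d, binomTail μ m α * gE (c α ^ 2) ≤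
      2 ^ k * μ ^ m * totalWt c d + 2 * d * μ * highWt c k d := by
  rw [← Finset.sum_sdiff (multiIdx_subset hkd), add_comm]
  refine add_le_add ?_ ?_
  · calc _ ≤ ∑ α ∈ multiIdx (Fin n) k, 2 ^ k * μ ^ m * gE (c α ^ 2) := by
          refine Finset.sum_le_sum fun α hα => mul_le_mul_of_nonneg_right ?_ (gE_sq_nonneg _)
          refine (binomTail_le_pow h0 h1 m α).trans ?_
          have := mem_multiIdx.1 hα
          gcongr
          norm_num
      _ ≤ _ := by
          rw [← Finset.mul_sum]
          refine mul_le_mul_of_nonneg_left ?_ (by positivity)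
          exact Finset.sum_le_sum_of_subset_of_nonneg (multiIdx_subset hkd)
            fun _ _ _ => gE_sq_nonneg _
  · rw [highWt, Finset.mul_sum]
    refine Finset.sum_le_sum fun α hα => mul_le_mul_of_nonneg_right ?_ (gE_sq_nonneg _)
    exact (binomTail_le_sub_one h0 hm α).trans
      (one_add_pow_sub_one_le h0 (mem_multiIdx.1 (Finset.mem_sdiff.1 hα).1) hd)

lemma gE_meanSq_high_le (h0 : 0 ≤ lam) (h1 : lam ≤ 1) :
    gE (meanSq (multiIdx (Fin n) d \ multiIdx (Fin n) k) (zoomFam c lam 0)) ≤ highWt c k d := by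
  rw [gE_meanSq]
  refine Finset.sum_le_sum fun γ _ => ?_
  rw [gE_zoomFam_zero_sq h1]
  exact mul_le_of_le_one_left (gE_sq_nonneg _) (pow_le_one₀ (by linarith) (by linarith))

lemma gE_meanSq_low_ge (h0 : 0 ≤ lam) (h1 : lam ≤ 1) :
    (1 - lam) ^ k * totalWt c k ≤ gE (meanSq (multiIdx (Fin n) k) (zoomFam c lam 0)) := by
  rw [gE_meanSq, totalWt, Finset.mul_sum]
  refine Finset.sum_le_sum fun γ hγ => ?_
  rw [gE_zoomFam_zero_sq h1]
  exact mul_le_mul_of_nonneg_right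
    (pow_le_pow_of_le_one (by linarith) (by linarith) (mem_multiIdx.1 hγ)) (gE_sq_nonneg _)

/-- The small-ball constant for the truncated mean square norm. -/
noncomputable def smallBallConst : ℝ := stepConst / 393216

lemma smallBallConst_pos : 0 < smallBallConst := div_pos stepConst_pos (by norm_num)

lemma measure_meanSq_lt_le {β : ℝ} (hk : 1 ≤ k) (hβ0 : 0 < β) (hβ1 : β < 1)
    {e : (Fin n → ℕ) → MvPolynomial (Fin I) ℝ} {N : ℝ} (hN : 0 ≤ N)
    (hQ : N / 4 ≤ gE (meanSq (multiIdx (Fin n) k) e)) :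
    gaussPi (Fin n) {x | eval x (meanSq (multiIdx (Fin n) k) e) <
      ballRatio smallBallConst β k ^ k / 12 * N} ≤ ENNReal.ofReal (β / 4) := by
  set f := meanSq (multiIdx (Fin n) k) e with hf
  have hq := ballRatio_pos smallBallConst_pos hβ0 hβ1 hk
  refine le_trans (measure_mono fun x hx => ?_) (measure_eval_sq_lt_le (D := 2 * k) (by omega) f
    (totalDegree_meanSq_le (fun γ hγ => mem_multiIdx.1 hγ) e) (β := β / 4) (by linarith)
    (by linarith))
  rw [Set.mem_ofPred_eq] at hx ⊢
  have hL := one_lt_log_three_div hβ0 hβ1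
  have hL4 := one_lt_log_three_div (β := β / 4) (by linarith) (by linarith)
  have hk' : (1 : ℝ) ≤ k := by exact_mod_cast hk
  have hfx : 0 ≤ eval x f := eval_meanSq_nonneg _ _ _
  have hf2 : N ^ 2 / 16 ≤ gE (f ^ 2) := by
    refine le_trans ?_ (gE_pow_two_le f)
    calc N ^ 2 / 16 = (N / 4) ^ 2 := by ring
      _ ≤ _ := by gcongr
  have hb : ballRatio smallBallConst β k ≤ stepConst * (β / 4) ^ 2 /
      (2048 * ((2 * k : ℕ) : ℝ) ^ 2 * Real.log (3 / (β / 4))) := by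
    have hs := stepConst_pos
    rw [ballRatio, smallBallConst, div_le_div_iff₀ (by positivity) (by positivity)]
    have := log_twelve_div_le hβ0 hβ1
    push_cast
    calc stepConst / 393216 * β ^ 2 * (2048 * (2 * k : ℝ) ^ 2 * Real.log (3 / (β / 4)))
        ≤ stepConst / 393216 * β ^ 2 * (2048 * (2 * k : ℝ) ^ 2 * (3 * Real.log (3 / β))) := by
          gcongr
      _ = _ := by ring
  calc eval x f ^ 2 < (ballRatio smallBallConst β k ^ k / 12 * N) ^ 2 :=
        pow_lt_pow_left₀ hx hfx two_ne_zero
    _ = ballRatio smallBallConst β k ^ (2 * k) / 9 * (N ^ 2 / 16) := by ring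
    _ ≤ ballRatio smallBallConst β k ^ (2 * k) / 8 * gE (f ^ 2) := by gcongr; norm_num
    _ ≤ _ := by
        have := gE_sq_nonneg f
        gcongr

end OneStage

section OneStage

variable {n I d k : ℕ} {c : (Fin n → ℕ) → MvPolynomial (Fin I) ℝ} {lam : ℝ}

lemma measure_not_attenuated_le (hk : 1 ≤ k) (hkd : k ≤ d)
    (hcz : ∀ α ∉ multiIdx (Fin n) d, gE (c α ^ 2) = 0) {S R β ε : ℝ} (hβ0 : 0 < β) (hβ1 : β < 1)
    (hε0 : 0 < ε) (hε1 : ε ≤ 1) (hR : 1 ≤ R)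
    (hatt : highWt c k d * S ^ (2 * (k + 1)) ≤ totalWt c d)
    (hS : zoomConst smallBallConst ^ 2 * k * Real.log (3 / β) / β ≤ S)
    (h0 : 0 ≤ lam)
    (hlam : lam ≤ ε * β ^ 5 / (zoomConst smallBallConst ^ 2 * R ^ 2 * k ^ 3 * d)) :
    gaussPi (Fin n) {x | ¬ (eval x (∑ β ∈ (multiIdx (Fin n) d).filter
          (fun β => k / 2 + 1 ≤ ∑ i, β i),
        (R ^ (2 * ∑ i, β i)) • meanSq (multiIdx (Fin n) d) (zoomFam c lam β)) ≤
      ε * eval x (meanSq (multiIdx (Fin n) d) (zoomFam c lam 0)))} ≤ ENNReal.ofReal β := by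
  set num := ∑ β ∈ (multiIdx (Fin n) d).filter (fun β => k / 2 + 1 ≤ ∑ i, β i),
        (R ^ (2 * ∑ i, β i)) • meanSq (multiIdx (Fin n) d) (zoomFam c lam β) with hnum
  have hc := smallBallConst_pos
  have hA := zoomConst_ge hc
  have hnum0 : ∀ x, 0 ≤ eval x num := by
    intro x
    rw [hnum, map_sum]
    refine Finset.sum_nonneg fun β _ => ?_
    rw [smul_eval, pow_mul]
    exact mul_nonneg (by positivity) (eval_meanSq_nonneg _ _ _)
  have hk' : (1 : ℝ) ≤ k := by exact_mod_cast hk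
  have hkd' : (k : ℝ) ≤ d := by exact_mod_cast hkd
  have hd0 : (0 : ℝ) < d := by linarith
  have hq := ballRatio_pos hc hβ0 hβ1 hk
  have hSk := ballRatio_mul_pow_ge hc hβ0 hβ1 hk hS
  set A := zoomConst smallBallConst
  set q := ballRatio smallBallConst β k
  have hA1 : 1 ≤ A ^ 2 := one_le_pow₀ (by linarith)
  have hA4 : 4 ≤ A ^ 2 := by nlinarith
  set μ := lam * R ^ 2 with hμ
  have hμ0 : 0 ≤ μ := by positivity
  have hdμ : d * μ ≤ ε * β ^ 5 / (A ^ 2 * k ^ 3) := by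
    calc d * μ ≤ d * (ε * β ^ 5 / (A ^ 2 * R ^ 2 * k ^ 3 * d) * R ^ 2) := by
          rw [hμ]; gcongr
      _ = _ := by field_simp
  have hβ5 : β ^ 5 ≤ 1 := pow_le_one₀ hβ0.le hβ1.le
  have hdμ4 : d * μ ≤ ε / 4 := by
    refine hdμ.trans ?_
    rw [div_le_div_iff₀ (by positivity) (by norm_num)]
    have : 4 ≤ A ^ 2 * k ^ 3 := by nlinarith [one_le_pow₀ hk' (n := 3)]
    calc ε * β ^ 5 * 4 ≤ ε * 1 * (A ^ 2 * k ^ 3) := by gcongr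
      _ = _ := by ring
  have hμd : μ ≤ d * μ := by nlinarith
  have hlamμ : lam ≤ μ := by
    rw [hμ]; exact le_mul_of_one_le_right h0 (one_le_pow₀ hR)
  have h1 : lam ≤ 1 := by linarith
  have hμk : μ ≤ ε * β ^ 5 / (A ^ 2 * k ^ 4) := by
    rw [le_div_iff₀ (by positivity)] at hdμ ⊢
    refine le_trans ?_ hdμ
    calc μ * (A ^ 2 * k ^ 4) = k * μ * (A ^ 2 * k ^ 3) := by ring
      _ ≤ _ := by gcongr
  have hlow := two_pow_mul_pow_le hc hβ0 hβ1 hk hε0 hε1 hμ0 hμk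
  set N := totalWt c d
  set H := highWt c k d
  have hN0 : 0 ≤ N := totalWt_nonneg
  have hH0 : 0 ≤ H := highWt_nonneg
  have hH : H * 192 ≤ β * q ^ k * N := by
    calc H * 192 ≤ H * (β * q ^ k * S ^ (2 * (k + 1))) := by gcongr
      _ = β * q ^ k * (H * S ^ (2 * (k + 1))) := by ring
      _ ≤ _ := by gcongr
  have hgnum : gE num ≤ ε * β * q ^ k * N / 192 := by
    refine (gE_hyperVar_zoom_le hcz h0 h1 R _).trans ((sum_binomTail_le hkd hμ0 (by linarith)
      (by linarith) (by omega)).trans ?_)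
    calc 2 ^ k * μ ^ (k / 2 + 1) * N + 2 * d * μ * H
        ≤ ε * β * q ^ k / 384 * N + 2 * (ε / 4) * (β * q ^ k * N / 192) := by
          refine add_le_add (mul_le_mul_of_nonneg_right hlow hN0) ?_
          have : H ≤ β * q ^ k * N / 192 := by linarith
          have h2 : 2 * d * μ ≤ 2 * (ε / 4) := by linarith
          exact mul_le_mul h2 this hH0 (by positivity)
      _ = _ := by ring
  have hden0 : ∀ x, 0 ≤ eval x (meanSq (multiIdx (Fin n) d) (zoomFam c lam 0)) :=
    fun x => eval_meanSq_nonneg _ _ _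
  rcases hN0.eq_or_lt with hN | hN
  · have hz : gE num = 0 := le_antisymm (by rw [← hN] at hgnum; simpa using hgnum)
      (gE_nonneg hnum0)
    have hae := (integral_eq_zero_iff_of_nonneg (μ := gaussPi (Fin n)) hnum0
      (integrable_eval num)).1 hz
    refine le_of_eq_of_le ?_ (zero_le (a := ENNReal.ofReal β))
    refine measure_mono_null (fun x hx => ?_) (ae_iff.1 hae)
    rw [Set.mem_ofPred_eq] at hx ⊢
    exact fun h => hx (h.le.trans (mul_nonneg hε0.le (hden0 x)))
  set Q := meanSq (multiIdx (Fin n) k) (zoomFam c lam 0)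
  set P := meanSq (multiIdx (Fin n) d \ multiIdx (Fin n) k) (zoomFam c lam 0) with hP
  have hq1 : q ≤ 1 := by
    have hs := stepConst_le_one
    have hL := one_lt_log_three_div hβ0 hβ1
    simp only [q, ballRatio, smallBallConst]
    refine div_le_one_of_le₀ ?_ (by positivity)
    calc stepConst / 393216 * β ^ 2 ≤ 1 * 1 := by
          have := stepConst_pos
          gcongr
          · linarith
          · exact pow_le_one₀ hβ0.le hβ1.le
      _ ≤ k ^ 2 * Real.log (3 / β) := by
          have := one_le_pow₀ hk' (n := 2)
          gcongr
  have hQ : N / 4 ≤ gE Q := by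
    refine le_trans ?_ (gE_meanSq_low_ge h0 h1)
    have hlk : 1 / 2 ≤ (1 - lam) ^ k := by
      have := one_add_mul_le_pow (show (-2 : ℝ) ≤ -lam by linarith) k
      have hkl : k * lam ≤ d * μ := by gcongr
      rw [← sub_eq_add_neg] at this
      linarith
    have hHN : H ≤ N / 2 := by
      have : β * q ^ k * N ≤ 1 * 1 * N := by
        gcongr
        exact pow_le_one₀ hq.le hq1
      linarith
    have hadd : H + totalWt c k = N := highWt_add hkd
    calc N / 4 = 1 / 2 * (N / 2) := by ring
      _ ≤ _ := by
        gcongr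
        linarith
  have hqk : 0 < q ^ k := pow_pos hq k
  have b1 := measure_meanSq_lt_le hk hβ0 hβ1 hN0 hQ
  have b2 := measure_eval_ge_le (p := P) (t := q ^ k * N / 48) (b := β / 4)
    (fun x => eval_meanSq_nonneg _ _ _) (by positivity)
    ((gE_meanSq_high_le h0 h1).trans (by linarith))
  have b3 := measure_eval_ge_le (p := num) (t := ε * (q ^ k * N / 48)) (b := β / 4)
    hnum0 (by positivity) (hgnum.trans_eq (by ring))
  refine (measure_mono (t := ({x | eval x Q < q ^ k / 12 * N} ∪
    {x | q ^ k * N / 48 ≤ eval x P}) ∪ {x | ε * (q ^ k * N / 48) ≤ eval x num})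
    fun x hx => ?_).trans ?_
  · by_contra hx'
    simp only [Set.mem_union, Set.mem_ofPred_eq, not_or, not_lt, not_le] at hx hx'
    obtain ⟨⟨hx1, hx2⟩, hx3⟩ := hx'
    have hge := eval_meanSq_ge (multiIdx_subset (n := n) hkd) (zoomFam c lam 0) x
    have hle : q ^ k * N / 48 ≤ eval x (meanSq (multiIdx (Fin n) d) (zoomFam c lam 0)) := by
      refine le_trans ?_ hge
      linarith
    have := mul_le_mul_of_nonneg_left hle hε0.le
    linarith
  · refine (measure_union_le _ _).trans ((add_le_add ((measure_union_le _ _).trans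
      (add_le_add b1 b2)) b3).trans ?_)
    rw [← ENNReal.ofReal_add (by positivity) (by positivity),
      ← ENNReal.ofReal_add (by positivity) (by positivity)]
    exact ENNReal.ofReal_le_ofReal (by linarith)

end OneStage

/-- One-stage local hyperconcentration theorem: there is a universal constant `C` such
that if a nice distribution `(g_υ)` of degree-`d` polynomials is `(k,S,1)`-attenuated
on average for some `1 ≤ k ≤ d`, then for `R' ≥ 1`, `0 < β' < 1`, `0 < ε' ≤ 1`,
`S ≥ C·k·log(3/β')/β'` and `0 ≤ λ ≤ ε'·β'⁵/(C·R'²·k³·d)`, for `x ∼ N(0,1)^n`, except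
with probability at most `β'`, the family `((g_υ)_{λ|x})_υ` is
`(⌊k/2⌋, R', ε')`-attenuated on average.  Here `HyperVar_R[g^{>k}]` is encoded as
`hyperVarGE R (k+1) g` (the Hermite sum over levels `|α| > k`). -/
theorem one_stage_local_hyperconcentration :
    ∃ C : ℝ, 1 ≤ C ∧
      ∀ (n I d k : ℕ), 1 ≤ k → k ≤ d →
      ∀ g : (Fin I → ℝ) → MvPolynomial (Fin n) ℝ, NiceFamily n I d g →
      ∀ S R' β' ε' lam : ℝ, 1 ≤ R' → 0 < β' → β' < 1 → 0 < ε' → ε' ≤ 1 →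
      (∫ υ, hyperVarGE S (k + 1) (g υ) ∂(gaussianN I)) ≤
          (∫ υ, norm2sq (g υ) ∂(gaussianN I)) →
      C * k * Real.log (3 / β') / β' ≤ S →
      0 ≤ lam → lam ≤ ε' * β' ^ 5 / (C * R' ^ 2 * k ^ 3 * d) →
      gaussianN n {x | ¬ ((∫ υ, hyperVarGE R' (k / 2 + 1) (zoom (g υ) lam x) ∂(gaussianN I)) ≤
          ε' * ∫ υ, norm2sq (zoom (g υ) lam x) ∂(gaussianN I))} ≤ ENNReal.ofReal β' := by
  have hA := zoomConst_ge smallBallConst_pos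
  have hA1 : 1 ≤ zoomConst smallBallConst ^ 2 := one_le_pow₀ (by linarith)
  refine ⟨zoomConst smallBallConst ^ 2, hA1, ?_⟩
  intro n I d k hk hkd g hg S R β ε lam hR hβ0 hβ1 hε0 hε1 hatt hS h0 hlam
  obtain ⟨c, hc⟩ := hg.exists_hcf_poly
  have hL := one_lt_log_three_div hβ0 hβ1
  have hk' : (1 : ℝ) ≤ k := by exact_mod_cast hk
  have hkd' : (k : ℝ) ≤ d := by exact_mod_cast hkd
  have hS1 : 1 ≤ S := by
    refine le_trans ?_ hS
    rw [le_div_iff₀ hβ0, one_mul]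
    exact hβ1.le.trans (one_le_mul_of_one_le_of_one_le
      (one_le_mul_of_one_le_of_one_le hA1 hk') hL.le)
  have h1 : lam ≤ 1 := by
    refine hlam.trans (div_le_one_of_le₀ ?_ (by positivity))
    calc ε * β ^ 5 ≤ 1 * 1 := by
          gcongr
          exact pow_le_one₀ hβ0.le hβ1.le
      _ ≤ _ := by
          rw [one_mul]
          exact one_le_mul_of_one_le_of_one_le (one_le_mul_of_one_le_of_one_le
            (one_le_mul_of_one_le_of_one_le hA1 (one_le_pow₀ hR)) (one_le_pow₀ hk'))
            (hk'.trans hkd')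
  have hcz : ∀ α ∉ multiIdx (Fin n) d, gE (c α ^ 2) = 0 := by
    intro α hα
    rw [mem_multiIdx, not_le] at hα
    have : ∀ υ, eval υ (c α) = 0 := fun υ => by
      rw [← hc, hcf_eq_zero_of_totalDegree_lt d (g υ) α (hg.1 υ) hα]
    simp [gE, this]
  rw [integral_hyperVarGE_eq hg.1 hc, integral_norm2sq_eq hg.1 hc] at hatt
  refine (measure_mono fun x hx => ?_).trans (measure_not_attenuated_le hk hkd hcz hβ0 hβ1 hε0
    hε1 hR ((highWt_mul_pow_le hS1).trans hatt) hS h0 hlam)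
  rw [Set.mem_ofPred_eq] at hx ⊢
  rw [integral_hyperVarGE_zoom hg.1 hc h0 h1] at hx
  exact fun h => hx (h.trans (mul_le_mul_of_nonneg_left
    (integral_norm2sq_zoom_ge hg.1 hc h0 h1 x) hε0.le))
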